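/- Let m be a non-negative integer and let x > 0 be real with x not an integer. Then ∑_{n=1}^∞ σ_{2m+1/2}(n) n^{−1/2} e^{−2π√(2nx)} sin(π/4 + 2π√(2nx)) = ζ(1/2−2m)/(2π√x) − (2m)!·ζ(−1/2−2m)/(√2·(2πx)^{2m+1}) + (1/√2)·ζ(1/2)·ζ(−2m) + (√x/π^{2m+1/2}) ∑_{n=1}^∞ σ_{2m+1/2}(n) n^{−2m−3/2} [ −((2m)!/√π)·(n/(2x))^{2m+3/2}·( (1+in/x)^{−(2m+1)} + (1−in/x)^{−(2m+1)} ) + ((−1)^m n/(2^{2m} π x))·Γ(2m+1/2)·W_m(n,x) ], where W_m(n,x) denotes the convergent series ₃F₂(1/4, 3/4, 1; 1/4−m, 3/4−m; −n²/x²) when n < x, and denotes its analytic continuation 1 − ₃F₂(1/4+m, 3/4+m, 1; 1/4, 3/4; −x²/n²) (a convergent series since x < n) when n > x. -/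

import Mathlib

open Complex Finset
open scoped Real BigOperators Classical

/-- Generalized divisor sum `σ_r(n) = ∑_{d ∣ n} d^r` with real exponent. -/
noncomputable def rsigma (r : ℝ) (n : ℕ) : ℝ := ∑ d ∈ n.divisors, (d : ℝ) ^ r

/-- Rising factorial `(a)_k`. -/
noncomputable def poch (a : ℂ) (k : ℕ) : ℂ := ∏ i ∈ Finset.range k, (a + i)

/-- Generalized hypergeometric series `₃F₂`. -/
noncomputable def F32 (a₁ a₂ a₃ b₁ b₂ z : ℂ) : ℂ :=
  ∑' k : ℕ, poch a₁ k * poch a₂ k * poch a₃ k /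
    (poch b₁ k * poch b₂ k * (k.factorial : ℂ)) * z ^ k

/-- `W_m(n,x)`: the series `₃F₂(1/4,3/4,1;1/4−m,3/4−m;−n²/x²)` for `n < x`, and its
analytic continuation `1 − ₃F₂(1/4+m,3/4+m,1;1/4,3/4;−x²/n²)` for `n > x`. -/
noncomputable def Wm (m : ℕ) (n : ℕ) (x : ℝ) : ℂ :=
  if (n : ℝ) < x then
    F32 (1 / 4) (3 / 4) 1 (1 / 4 - (m : ℂ)) (3 / 4 - (m : ℂ)) (-(n : ℂ) ^ 2 / (x : ℂ) ^ 2)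
  else
    1 - F32 (1 / 4 + (m : ℂ)) (3 / 4 + (m : ℂ)) 1 (1 / 4) (3 / 4) (-(x : ℂ) ^ 2 / (n : ℂ) ^ 2)

/-!
Put `ω = e^{iπ/4}` and `S k u = ∑ n ≥ 1, n ^ k * e^{-2πnu}`. Expanding `σ` over divisors and using
the Cauchy–Schlömilch integral for `e^{-4πω√(abx)} / √a`, the left-hand side becomes a fixed
real-linear functional of `∫₀^∞ S 0 (ωv²) * S (2m) (ωx/v²) dv`. Lipschitz's formula writes each
factor as a polar term at `0`, a constant and a series over the other poles `± i j`. The products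
involving a polar term or a constant are Mellin transforms, hence values of `ζ`. In the product of
the two series the substitution `v ↦ √a v` makes the integrals depend only on the product of the
pole indices, which brings back `σ`; each remaining integral is the `2m`-th derivative in `n` of
one that can be evaluated in closed form through `n^{-1/2} / (n² + x²)`, and expanding that
derivative in powers of `n / x` or `x / n` gives the two hypergeometric series.
-/

noncomputable section

namespace Coalescence

open MeasureTheory Filter Topology

/-- The primitive sixteenth root of unity `e^{iπ/8}`. -/
def κ : ℂ := exp ((π / 8 : ℝ) * I)

/-- The primitive eighth root of unity `e^{iπ/4}`, the direction of the ray along which the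
exponential series are evaluated. -/
def ω : ℂ := κ ^ 2

lemma κ_pow_four : κ ^ 4 = I := by
  rw [κ, ← Complex.exp_nat_mul,
    show ((4 : ℕ) : ℂ) * (((π / 8 : ℝ) : ℂ) * I) = π / 2 * I by push_cast; ring]
  exact Complex.exp_pi_div_two_mul_I

lemma ω_sq : ω ^ 2 = I := by rw [ω, ← pow_mul]; exact κ_pow_four

lemma norm_κ : ‖κ‖ = 1 := by rw [κ, Complex.norm_exp_ofReal_mul_I]

lemma norm_ω : ‖ω‖ = 1 := by rw [ω, norm_pow, norm_κ, one_pow]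

lemma κ_ne_zero : κ ≠ 0 := Complex.exp_ne_zero _

lemma ω_ne_zero : ω ≠ 0 := pow_ne_zero 2 κ_ne_zero

lemma κ_re_pos : 0 < κ.re := by
  rw [κ, Complex.exp_ofReal_mul_I_re]
  apply Real.cos_pos_of_mem_Ioo
  constructor <;> linarith [Real.pi_pos]

lemma κ_im_pos : 0 < κ.im := by
  rw [κ, Complex.exp_ofReal_mul_I_im]
  apply Real.sin_pos_of_pos_of_lt_pi <;> linarith [Real.pi_pos]

lemma ω_eq : ω = ((√2 / 2 : ℝ) : ℂ) * (1 + I) := by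
  have : ω = exp ((π / 4 : ℝ) * I) := by
    rw [ω, κ, ← Complex.exp_nat_mul]
    congr 1; push_cast; ring
  rw [this, Complex.exp_mul_I, ← Complex.ofReal_cos, ← Complex.ofReal_sin, Real.cos_pi_div_four,
    Real.sin_pi_div_four]
  ring

lemma ω_re : ω.re = √2 / 2 := by rw [ω_eq, Complex.re_ofReal_mul]; simp

lemma ω_im : ω.im = √2 / 2 := by rw [ω_eq, Complex.im_ofReal_mul]; simp

lemma ω_re_pos : 0 < ω.re := by rw [ω_re]; positivity

lemma ω_mul_re_pos {t : ℝ} (ht : 0 < t) : 0 < (ω * t).re := by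
  rw [Complex.re_mul_ofReal]
  exact mul_pos ω_re_pos ht

lemma inv_ω : ω⁻¹ = -I * ω := by
  rw [inv_eq_iff_eq_inv, eq_comm, inv_eq_of_mul_eq_one_right]
  linear_combination -I * ω_sq - Complex.I_sq

/-- The exponential series `∑_{d ≥ 1} d^k e^{-2πdu}`. -/
def powExpSum (k : ℕ) (u : ℂ) : ℂ :=
  ∑' d : ℕ, ((d : ℂ) + 1) ^ k * exp (-(2 * π * ((d : ℂ) + 1) * u))

/-- The sum `(w + iy)^{-(k+1)} + (w - iy)^{-(k+1)}` over a pair of conjugate poles. -/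
def polePair (k : ℕ) (y : ℝ) (w : ℂ) : ℂ :=
  ((w + I * y)⁻¹) ^ (k + 1) + ((w - I * y)⁻¹) ^ (k + 1)

/-- The coefficient `k! / (2π)^{k+1}` of `u^{-(k+1)}` in the expansion of `powExpSum k` at `0`. -/
def polarCoeff (k : ℕ) : ℂ := (k.factorial : ℂ) / (2 * π) ^ (k + 1)

/-- The constant which Lipschitz's formula subtracts from `powExpSum k`: it equals `ζ(-k)` when `k`
is even. -/
def constTerm (k : ℕ) : ℂ := if k = 0 then -1 / 2 else 0

/-- What remains of `powExpSum k` when its polar part and `constTerm k` are removed; by Lipschitz's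
formula this is a sum over the poles other than `0`. -/
def lipschitzRemainder (k : ℕ) (u : ℂ) : ℂ :=
  powExpSum k u - constTerm k - polarCoeff k * (u⁻¹) ^ (k + 1)

lemma constTerm_two_mul (m : ℕ) : constTerm (2 * m) = riemannZeta (-2 * m) := by
  rcases m with - | m
  · simp [constTerm, riemannZeta_zero]
  · rw [constTerm, if_neg (by omega)]
    exact_mod_cast (riemannZeta_neg_two_mul_nat_add_one m).symm

lemma powExpSum_term_eq (k d : ℕ) (u : ℂ) :
    ((d : ℂ) + 1) ^ k * exp (-(2 * π * ((d : ℂ) + 1) * u)) =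
      ((d + 1 : ℕ) : ℂ) ^ k * exp (-(2 * π * u)) ^ (d + 1) := by
  rw [← Complex.exp_nat_mul]
  push_cast
  congr 2
  ring

lemma norm_exp_neg_two_pi_mul_lt_one {u : ℂ} (hu : 0 < u.re) : ‖exp (-(2 * π * u))‖ < 1 := by
  rw [Complex.norm_exp, Real.exp_lt_one_iff, show (-(2 * (π : ℂ) * u)).re = -(2 * π * u.re) by simp,
    neg_lt_zero]
  positivity

lemma summable_norm_powExpSum_term (k : ℕ) {u : ℂ} (hu : 0 < u.re) :
    Summable fun d : ℕ => ‖((d : ℂ) + 1) ^ k * exp (-(2 * π * ((d : ℂ) + 1) * u))‖ := by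
  simp_rw [powExpSum_term_eq]
  exact (summable_nat_add_iff 1).mpr (summable_norm_pow_mul_geometric_of_norm_lt_one (R := ℂ) k
    (norm_exp_neg_two_pi_mul_lt_one hu))

lemma tsum_pow_mul_exp_pow (k : ℕ) {u : ℂ} (hu : 0 < u.re) :
    ∑' n : ℕ, (n : ℂ) ^ k * exp (-(2 * π * u)) ^ n = 0 ^ k + powExpSum k u := by
  rw [((summable_norm_pow_mul_geometric_of_norm_lt_one (R := ℂ) k
    (norm_exp_neg_two_pi_mul_lt_one hu)).of_norm).tsum_eq_zero_add, powExpSum]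
  simp [powExpSum_term_eq]

lemma exp_two_pi_I_mul_I_mul (u : ℂ) : exp (2 * π * I * (I * u)) = exp (-(2 * π * u)) := by
  congr 1
  linear_combination (2 * π * u) * Complex.I_sq

lemma I_mul_sub (u : ℂ) (y : ℝ) : I * u - y = I * (u + I * y) := by
  linear_combination (-y) * Complex.I_sq

lemma I_mul_add (u : ℂ) (y : ℝ) : I * u + y = I * (u - I * y) := by
  linear_combination y * Complex.I_sq

lemma hasSum_polePair_zero {u : ℂ} (hu : 0 < u.re) :
    HasSum (fun j : ℕ => polarCoeff 0 * polePair 0 ((j : ℝ) + 1) u) (lipschitzRemainder 0 u) := by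
  let z : UpperHalfPlane := ⟨I * u, by simpa using hu⟩
  have hz : (z : ℂ) = I * u := rfl
  have hu₀ : u ≠ 0 := by rintro rfl; simp at hu
  have hcot := (summable_cotTerm (UpperHalfPlane.coe_mem_integerComplement z)).hasSum
  unfold cotTerm at hcot
  rw [← cot_series_rep' (UpperHalfPlane.coe_mem_integerComplement z), pi_mul_cot_pi_q_exp, hz,
    exp_two_pi_I_mul_I_mul] at hcot
  have hgeom := tsum_pow_mul_exp_pow 0 hu
  simp only [pow_zero, one_mul] at hgeom
  rw [hgeom] at hcot
  have hvalue : lipschitzRemainder 0 u = polarCoeff 0 * I *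
      (π * I - 2 * π * I * (1 + powExpSum 0 u) - 1 / (I * u)) := by
    rw [lipschitzRemainder, one_div, mul_inv, Complex.inv_I]
    simp only [polarCoeff, constTerm, if_true, zero_add, pow_one, Nat.factorial_zero, Nat.cast_one]
    field_simp
    linear_combination (1 - 2 * u * π * powExpSum 0 u - π * u) * (-Complex.I_sq)
  rw [hvalue]
  refine (hcot.mul_left (polarCoeff 0 * I)).congr_fun fun j => ?_
  have hsub := I_mul_sub u ((j : ℝ) + 1)
  have hadd := I_mul_add u ((j : ℝ) + 1)
  rw [polePair]
  push_cast at hsub hadd ⊢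
  rw [hsub, hadd, one_div, one_div, mul_inv, mul_inv, Complex.inv_I]
  linear_combination (polarCoeff 0 * ((u + I * (j + 1))⁻¹ + (u - I * (j + 1))⁻¹)) * Complex.I_sq

lemma hasSum_int_inv_pow {k : ℕ} (hk : 1 ≤ k) (z : UpperHalfPlane) :
    HasSum (fun n : ℤ => 1 / ((z : ℂ) + n) ^ (k + 1))
      ((-2 * π * I) ^ (k + 1) / k.factorial * ∑' n : ℕ, (n : ℂ) ^ k * exp (2 * π * I * z) ^ n) := by
  have hsum : Summable fun n : ℤ => 1 / ((z : ℂ) + n) ^ (k + 1) := by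
    refine (EisensteinSeries.linear_right_summable (z : ℂ) 1 (k := k + 1) (by omega)).congr
      fun n => ?_
    rw [one_div, Int.cast_one, one_mul]
    norm_cast
  exact EisensteinSeries.qExpansion_identity hk z ▸ hsum.hasSum

lemma hasSum_polePair_of_pos {k : ℕ} (hk : 1 ≤ k) {u : ℂ} (hu : 0 < u.re) :
    HasSum (fun j : ℕ => polarCoeff k * polePair k ((j : ℝ) + 1) u) (lipschitzRemainder k u) := by
  let z : UpperHalfPlane := ⟨I * u, by simpa using hu⟩
  have hz : (z : ℂ) = I * u := rfl
  have hk₀ : k ≠ 0 := by omega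
  have hint := (hasSum_int_inv_pow hk z).nat_add_neg
  rw [hz, exp_two_pi_I_mul_I_mul, tsum_pow_mul_exp_pow k hu, zero_pow hk₀, zero_add] at hint
  have hinv (a : ℂ) : I ^ (k + 1) * (1 / (I * a) ^ (k + 1)) = (a⁻¹) ^ (k + 1) := by
    rw [mul_pow, inv_pow, one_div, mul_inv, mul_inv_cancel_left₀ (pow_ne_zero _ I_ne_zero)]
  have hcoeff :
      polarCoeff k * I ^ (k + 1) * ((-2 * π * I) ^ (k + 1) / (k.factorial : ℂ)) = 1 := by
    have hfac : (k.factorial : ℂ) ≠ 0 := by exact_mod_cast k.factorial_ne_zero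
    have hπ : (2 * (π : ℂ)) ^ (k + 1) ≠ 0 := by simp [Real.pi_ne_zero]
    have hI : I ^ (k + 1) * (-2 * π * I) ^ (k + 1) = (2 * (π : ℂ)) ^ (k + 1) := by
      rw [← mul_pow]
      congr 1
      linear_combination (-2 * (π : ℂ)) * Complex.I_sq
    rw [polarCoeff, div_mul_eq_mul_div, div_mul_div_comm, mul_assoc, hI]
    field_simp
  have hrest := ((hasSum_nat_add_iff' 1).mpr hint).mul_left (polarCoeff k * I ^ (k + 1))
  have hvalue : lipschitzRemainder k u = polarCoeff k * I ^ (k + 1) *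
      ((-2 * π * I) ^ (k + 1) / k.factorial * powExpSum k u - 1 / (I * u) ^ (k + 1)) := by
    rw [lipschitzRemainder, constTerm, if_neg hk₀, ← hinv u]
    linear_combination (-powExpSum k u) * hcoeff
  simp only [Finset.range_one, Finset.sum_singleton, Nat.cast_zero, Int.cast_zero, neg_zero,
    add_zero, add_sub_add_right_eq_sub] at hrest
  rw [hvalue]
  refine hrest.congr_fun fun j => ?_
  have hsub := I_mul_sub u ((j : ℝ) + 1)
  have hadd := I_mul_add u ((j : ℝ) + 1)
  have hplus := hinv (u + I * ((j : ℂ) + 1))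
  have hminus := hinv (u - I * ((j : ℂ) + 1))
  rw [polePair]
  push_cast at hsub hadd ⊢
  rw [← sub_eq_add_neg, hsub, hadd, ← hplus, ← hminus]
  ring

/-- **Lipschitz's formula**. -/
lemma hasSum_polePair (k : ℕ) {u : ℂ} (hu : 0 < u.re) :
    HasSum (fun j : ℕ => polarCoeff k * polePair k ((j : ℝ) + 1) u) (lipschitzRemainder k u) := by
  rcases k.eq_zero_or_pos with rfl | hk
  · exact hasSum_polePair_zero hu
  · exact hasSum_polePair_of_pos hk hu

/-- The `p`-th derivative of `2w / (y² + w²)` with respect to `y`, written through the partial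
fractions of that function. -/
def poleDeriv (p : ℕ) (y : ℝ) (w : ℂ) : ℂ :=
  I * ((-1) ^ p * (p.factorial : ℂ)) *
    (((y + I * w)⁻¹) ^ (p + 1) - ((y - I * w)⁻¹) ^ (p + 1))

lemma polePair_two_mul (m : ℕ) (y : ℝ) (w : ℂ) :
    polePair (2 * m) y w = (-1) ^ m / ((2 * m).factorial : ℂ) * poleDeriv (2 * m) y w := by
  have hplus : ((y : ℂ) + I * w)⁻¹ = -I * (w - I * y)⁻¹ := by
    rw [show (y : ℂ) + I * w = I * (w - I * y) by linear_combination y * Complex.I_sq,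
      mul_inv, Complex.inv_I]
  have hminus : ((y : ℂ) - I * w)⁻¹ = I * (w + I * y)⁻¹ := by
    rw [show (y : ℂ) - I * w = -I * (w + I * y) by linear_combination y * Complex.I_sq,
      mul_inv, inv_neg, Complex.inv_I, neg_neg]
  have hfac : ((2 * m).factorial : ℂ) ≠ 0 := by exact_mod_cast (2 * m).factorial_ne_zero
  have hsign : ((-1 : ℂ)) ^ m * (-1) ^ m = 1 := by rw [← mul_pow]; norm_num
  have hI : I ^ (2 * m + 1) = (-1) ^ m * I := by rw [pow_succ, pow_mul, Complex.I_sq]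
  rw [poleDeriv, polePair, hplus, hminus, mul_pow, mul_pow, Odd.neg_pow ⟨m, rfl⟩, hI,
    Even.neg_one_pow ⟨m, two_mul m⟩]
  field_simp
  linear_combination (((w + I * y)⁻¹) ^ (2 * m + 1) + ((w - I * y)⁻¹) ^ (2 * m + 1)) *
    (((-1) ^ m * (-1) ^ m) * Complex.I_sq - hsign)

lemma norm_pow_succ_sub_pow_succ_le {a b : ℂ} {R : ℝ} (ha : ‖a‖ ≤ R) (hb : ‖b‖ ≤ R) (p : ℕ) :
    ‖a ^ (p + 1) - b ^ (p + 1)‖ ≤ (p + 1) * R ^ p * ‖a - b‖ := by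
  have hR : 0 ≤ R := (norm_nonneg _).trans ha
  induction p with
  | zero => simp
  | succ p ih =>
    calc ‖a ^ (p + 1 + 1) - b ^ (p + 1 + 1)‖
        = ‖a * (a ^ (p + 1) - b ^ (p + 1)) + (a - b) * b ^ (p + 1)‖ := by congr 1; ring
      _ ≤ ‖a‖ * ‖a ^ (p + 1) - b ^ (p + 1)‖ + ‖a - b‖ * ‖b‖ ^ (p + 1) := by
          refine (norm_add_le _ _).trans ?_
          rw [norm_mul, norm_mul, norm_pow]
      _ ≤ R * ((p + 1) * R ^ p * ‖a - b‖) + ‖a - b‖ * R ^ (p + 1) := by gcongr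
      _ = _ := by push_cast; ring

section Denominators

variable {y ρ : ℝ}

lemma div_sqrt_two_le_norm_add (y ρ : ℝ) : y / √2 ≤ ‖(y : ℂ) + I * (ω * ρ)‖ := by
  have h2 : √2 ^ 2 = 2 := Real.sq_sqrt (by norm_num)
  refine le_of_sq_le_sq ?_ (norm_nonneg _)
  calc (y / √2) ^ 2 = y ^ 2 / 2 := by rw [div_pow, h2]
    _ ≤ (ρ - √2 / 2 * y) ^ 2 + y ^ 2 / 2 := le_add_of_nonneg_left (sq_nonneg _)
    _ = ‖(y : ℂ) + I * (ω * ρ)‖ ^ 2 := by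
        rw [← Complex.normSq_eq_norm_sq, Complex.normSq_apply]
        simp only [add_re, ofReal_re, mul_re, I_re, zero_mul, I_im, one_mul, mul_im, ω_re, ω_im,
          ofReal_im, mul_zero, add_im]
        linear_combination (y ^ 2 / 4 - ρ ^ 2 / 2) * h2

lemma div_sqrt_two_le_norm_sub (hy : 0 ≤ y) (hρ : 0 ≤ ρ) :
    y / √2 ≤ ‖(y : ℂ) - I * (ω * ρ)‖ := by
  have h2 : √2 ^ 2 = 2 := Real.sq_sqrt (by norm_num)
  refine le_of_sq_le_sq ?_ (norm_nonneg _)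
  calc (y / √2) ^ 2 = y ^ 2 / 2 := by rw [div_pow, h2]
    _ ≤ y ^ 2 + √2 * y * ρ + ρ ^ 2 := by
        have : 0 ≤ √2 * y * ρ := by positivity
        linarith [sq_nonneg y, sq_nonneg ρ]
    _ = ‖(y : ℂ) - I * (ω * ρ)‖ ^ 2 := by
        rw [← Complex.normSq_eq_norm_sq, Complex.normSq_apply]
        simp only [sub_re, ofReal_re, mul_re, I_re, zero_mul, I_im, one_mul, mul_im, ω_re, ω_im,
          ofReal_im, mul_zero, sub_im]
        linear_combination (-(ρ ^ 2 / 2)) * h2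

lemma add_I_mul_ω_mul_ne_zero (hy : 0 < y) (ρ : ℝ) : (y : ℂ) + I * (ω * ρ) ≠ 0 :=
  norm_pos_iff.mp ((by positivity : 0 < y / √2).trans_le (div_sqrt_two_le_norm_add y ρ))

lemma sub_I_mul_ω_mul_ne_zero (hy : 0 < y) (hρ : 0 ≤ ρ) : (y : ℂ) - I * (ω * ρ) ≠ 0 :=
  norm_pos_iff.mp ((by positivity : 0 < y / √2).trans_le (div_sqrt_two_le_norm_sub hy.le hρ))

lemma add_mul_sub_I_mul_ω_mul (y ρ : ℝ) :
    ((y : ℂ) + I * (ω * ρ)) * ((y : ℂ) - I * (ω * ρ)) = y ^ 2 + I * ρ ^ 2 := by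
  linear_combination (-(ω ^ 2 * ρ ^ 2)) * Complex.I_sq + ρ ^ 2 * ω_sq

lemma sq_le_norm_sq_add_I_mul_sq (y ρ : ℝ) : y ^ 2 ≤ ‖(y : ℂ) ^ 2 + I * ρ ^ 2‖ := by
  refine (le_abs_self _).trans (le_of_eq_of_le ?_ (Complex.abs_re_le_norm _))
  simp [← Complex.ofReal_pow]

lemma sq_le_norm_sq_add_I_mul_sq' (y ρ : ℝ) : ρ ^ 2 ≤ ‖(y : ℂ) ^ 2 + I * ρ ^ 2‖ := by
  refine (le_abs_self _).trans (le_of_eq_of_le ?_ (Complex.abs_im_le_norm _))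
  simp [← Complex.ofReal_pow]

lemma norm_poleDeriv_le (p : ℕ) (hy : 0 < y) (hρ : 0 ≤ ρ) :
    ‖poleDeriv p y (ω * ρ)‖ ≤
      p.factorial * ((p + 1) * (√2 / y) ^ p * (2 * (ρ / ‖(y : ℂ) ^ 2 + I * ρ ^ 2‖))) := by
  have hpos : 0 < y / √2 := by positivity
  have hinv {z : ℂ} (hz : y / √2 ≤ ‖z‖) : ‖z⁻¹‖ ≤ √2 / y := by
    rw [norm_inv, ← inv_div]
    exact inv_anti₀ hpos hz
  have hdiff : ‖((y : ℂ) + I * (ω * ρ))⁻¹ - ((y : ℂ) - I * (ω * ρ))⁻¹‖ =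
      2 * (ρ / ‖(y : ℂ) ^ 2 + I * ρ ^ 2‖) := by
    rw [inv_sub_inv (add_I_mul_ω_mul_ne_zero hy ρ) (sub_I_mul_ω_mul_ne_zero hy hρ),
      add_mul_sub_I_mul_ω_mul, norm_div, ← mul_div_assoc,
      show (y : ℂ) - I * (ω * ρ) - (y + I * (ω * ρ)) = -(2 * I * ω * ρ) by ring, norm_neg, norm_mul,
      norm_mul, norm_mul, norm_ω, Complex.norm_I, Complex.norm_real, Real.norm_of_nonneg hρ,
      RCLike.norm_ofNat, mul_one, mul_one]
  rw [poleDeriv, norm_mul, norm_mul, Complex.norm_I, one_mul, norm_mul, norm_pow, norm_neg,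
    norm_one, one_pow, one_mul, Complex.norm_natCast, ← hdiff]
  gcongr
  exact norm_pow_succ_sub_pow_succ_le (hinv (div_sqrt_two_le_norm_add y ρ))
    (hinv (div_sqrt_two_le_norm_sub hy.le hρ)) p

end Denominators

/-- The profile of the bound for `polePair (2 * m) y (ω * ρ)` as a function of `ρ`: linear near `0`,
and growing slowly enough at infinity for the bound to remain summable over `y = 1, 2, …`. -/
def poleMajorant (ρ : ℝ) : ℝ := min ρ (ρ ^ (1 / 4 : ℝ))

lemma poleMajorant_nonneg {ρ : ℝ} (hρ : 0 ≤ ρ) : 0 ≤ poleMajorant ρ := le_min hρ (by positivity)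

lemma continuous_poleMajorant : Continuous poleMajorant :=
  continuous_id.min (Real.continuous_rpow_const (by norm_num))

lemma div_norm_sq_add_I_mul_sq_le {y ρ : ℝ} (hy : 1 ≤ y) (hρ : 0 < ρ) :
    ρ / ‖(y : ℂ) ^ 2 + I * ρ ^ 2‖ ≤ y ^ (-(5 / 4) : ℝ) * poleMajorant ρ := by
  have hyB := sq_le_norm_sq_add_I_mul_sq y ρ
  have hρB := sq_le_norm_sq_add_I_mul_sq' y ρ
  set B := ‖(y : ℂ) ^ 2 + I * ρ ^ 2‖
  have hy₀ : 0 < y := by linarith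
  have hB : 0 < B := lt_of_lt_of_le (by positivity) hyB
  rw [poleMajorant, mul_min_of_nonneg _ _ (by positivity), le_min_iff, div_le_iff₀ hB,
    div_le_iff₀ hB]
  constructor
  · calc ρ = y ^ (-(5 / 4) : ℝ) * ρ * y ^ (5 / 4 : ℝ) := by
          rw [mul_right_comm, ← Real.rpow_add hy₀]; norm_num
      _ ≤ y ^ (-(5 / 4) : ℝ) * ρ * y ^ (2 : ℝ) := by gcongr; norm_num
      _ ≤ y ^ (-(5 / 4) : ℝ) * ρ * B := by rw [Real.rpow_two]; gcongr
  · calc ρ = y ^ (-(5 / 4) : ℝ) * ρ ^ (1 / 4 : ℝ) *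
          ((y ^ 2) ^ (5 / 8 : ℝ) * (ρ ^ 2) ^ (3 / 8 : ℝ)) := by
          rw [← Real.rpow_natCast, ← Real.rpow_natCast, ← Real.rpow_mul hy₀.le,
            ← Real.rpow_mul hρ.le, mul_mul_mul_comm, ← Real.rpow_add hy₀, ← Real.rpow_add hρ]
          norm_num
      _ ≤ y ^ (-(5 / 4) : ℝ) * ρ ^ (1 / 4 : ℝ) * (B ^ (5 / 8 : ℝ) * B ^ (3 / 8 : ℝ)) := by gcongr
      _ = y ^ (-(5 / 4) : ℝ) * ρ ^ (1 / 4 : ℝ) * B := by rw [← Real.rpow_add hB]; norm_num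

lemma exists_norm_polePair_le (m : ℕ) :
    ∃ K, 0 ≤ K ∧ ∀ y ρ : ℝ, 1 ≤ y → 0 < ρ →
      ‖polarCoeff (2 * m) * polePair (2 * m) y (ω * ρ)‖ ≤
        K * y ^ (-(5 / 4) : ℝ) * poleMajorant ρ := by
  set K : ℝ := (((2 * m : ℕ) : ℝ) + 1) * √2 ^ (2 * m) * 2
  refine ⟨‖polarCoeff (2 * m)‖ * K, by positivity, fun y ρ hy hρ => ?_⟩
  have hfac : (0 : ℝ) < ((2 * m).factorial : ℝ) := by exact_mod_cast Nat.factorial_pos _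
  have hy₀ : 0 < y := by linarith
  have hpair : ‖polePair (2 * m) y (ω * ρ)‖ ≤ K * (y ^ (-(5 / 4) : ℝ) * poleMajorant ρ) := by
    rw [polePair_two_mul, norm_mul, norm_div, norm_pow, norm_neg, norm_one, one_pow,
      Complex.norm_natCast, one_div, inv_mul_le_iff₀ hfac]
    calc ‖poleDeriv (2 * m) y (ω * ρ)‖
        ≤ (2 * m).factorial * ((((2 * m : ℕ) : ℝ) + 1) * (√2 / y) ^ (2 * m) *
            (2 * (ρ / ‖(y : ℂ) ^ 2 + I * ρ ^ 2‖))) := norm_poleDeriv_le (2 * m) hy₀ hρ.le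
      _ ≤ (2 * m).factorial * ((((2 * m : ℕ) : ℝ) + 1) * √2 ^ (2 * m) *
            (2 * (y ^ (-(5 / 4) : ℝ) * poleMajorant ρ))) := by
          gcongr
          · exact div_le_self (by positivity) hy
          · exact div_norm_sq_add_I_mul_sq_le hy hρ
      _ = _ := by ring
  rw [norm_mul, mul_assoc ‖polarCoeff _‖, mul_assoc ‖polarCoeff _‖, mul_assoc K]
  gcongr

section Integrability

variable {x : ℝ}

lemma measurable_poleMajorant_div_sq (x : ℝ) : Measurable fun v : ℝ => poleMajorant (x / v ^ 2) :=
  continuous_poleMajorant.measurable.comp (by fun_prop)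

lemma integrableOn_poleMajorant_div_sq (hx : 0 ≤ x) :
    IntegrableOn (fun v : ℝ => poleMajorant (x / v ^ 2)) (Set.Ioi 0) := by
  have hmeas := (measurable_poleMajorant_div_sq x).aestronglyMeasurable (μ := volume)
  rw [← Set.Ioc_union_Ioi_eq_Ioi (zero_le_one' ℝ)]
  refine IntegrableOn.union ?_ ?_
  · have hint : IntegrableOn (fun v : ℝ => x ^ (1 / 4 : ℝ) * v ^ (-(1 / 2) : ℝ)) (Set.Ioc 0 1) :=
      (intervalIntegral.intervalIntegrable_rpow' (by norm_num)).1.const_mul _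
    refine hint.mono' hmeas.restrict ?_
    filter_upwards [ae_restrict_mem measurableSet_Ioc] with v hv
    rw [Real.norm_of_nonneg (poleMajorant_nonneg (by positivity))]
    refine (min_le_right _ _).trans (le_of_eq ?_)
    rw [Real.div_rpow hx (by positivity), ← Real.rpow_natCast, ← Real.rpow_mul hv.1.le,
      div_eq_mul_inv, ← Real.rpow_neg hv.1.le]
    norm_num
  · have hint : IntegrableOn (fun v : ℝ => x * v ^ (-2 : ℝ)) (Set.Ioi 1) :=
      (integrableOn_Ioi_rpow_of_lt (by norm_num) one_pos).const_mul _
    refine hint.mono' hmeas.restrict ?_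
    filter_upwards [ae_restrict_mem measurableSet_Ioi] with v hv
    have hv₀ : 0 < v := one_pos.trans hv
    rw [Real.norm_of_nonneg (poleMajorant_nonneg (by positivity))]
    refine (min_le_left _ _).trans (le_of_eq ?_)
    rw [div_eq_mul_inv, Real.rpow_neg hv₀.le, Real.rpow_two]

lemma integrableOn_poleMajorant_sq_mul_poleMajorant_div_sq (hx : 0 ≤ x) :
    IntegrableOn (fun v : ℝ => poleMajorant (v ^ 2) * poleMajorant (x / v ^ 2)) (Set.Ioi 0) := by
  have hmeas : AEStronglyMeasurable
      (fun v : ℝ => poleMajorant (v ^ 2) * poleMajorant (x / v ^ 2)) volume :=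
    ((continuous_poleMajorant.measurable.comp (by fun_prop)).mul
      (measurable_poleMajorant_div_sq x)).aestronglyMeasurable
  have hnonneg (v : ℝ) : 0 ≤ poleMajorant (x / v ^ 2) := poleMajorant_nonneg (by positivity)
  rw [← Set.Ioc_union_Ioi_eq_Ioi (zero_le_one' ℝ)]
  refine IntegrableOn.union ?_ ?_
  · refine ((integrableOn_poleMajorant_div_sq hx).mono_set Set.Ioc_subset_Ioi_self).mono'
      hmeas.restrict ?_
    filter_upwards [ae_restrict_mem measurableSet_Ioc] with v hv
    rw [Real.norm_of_nonneg (mul_nonneg (poleMajorant_nonneg (sq_nonneg v)) (hnonneg v))]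
    exact mul_le_of_le_one_left (hnonneg v)
      ((min_le_left _ _).trans (pow_le_one₀ hv.1.le hv.2))
  · have hint : IntegrableOn (fun v : ℝ => x * v ^ (-(3 / 2) : ℝ)) (Set.Ioi 1) :=
      (integrableOn_Ioi_rpow_of_lt (by norm_num) one_pos).const_mul _
    refine hint.mono' hmeas.restrict ?_
    filter_upwards [ae_restrict_mem measurableSet_Ioi] with v hv
    have hv₀ : 0 < v := one_pos.trans hv
    rw [Real.norm_of_nonneg (mul_nonneg (poleMajorant_nonneg (sq_nonneg v)) (hnonneg v))]
    calc poleMajorant (v ^ 2) * poleMajorant (x / v ^ 2)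
        ≤ (v ^ 2) ^ (1 / 4 : ℝ) * (x / v ^ 2) :=
          mul_le_mul (min_le_right _ _) (min_le_left _ _) (hnonneg v) (by positivity)
      _ = x * (v ^ (1 / 2 : ℝ) * v ^ (-2 : ℝ)) := by
          rw [← Real.rpow_two v, ← Real.rpow_mul hv₀.le, Real.rpow_neg hv₀.le]
          norm_num
          ring
      _ = x * v ^ (-(3 / 2) : ℝ) := by rw [← Real.rpow_add hv₀]; norm_num

end Integrability

section CauchySchlomilch

variable {a b : ℝ}

/-- The substitution `v ↦ bv - a / v` of the Cauchy–Schlömilch transformation. -/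
def schlomilch (a b v : ℝ) : ℝ := b * v - a / v

lemma hasDerivAt_schlomilch (a b : ℝ) {v : ℝ} (hv : v ≠ 0) :
    HasDerivAt (schlomilch a b) (b + a / v ^ 2) v :=
  (((hasDerivAt_id v).const_mul b).sub ((hasDerivAt_inv hv).const_mul a)).congr_deriv (by ring)

lemma injOn_schlomilch (ha : 0 ≤ a) (hb : 0 < b) : Set.InjOn (schlomilch a b) (Set.Ioi 0) := by
  refine StrictMonoOn.injOn fun u hu v _ huv => ?_
  have hdiv : a / v ≤ a / u := div_le_div_of_nonneg_left ha hu huv.le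
  have hmul : b * u < b * v := by gcongr
  rw [schlomilch, schlomilch]
  linarith

lemma image_schlomilch (ha : 0 < a) (hb : 0 < b) :
    schlomilch a b '' Set.Ioi 0 = Set.univ := by
  refine Set.eq_univ_of_forall fun u => ?_
  set s := √(u ^ 2 + 4 * a * b)
  have hs : s ^ 2 = u ^ 2 + 4 * a * b := Real.sq_sqrt (by positivity)
  have hpos : 0 < u + s := by
    have habs : |u| < s := by
      refine Real.lt_sqrt_of_sq_lt ?_
      rw [sq_abs, mul_assoc]
      linarith [mul_pos ha hb]
    linarith [neg_abs_le u]
  refine ⟨(u + s) / (2 * b), by rw [Set.mem_Ioi]; positivity, ?_⟩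
  rw [schlomilch]
  field_simp
  linear_combination hs

/-- The inversion `v ↦ v⁻¹` exchanges the two parameters of `schlomilch`, up to sign. -/
lemma comp_schlomilch_rpow_neg_one {α : Type*} {g : ℝ → α} (heven : g.Even) (a b v : ℝ) :
    g (schlomilch a b (v ^ (-1 : ℝ))) = g (schlomilch b a v) := by
  rw [Real.rpow_neg_one, ← heven (schlomilch b a v), schlomilch, schlomilch, div_inv_eq_mul]
  congr 1
  ring

variable {E : Type*} [NormedAddCommGroup E] [NormedSpace ℝ E] {g : ℝ → E}

lemma integral_deriv_smul_comp_schlomilch (ha : 0 < a) (hb : 0 < b) (g : ℝ → E) :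
    ∫ v in Set.Ioi (0 : ℝ), (b + a / v ^ 2) • g (schlomilch a b v) = ∫ u, g u := by
  have hsubst := integral_image_eq_integral_abs_deriv_smul measurableSet_Ioi
    (fun v (hv : 0 < v) => (hasDerivAt_schlomilch a b hv.ne').hasDerivWithinAt)
    (injOn_schlomilch ha.le hb) g
  rw [image_schlomilch ha hb, setIntegral_univ] at hsubst
  rw [hsubst]
  refine setIntegral_congr_fun measurableSet_Ioi fun v _ => ?_
  simp only [abs_of_nonneg (by positivity : 0 ≤ b + a / v ^ 2)]

lemma integrableOn_comp_schlomilch (ha : 0 < a) (hb : 0 < b) (hg : Integrable g) :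
    IntegrableOn (fun v => g (schlomilch a b v)) (Set.Ioi 0) := by
  have hsubst := integrableOn_image_iff_integrableOn_abs_deriv_smul measurableSet_Ioi
    (fun v (hv : 0 < v) => (hasDerivAt_schlomilch a b hv.ne').hasDerivWithinAt)
    (injOn_schlomilch ha.le hb) g
  rw [image_schlomilch ha hb, integrableOn_univ] at hsubst
  have hpos (v : ℝ) : 0 < b + a / v ^ 2 := by positivity
  have hbdd (v : ℝ) : ‖(b + a / v ^ 2)⁻¹‖ ≤ b⁻¹ := by
    rw [Real.norm_of_nonneg (by positivity)]
    exact inv_anti₀ hb (le_add_of_nonneg_right (by positivity))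
  refine ((hsubst.mp hg).bdd_smul b⁻¹ (φ := fun v => (b + a / v ^ 2)⁻¹)
    (by fun_prop : Measurable _).aestronglyMeasurable (.of_forall hbdd)).congr
      (.of_forall fun v => ?_)
  simp only [Pi.smul_apply', abs_of_pos (hpos v), inv_smul_smul₀ (hpos v).ne']

/-- The **Cauchy–Schlömilch transformation**. -/
lemma integral_comp_schlomilch (ha : 0 < a) (hb : 0 < b) (hg : Integrable g) (heven : g.Even) :
    ∫ v in Set.Ioi (0 : ℝ), g (schlomilch a b v) = (2 * b)⁻¹ • ∫ u, g u := by
  set J := ∫ v in Set.Ioi (0 : ℝ), g (schlomilch a b v)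
  have hinv (v : ℝ) : (|(-1 : ℝ)| * v ^ ((-1 : ℝ) - 1)) • g (schlomilch a b (v ^ (-1 : ℝ))) =
      (v ^ 2)⁻¹ • g (schlomilch b a v) := by
    rw [comp_schlomilch_rpow_neg_one heven, abs_neg, abs_one, one_mul,
      show (-1 : ℝ) - 1 = ((-2 : ℤ) : ℝ) by norm_num, Real.rpow_intCast, zpow_neg]
    rfl
  have hinversion : ∫ v in Set.Ioi (0 : ℝ), (v ^ 2)⁻¹ • g (schlomilch b a v) = J := by
    simpa only [hinv] using
      integral_comp_rpow_Ioi (fun v => g (schlomilch a b v)) (by norm_num : (-1 : ℝ) ≠ 0)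
  have hscaling : a • ∫ v in Set.Ioi (0 : ℝ), g (schlomilch b a v) = b • J := by
    have hscale := integral_comp_mul_left_Ioi (fun v => g (schlomilch b a v)) 0 (div_pos hb ha)
    have hcomp (v : ℝ) : schlomilch b a (b / a * v) = schlomilch a b v := by
      rw [schlomilch, schlomilch]
      field_simp
    simp only [hcomp, mul_zero] at hscale
    rw [show J = _ from hscale, smul_smul]
    congr 1
    field_simp
  have hint₁ : IntegrableOn (fun v : ℝ => a • g (schlomilch b a v)) (Set.Ioi 0) :=
    (integrableOn_comp_schlomilch hb ha hg).smul a
  have hint₂ : IntegrableOn (fun v : ℝ => b • (v ^ 2)⁻¹ • g (schlomilch b a v)) (Set.Ioi 0) := by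
    simp only [← hinv]
    exact ((integrableOn_Ioi_comp_rpow_iff _ (by norm_num : (-1 : ℝ) ≠ 0)).mpr
      (integrableOn_comp_schlomilch ha hb hg)).smul b
  have htotal : ∫ u, g u = (2 * b) • J := by
    calc ∫ u, g u = ∫ v in Set.Ioi (0 : ℝ), (a • g (schlomilch b a v) +
          b • (v ^ 2)⁻¹ • g (schlomilch b a v)) := by
          rw [← integral_deriv_smul_comp_schlomilch hb ha]
          simp only [add_smul, smul_smul, div_eq_mul_inv]
      _ = b • J + b • J := by
          rw [integral_add hint₁ hint₂, integral_smul, integral_smul, hscaling, hinversion]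
      _ = (2 * b) • J := by rw [← add_smul, two_mul]
  rw [htotal, inv_smul_smul₀ (by positivity)]

end CauchySchlomilch

section GaussianPair

variable {c : ℂ} {E D : ℝ}

lemma exp_mul_schlomilch_sq (c : ℂ) (hE : 0 ≤ E) (hD : 0 ≤ D) {v : ℝ} (hv : v ≠ 0) :
    exp (-c * (2 * √(E * D) : ℝ)) * exp (-c * (schlomilch √D √E v : ℂ) ^ 2) =
      exp (-c * (E * v ^ 2 + D / v ^ 2)) := by
  have hsq : schlomilch √D √E v ^ 2 = E * v ^ 2 + D / v ^ 2 - 2 * √(E * D) := by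
    rw [schlomilch, Real.sqrt_mul hE, sub_sq, mul_pow, div_pow, Real.sq_sqrt hD, Real.sq_sqrt hE]
    field_simp
    ring
  rw [← Complex.exp_add, ← Complex.ofReal_pow, hsq]
  congr 1
  push_cast
  ring

lemma integrableOn_exp_sq_add_inv_sq (hc : 0 < c.re) (hE : 0 < E) (hD : 0 < D) :
    IntegrableOn (fun v : ℝ => exp (-c * (E * v ^ 2 + D / v ^ 2))) (Set.Ioi 0) :=
  IntegrableOn.congr_fun ((integrableOn_comp_schlomilch (Real.sqrt_pos.mpr hD)
    (Real.sqrt_pos.mpr hE) (integrable_cexp_neg_mul_sq hc)).const_mul _)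
      (fun _ hv => exp_mul_schlomilch_sq c hE.le hD.le (ne_of_gt hv)) measurableSet_Ioi

lemma integral_exp_sq_add_inv_sq (hc : 0 < c.re) (hE : 0 < E) (hD : 0 < D) :
    ∫ v in Set.Ioi (0 : ℝ), exp (-c * (E * v ^ 2 + D / v ^ 2)) =
      exp (-c * (2 * √(E * D) : ℝ)) * ((π / c) ^ (1 / 2 : ℂ) / (2 * √E)) := by
  have hGauss := integral_comp_schlomilch (Real.sqrt_pos.mpr hD) (Real.sqrt_pos.mpr hE)
    (integrable_cexp_neg_mul_sq hc) (fun u => by simp)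
  rw [integral_gaussian_complex hc] at hGauss
  rw [← setIntegral_congr_fun measurableSet_Ioi
    fun v hv => exp_mul_schlomilch_sq c hE.le hD.le (ne_of_gt hv), integral_const_mul, hGauss,
    Complex.real_smul]
  push_cast
  ring

lemma norm_exp_sq_add_inv_sq (c : ℂ) (E D v : ℝ) :
    (‖exp (-c * (E * v ^ 2 + D / v ^ 2))‖ : ℂ) = exp (-(c.re : ℂ) * (E * v ^ 2 + D / v ^ 2)) := by
  rw [Complex.norm_exp,
    show (E * v ^ 2 + D / v ^ 2 : ℂ) = ((E * v ^ 2 + D / v ^ 2 : ℝ) : ℂ) by push_cast; ring,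
    Complex.re_mul_ofReal, Complex.neg_re]
  push_cast
  rfl

lemma integral_norm_exp_sq_add_inv_sq (hc : 0 < c.re) (hE : 0 < E) (hD : 0 < D) :
    ∫ v in Set.Ioi (0 : ℝ), ‖exp (-c * (E * v ^ 2 + D / v ^ 2))‖ =
      Real.exp (-c.re * (2 * √(E * D))) * (√(π / c.re) / (2 * √E)) := by
  have hreal := integral_exp_sq_add_inv_sq (c := (c.re : ℂ)) (by simpa using hc) hE hD
  simp only [← norm_exp_sq_add_inv_sq] at hreal
  rw [integral_complex_ofReal] at hreal
  apply Complex.ofReal_injective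
  rw [hreal, Real.sqrt_eq_rpow (π / c.re)]
  push_cast [Complex.ofReal_cpow (by positivity : 0 ≤ π / c.re)]
  rfl

end GaussianPair

lemma summable_pow_mul_exp_neg_sqrt (k : ℕ) {q : ℝ} (hq : 0 < q) :
    Summable fun p : ℕ × ℕ => ((p.1 : ℝ) + 1) ^ k *
      Real.exp (-(q * √(((p.2 : ℝ) + 1) * ((p.1 : ℝ) + 1)))) := by
  have hsq : Summable fun n : ℕ => (((n : ℝ) + 1) ^ 2)⁻¹ := by
    simpa using (summable_nat_add_iff 1).mpr (Real.summable_nat_pow_inv.mpr one_lt_two)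
  refine Summable.of_nonneg_of_le (fun p => by positivity) (fun p => ?_)
    ((hsq.mul_of_nonneg hsq (fun n => by positivity) fun n => by positivity).mul_left
      (((2 * k + 4).factorial : ℝ) / q ^ (2 * k + 4)))
  set D : ℝ := (p.1 : ℝ) + 1
  set E : ℝ := (p.2 : ℝ) + 1
  have hE : 1 ≤ E := by simp [E]
  have hsqrt : √(E * D) ^ (2 * k + 4) = (E * D) ^ (k + 2) := by
    rw [show 2 * k + 4 = 2 * (k + 2) by ring, pow_mul, Real.sq_sqrt (by positivity)]
  have hexp : Real.exp (-(q * √(E * D))) ≤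
      (2 * k + 4).factorial / (q ^ (2 * k + 4) * (E * D) ^ (k + 2)) := by
    have := Real.pow_div_factorial_le_exp (q * √(E * D)) (by positivity) (2 * k + 4)
    rw [mul_pow, hsqrt] at this
    rw [Real.exp_neg, ← inv_div]
    exact inv_anti₀ (by positivity) this
  calc D ^ k * Real.exp (-(q * √(E * D)))
      ≤ D ^ k * ((2 * k + 4).factorial / (q ^ (2 * k + 4) * (E * D) ^ (k + 2))) := by gcongr
    _ = (2 * k + 4).factorial / q ^ (2 * k + 4) * ((D ^ 2)⁻¹ * (E ^ (k + 2))⁻¹) := by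
        rw [mul_pow, pow_add D]
        have hD : D ≠ 0 := by positivity
        field_simp
    _ ≤ (2 * k + 4).factorial / q ^ (2 * k + 4) * ((D ^ 2)⁻¹ * (E ^ 2)⁻¹) := by
        gcongr
        omega

lemma powExpSum_mul_powExpSum (k l : ℕ) {u w : ℂ} (hu : 0 < u.re) (hw : 0 < w.re) :
    powExpSum k u * powExpSum l w = ∑' p : ℕ × ℕ, ((p.1 : ℂ) + 1) ^ k * ((p.2 : ℂ) + 1) ^ l *
      exp (-(2 * π * (((p.1 : ℂ) + 1) * u + ((p.2 : ℂ) + 1) * w))) := by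
  rw [powExpSum, powExpSum, tsum_mul_tsum_of_summable_norm (summable_norm_powExpSum_term k hu)
    (summable_norm_powExpSum_term l hw)]
  refine tsum_congr fun p => ?_
  rw [mul_mul_mul_comm, ← Complex.exp_add]
  congr 2
  ring

lemma cpow_half_div_two_pi_mul_ω : (π / (2 * π * ω)) ^ (1 / 2 : ℂ) = κ⁻¹ * (√2 : ℂ)⁻¹ := by
  have h2 : (√2 : ℂ) ^ 2 = 2 := by rw [← Complex.ofReal_pow, Real.sq_sqrt zero_le_two]; simp
  have hsq : (π / (2 * π * ω) : ℂ) = (κ⁻¹ * (√2 : ℂ)⁻¹) ^ 2 := by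
    have hπ : (π : ℂ) ≠ 0 := by exact_mod_cast Real.pi_ne_zero
    rw [mul_pow, inv_pow, inv_pow, h2, ω]
    field_simp
  rw [hsq, one_div]
  apply Complex.sq_cpow_two_inv
  rw [← Complex.ofReal_inv, Complex.re_mul_ofReal, Complex.inv_re]
  have hre := κ_re_pos
  have hnorm : 0 < Complex.normSq κ := Complex.normSq_pos.mpr κ_ne_zero
  positivity

lemma two_pi_mul_ω_re_pos : 0 < (2 * π * ω).re := by
  rw [show (2 * π * ω : ℂ) = ω * (2 * π : ℝ) by push_cast; ring]
  exact ω_mul_re_pos Real.two_pi_pos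

section LambertIntegral

variable {x : ℝ}

lemma integral_lambertTerm (d e : ℕ) (hx : 0 < x) :
    ∫ v in Set.Ioi (0 : ℝ), exp (-(2 * π * ω) *
        (((e + 1 : ℝ) : ℂ) * v ^ 2 + (((d + 1) * x : ℝ) : ℂ) / v ^ 2)) =
      exp (-(2 * π * ω) * (2 * √((e + 1) * ((d + 1) * x)) : ℝ)) *
        (κ⁻¹ * (√2 : ℂ)⁻¹ / (2 * √((e : ℝ) + 1))) := by
  rw [integral_exp_sq_add_inv_sq two_pi_mul_ω_re_pos (by positivity) (by positivity),
    cpow_half_div_two_pi_mul_ω]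

lemma integral_norm_lambertTerm_le (d e : ℕ) (hx : 0 < x) :
    ∫ v in Set.Ioi (0 : ℝ), ‖exp (-(2 * π * ω) *
        (((e + 1 : ℝ) : ℂ) * v ^ 2 + (((d + 1) * x : ℝ) : ℂ) / v ^ 2))‖ ≤
      Real.exp (-((2 * π * ω).re * (2 * √x) * √((e + 1) * (d + 1)))) *
        √(π / (2 * π * ω).re) := by
  rw [integral_norm_exp_sq_add_inv_sq two_pi_mul_ω_re_pos (by positivity) (by positivity)]
  have hsqrt : √((e + 1) * ((d + 1) * x)) = √x * √(((e : ℝ) + 1) * (d + 1)) := by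
    rw [← Real.sqrt_mul hx.le]
    congr 1
    ring
  have hone : (1 : ℝ) ≤ √((e : ℝ) + 1) := by
    rw [Real.one_le_sqrt]
    linarith [(Nat.cast_nonneg e : (0 : ℝ) ≤ e)]
  rw [hsqrt]
  gcongr
  · exact le_of_eq (by ring)
  · exact div_le_self (by positivity) (by linarith)

lemma hasSum_integral_powExpSum_mul (k : ℕ) (hx : 0 < x) :
    HasSum (fun p : ℕ × ℕ => ((p.1 : ℂ) + 1) ^ k *
        (exp (-(2 * π * ω) * (2 * √((p.2 + 1) * ((p.1 + 1) * x)) : ℝ)) *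
          (κ⁻¹ * (√2 : ℂ)⁻¹ / (2 * √((p.2 : ℝ) + 1)))))
      (∫ v in Set.Ioi (0 : ℝ),
        powExpSum 0 (ω * (v ^ 2 : ℝ)) * powExpSum k (ω * (x / v ^ 2 : ℝ))) := by
  set F : ℕ × ℕ → ℝ → ℂ := fun p v => ((p.1 : ℂ) + 1) ^ k * exp (-(2 * π * ω) *
    (((p.2 + 1 : ℝ) : ℂ) * v ^ 2 + (((p.1 + 1) * x : ℝ) : ℂ) / v ^ 2))
  have hint (p : ℕ × ℕ) : Integrable (F p) (volume.restrict (Set.Ioi 0)) :=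
    (integrableOn_exp_sq_add_inv_sq two_pi_mul_ω_re_pos (by positivity)
      (by positivity)).const_mul _
  have hnorm : Summable fun p => ∫ v in Set.Ioi (0 : ℝ), ‖F p v‖ := by
    refine Summable.of_nonneg_of_le (fun p => by positivity) (fun p => ?_)
      ((summable_pow_mul_exp_neg_sqrt k (q := (2 * π * ω).re * (2 * √x))
        (mul_pos two_pi_mul_ω_re_pos (by positivity))).mul_right √(π / (2 * π * ω).re))
    have hcast : ‖(p.1 : ℂ) + 1‖ = (p.1 : ℝ) + 1 := by
      exact_mod_cast Complex.norm_natCast (p.1 + 1)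
    simp only [F, norm_mul _ (exp _), norm_pow, hcast]
    rw [integral_const_mul, mul_assoc (((p.1 : ℝ) + 1) ^ k)]
    exact mul_le_mul_of_nonneg_left (integral_norm_lambertTerm_le p.1 p.2 hx) (by positivity)
  have hprod : ∫ v in Set.Ioi (0 : ℝ), powExpSum 0 (ω * (v ^ 2 : ℝ)) *
      powExpSum k (ω * (x / v ^ 2 : ℝ)) = ∫ v in Set.Ioi (0 : ℝ), ∑' p, F p v := by
    refine setIntegral_congr_fun measurableSet_Ioi fun v (hv : 0 < v) => ?_
    simp only [F]
    rw [mul_comm, powExpSum_mul_powExpSum k 0 (ω_mul_re_pos (by positivity))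
      (ω_mul_re_pos (by positivity))]
    refine tsum_congr fun p => ?_
    rw [pow_zero, mul_one]
    congr 2
    push_cast
    ring
  rw [hprod]
  refine (hasSum_integral_of_summable_integral_norm hint hnorm).congr_fun fun p => ?_
  rw [integral_const_mul, integral_lambertTerm p.1 p.2 hx]

end LambertIntegral

section DivisorSums

variable {S : ℂ}

lemma hasSum_sum_divisorsAntidiagonal {F : ℕ → ℕ → ℂ}
    (h : HasSum (fun p : ℕ × ℕ => F (p.1 + 1) (p.2 + 1)) S) :
    HasSum (fun n : ℕ => ∑ p ∈ (n + 1).divisorsAntidiagonal, F p.1 p.2) S := by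
  have hpnat : HasSum (fun p : ℕ+ × ℕ+ => F p.1 p.2) S := by
    rw [← (Equiv.prodCongr Equiv.pnatEquivNat Equiv.pnatEquivNat).symm.hasSum_iff]
    refine h.congr_fun fun p => ?_
    simp [Equiv.pnatEquivNat]
  rw [← sigmaAntidiagonalEquivProd.hasSum_iff] at hpnat
  have hsigma := hpnat.sigma fun n => hasSum_fintype _
  rw [← Equiv.pnatEquivNat.symm.hasSum_iff] at hsigma
  refine hsigma.congr_fun fun n => ?_
  exact (Finset.sum_coe_sort (Nat.divisorsAntidiagonal (n + 1)) fun p : ℕ × ℕ => F p.1 p.2).symm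

lemma hasSum_rsigma_mul {r : ℝ} {H : ℕ → ℂ}
    (h : HasSum (fun p : ℕ × ℕ =>
      ((((p.1 : ℝ) + 1) ^ r : ℝ) : ℂ) * H ((p.1 + 1) * (p.2 + 1))) S) :
    HasSum (fun n : ℕ => (rsigma r (n + 1) : ℂ) * H (n + 1)) S := by
  have hdiv := hasSum_sum_divisorsAntidiagonal
    (F := fun d e => (((d : ℝ) ^ r : ℝ) : ℂ) * H (d * e)) (S := S) (by exact_mod_cast h)
  refine hdiv.congr_fun fun n => ?_
  rw [rsigma, ← Nat.map_div_right_divisors, Finset.sum_map, Complex.ofReal_sum, Finset.sum_mul]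
  refine Finset.sum_congr rfl fun d hd => ?_
  change _ = (((d : ℝ) ^ r : ℝ) : ℂ) * H (d * ((n + 1) / d))
  rw [Nat.mul_div_cancel' (Nat.dvd_of_mem_divisors hd)]

end DivisorSums

/-- The functional `z ↦ -2√2 Im(κ⁻¹ z)`, which recovers the real oscillating series from the
integral of `powExpSum` along the ray through `ω`. -/
def phaseIm : ℂ →L[ℝ] ℂ :=
  ofRealCLM ∘L ((-(2 * √2)) • (imCLM ∘L ContinuousLinearMap.mul ℝ ℂ κ⁻¹))

lemma phaseIm_apply (z : ℂ) : phaseIm z = ((-(2 * √2) * (κ⁻¹ * z).im : ℝ) : ℂ) := rfl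

lemma phaseIm_ofReal_mul (r : ℝ) (z : ℂ) : phaseIm (r * z) = r * phaseIm z := by
  rw [← Complex.real_smul, map_smul, Complex.real_smul]

lemma exp_mul_sin_eq_im (θ : ℝ) : Real.exp (-(√2 * θ)) * Real.sin (π / 4 + √2 * θ) =
    -(ω⁻¹ * exp (-(ω * (2 * θ : ℝ)))).im := by
  have hinv : ω⁻¹ = exp (((-(π / 4) : ℝ) : ℂ) * I) := by
    rw [ω, κ, ← Complex.exp_nat_mul, ← Complex.exp_neg]
    congr 1
    push_cast
    ring
  have hpolar : ω⁻¹ * exp (-(ω * (2 * θ : ℝ))) =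
      ((Real.exp (-(√2 * θ)) : ℝ) : ℂ) * exp (((-(π / 4 + √2 * θ) : ℝ) : ℂ) * I) := by
    rw [hinv, Complex.ofReal_exp, ← Complex.exp_add, ← Complex.exp_add, ω_eq]
    congr 1
    push_cast
    ring
  rw [hpolar, Complex.im_ofReal_mul, Complex.exp_ofReal_mul_I_im, Real.sin_neg]
  ring

lemma phaseIm_lambertTerm (k : ℕ) {D E x : ℝ} (hD : 0 < D) (hE : 0 < E) :
    phaseIm ((D : ℂ) ^ k * (exp (-(2 * π * ω) * (2 * √(E * (D * x)) : ℝ)) *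
        (κ⁻¹ * (√2 : ℂ)⁻¹ / (2 * √E)))) =
      ((D ^ (k + 1 / 2 : ℝ) * ((√(D * E))⁻¹ * (Real.exp (-(2 * π * √(2 * (D * E) * x))) *
        Real.sin (π / 4 + 2 * π * √(2 * (D * E) * x)))) : ℝ) : ℂ) := by
  have hθ : 2 * π * √(2 * (D * E) * x) = √2 * (2 * π * √(E * (D * x))) := by
    rw [show 2 * (D * E) * x = 2 * (E * (D * x)) by ring, Real.sqrt_mul zero_le_two]
    ring
  have hphase : κ⁻¹ * ((D : ℂ) ^ k * (exp (-(2 * π * ω) * (2 * √(E * (D * x)) : ℝ)) *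
      (κ⁻¹ * (√2 : ℂ)⁻¹ / (2 * √E)))) = ((D ^ k * ((√2)⁻¹ / (2 * √E)) : ℝ) : ℂ) *
        (ω⁻¹ * exp (-(ω * (2 * (2 * π * √(E * (D * x))) : ℝ)))) := by
    rw [show (-(2 * π * ω) * (2 * √(E * (D * x)) : ℝ) : ℂ) =
      -(ω * (2 * (2 * π * √(E * (D * x))) : ℝ)) by push_cast; ring, ω, sq κ, mul_inv]
    push_cast
    ring
  rw [phaseIm_apply, hphase, Complex.im_ofReal_mul, hθ, exp_mul_sin_eq_im, Real.rpow_add hD,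
    Real.rpow_natCast, ← Real.sqrt_eq_rpow, Real.sqrt_mul hD.le]
  congr 1
  have hsqrtD : √D ≠ 0 := by positivity
  have hsqrtE : √E ≠ 0 := by positivity
  field_simp

lemma hasSum_exp_mul_sin (k : ℕ) {x : ℝ} (hx : 0 < x) :
    HasSum (fun n : ℕ => ((rsigma (k + 1 / 2) (n + 1) / √((n : ℝ) + 1) *
        Real.exp (-(2 * π * √(2 * ((n : ℝ) + 1) * x))) *
        Real.sin (π / 4 + 2 * π * √(2 * ((n : ℝ) + 1) * x)) : ℝ) : ℂ))
      (phaseIm (∫ v in Set.Ioi (0 : ℝ),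
        powExpSum 0 (ω * (v ^ 2 : ℝ)) * powExpSum k (ω * (x / v ^ 2 : ℝ)))) := by
  have hsum := hasSum_rsigma_mul (r := k + 1 / 2)
    (H := fun n => (((√(n : ℝ))⁻¹ * (Real.exp (-(2 * π * √(2 * (n : ℝ) * x))) *
      Real.sin (π / 4 + 2 * π * √(2 * (n : ℝ) * x))) : ℝ) : ℂ))
    (((hasSum_integral_powExpSum_mul k hx).mapL phaseIm).congr_fun fun p => ?_)
  · refine hsum.congr_fun fun n => ?_
    push_cast
    ring
  · have hterm := phaseIm_lambertTerm k (D := (p.1 : ℝ) + 1) (E := (p.2 : ℝ) + 1) (x := x)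
      (by positivity) (by positivity)
    push_cast at hterm ⊢
    exact hterm.symm

section ComplexRateGamma

variable {a r : ℂ}

lemma norm_cpow_mul_exp_neg_mul (b r : ℂ) {t : ℝ} (ht : 0 < t) :
    ‖(t : ℂ) ^ b * exp (-r * t)‖ = t ^ b.re * Real.exp (-r.re * t) := by
  rw [norm_mul, Complex.norm_cpow_eq_rpow_re_of_pos ht, Complex.norm_exp, Complex.re_mul_ofReal,
    Complex.neg_re]

lemma continuousOn_cpow_const (b : ℂ) : ContinuousOn (fun t : ℝ => (t : ℂ) ^ b) (Set.Ioi 0) :=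
  fun t (ht : 0 < t) =>
    (Complex.continuousAt_ofReal_cpow_const t b (Or.inr ht.ne')).continuousWithinAt

lemma aestronglyMeasurable_cpow_mul_exp_neg_mul (b r : ℂ) :
    AEStronglyMeasurable (fun t : ℝ => (t : ℂ) ^ b * exp (-r * t))
      (volume.restrict (Set.Ioi 0)) :=
  ((continuousOn_cpow_const b).mul (by fun_prop)).aestronglyMeasurable measurableSet_Ioi

lemma integrableOn_rpow_mul_exp_neg_mul {s q : ℝ} (hs : -1 < s) (hq : 0 < q) :
    IntegrableOn (fun t : ℝ => t ^ s * Real.exp (-q * t)) (Set.Ioi 0) := by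
  simpa only [Real.rpow_one] using integrableOn_rpow_mul_exp_neg_mul_rpow hs one_pos hq

lemma integrableOn_cpow_mul_exp_neg_mul (ha : 0 < a.re) (hr : 0 < r.re) :
    IntegrableOn (fun t : ℝ => (t : ℂ) ^ (a - 1) * exp (-r * t)) (Set.Ioi 0) := by
  refine (integrableOn_rpow_mul_exp_neg_mul (s := a.re - 1) (by linarith) hr).mono'
    (aestronglyMeasurable_cpow_mul_exp_neg_mul _ _) ?_
  filter_upwards [ae_restrict_mem measurableSet_Ioi] with t ht
  rw [norm_cpow_mul_exp_neg_mul _ _ ht, Complex.sub_re, Complex.one_re]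

lemma differentiableAt_integral_cpow_mul_exp_neg_mul (ha : 0 < a.re) (hr : 0 < r.re) :
    DifferentiableAt ℂ
      (fun r : ℂ => ∫ t in Set.Ioi (0 : ℝ), (t : ℂ) ^ (a - 1) * exp (-r * t)) r := by
  refine (hasDerivAt_integral_of_dominated_loc_of_deriv_le (𝕜 := ℂ)
    (F' := fun r t => -((t : ℂ) ^ a * exp (-r * t)))
    (bound := fun t : ℝ => t ^ a.re * Real.exp (-(r.re / 2) * t))
    (Metric.ball_mem_nhds r (half_pos hr))
    (Eventually.of_forall fun z => aestronglyMeasurable_cpow_mul_exp_neg_mul _ z)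
    (integrableOn_cpow_mul_exp_neg_mul ha hr)
    (aestronglyMeasurable_cpow_mul_exp_neg_mul a r).neg ?_
    (integrableOn_rpow_mul_exp_neg_mul (by linarith) (half_pos hr)) ?_).2.differentiableAt
  · filter_upwards [ae_restrict_mem measurableSet_Ioi] with t (ht : 0 < t) z hz
    have hre : r.re / 2 ≤ z.re := by
      have hdist := (Complex.abs_re_le_norm (z - r)).trans_lt (mem_ball_iff_norm.mp hz)
      rw [Complex.sub_re] at hdist
      linarith [(abs_lt.mp hdist).1]
    rw [norm_neg, norm_cpow_mul_exp_neg_mul _ _ ht]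
    gcongr
  · filter_upwards [ae_restrict_mem measurableSet_Ioi] with t (ht : 0 < t) z _
    have ht₀ : (t : ℂ) ≠ 0 := by exact_mod_cast ht.ne'
    have hexp : HasDerivAt (fun z : ℂ => exp (-z * t)) (exp (-z * t) * (-1 * t)) z :=
      ((hasDerivAt_id z).neg.mul_const (t : ℂ)).cexp
    refine (hexp.const_mul ((t : ℂ) ^ (a - 1))).congr_deriv ?_
    rw [show (t : ℂ) ^ a = (t : ℂ) ^ (a - 1) * t by
      rw [Complex.cpow_sub _ _ ht₀, Complex.cpow_one, div_mul_cancel₀ _ ht₀]]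
    ring

-- Both sides are holomorphic in `r`, and the integral is known for real `r`.
lemma integral_cpow_mul_exp_neg_mul (ha : 0 < a.re) (hr : 0 < r.re) :
    ∫ t in Set.Ioi (0 : ℝ), (t : ℂ) ^ (a - 1) * exp (-r * t) = (1 / r) ^ a * Gamma a := by
  have hopen : IsOpen {z : ℂ | 0 < z.re} := isOpen_lt continuous_const Complex.continuous_re
  have hleft : AnalyticOnNhd ℂ
      (fun r : ℂ => ∫ t in Set.Ioi (0 : ℝ), (t : ℂ) ^ (a - 1) * exp (-r * t)) {z | 0 < z.re} :=
    DifferentiableOn.analyticOnNhd (fun z hz =>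
      (differentiableAt_integral_cpow_mul_exp_neg_mul ha hz).differentiableWithinAt) hopen
  have hright : AnalyticOnNhd ℂ (fun r : ℂ => (1 / r) ^ a * Gamma a) {z | 0 < z.re} := by
    refine DifferentiableOn.analyticOnNhd (fun z (hz : 0 < z.re) => ?_) hopen
    have hz₀ : z ≠ 0 := by rintro rfl; simp at hz
    have hslit : 1 / z ∈ slitPlane := by
      rw [one_div]
      exact Or.inl (by rw [Complex.inv_re]; have := Complex.normSq_pos.mpr hz₀; positivity)
    exact ((DifferentiableAt.cpow (by fun_prop (disch := assumption)) (by fun_prop)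
      hslit).mul_const _).differentiableWithinAt
  have hreal : ∃ᶠ z in 𝓝[≠] (1 : ℂ),
      ∫ t in Set.Ioi (0 : ℝ), (t : ℂ) ^ (a - 1) * exp (-z * t) = (1 / z) ^ a * Gamma a := by
    have htend : Tendsto ((↑) : ℝ → ℂ) (𝓝[≠] 1) (𝓝[≠] 1) :=
      (Complex.continuous_ofReal.tendsto' 1 1 Complex.ofReal_one).inf
        (tendsto_principal_principal.mpr fun q hq => Complex.ofReal_ne_one.mpr hq)
    refine htend.frequently (Eventually.frequently ?_)
    filter_upwards [nhdsWithin_le_nhds (lt_mem_nhds one_pos)] with q hq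
    simpa only [neg_mul] using Complex.integral_cpow_mul_exp_neg_mul_Ioi ha hq
  exact hleft.eqOn_of_preconnected_of_frequently_eq hright
    (convex_halfSpace_re_gt 0).isPreconnected (by simp) hreal hr

end ComplexRateGamma

section MellinContinuation

variable {f : ℝ → ℂ} {Φ : ℂ → ℂ} {c b s : ℂ} {q : ℝ}

lemma hasMellin_congr {g : ℝ → ℂ} {M : ℂ} (hf : HasMellin f s M)
    (h : Set.EqOn f g (Set.Ioi 0)) : HasMellin g s M := by
  have hsmul : Set.EqOn (fun t : ℝ => (t : ℂ) ^ (s - 1) • f t)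
      (fun t : ℝ => (t : ℂ) ^ (s - 1) • g t) (Set.Ioi 0) := fun t ht => by
    simp only [h ht]
  exact ⟨hf.1.congr_fun hsmul measurableSet_Ioi,
    (setIntegral_congr_fun measurableSet_Ioi hsmul).symm.trans hf.2⟩

lemma hasMellin_cpow_Ioi (b : ℂ) (hs : s.re < b.re) :
    HasMellin (Set.indicator (Set.Ioi 1) fun t : ℝ => (t : ℂ) ^ (-b)) s (1 / (b - s)) := by
  have hre : (s - 1 + -b).re < -1 := by
    simp only [Complex.add_re, Complex.sub_re, Complex.neg_re, Complex.one_re]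
    linarith
  have hpow : Set.EqOn (Set.indicator (Set.Ioi 1) fun t : ℝ => (t : ℂ) ^ (s - 1 + -b))
      (fun t : ℝ => (t : ℂ) ^ (s - 1) •
        Set.indicator (Set.Ioi 1) (fun t : ℝ => (t : ℂ) ^ (-b)) t) (Set.Ioi 0) := by
    intro t (ht : 0 < t)
    have ht₀ : (t : ℂ) ≠ 0 := by exact_mod_cast ht.ne'
    by_cases h1 : t ∈ Set.Ioi 1 <;> simp [h1, Complex.cpow_add _ _ ht₀]
  constructor
  · exact ((integrable_indicator_iff measurableSet_Ioi).mpr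
      (integrableOn_Ioi_cpow_of_lt hre one_pos)).integrableOn.congr_fun hpow measurableSet_Ioi
  · rw [mellin, ← setIntegral_congr_fun measurableSet_Ioi hpow,
      setIntegral_indicator measurableSet_Ioi,
      Set.inter_eq_self_of_subset_right (Set.Ioi_subset_Ioi zero_le_one),
      integral_Ioi_cpow_of_lt hre one_pos, Complex.ofReal_one, Complex.one_cpow, ← neg_div_neg_eq]
    congr 1 <;> ring

/-- The function `f` with `c t^{-b}` subtracted on `(0, 1]` only. -/
def truncSubPow (f : ℝ → ℂ) (c b : ℂ) (t : ℝ) : ℂ :=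
  f t - c • Set.indicator (Set.Ioc 0 1) (fun t : ℝ => (t : ℂ) ^ (-b)) t

lemma locallyIntegrableOn_truncSubPow (hf : LocallyIntegrableOn f (Set.Ioi 0)) :
    LocallyIntegrableOn (truncSubPow f c b) (Set.Ioi 0) := by
  refine hf.sub fun t ht => ?_
  obtain ⟨u, hu, hint⟩ :=
    (continuousOn_cpow_const (-b)).locallyIntegrableOn (μ := volume) measurableSet_Ioi t ht
  exact ⟨u, hu, (hint.indicator measurableSet_Ioc).smul c⟩

lemma truncSubPow_isBigO_atTop (hdecay : f =O[atTop] fun t => Real.exp (-q * t)) :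
    truncSubPow f c b =O[atTop] fun t => Real.exp (-q * t) := by
  refine hdecay.congr' ?_ EventuallyEq.rfl
  filter_upwards [eventually_gt_atTop 1] with t ht
  simp [truncSubPow, ht]

lemma truncSubPow_isBigO_zero (hzero : (fun t : ℝ => f t - c * (t : ℂ) ^ (-b)) =O[𝓝[>] 0]
    fun _ => (1 : ℝ)) : truncSubPow f c b =O[𝓝[>] 0] fun t => t ^ (-(0 : ℝ)) := by
  refine hzero.congr' ?_ (by simp)
  filter_upwards [Ioc_mem_nhdsGT (zero_lt_one' ℝ)] with t ht
  rw [truncSubPow, Set.indicator_of_mem ht, smul_eq_mul]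

lemma mellin_truncSubPow (hconv : MellinConvergent (truncSubPow f c b) s) (hs : b.re < s.re) :
    mellin (truncSubPow f c b) s = mellin f s - c / (s - b) := by
  have hpow := hasMellin_cpow_Ioc (-b) (s := s) (by simpa using hs)
  have hsum := (hasMellin_add hconv (hpow.1.const_smul c)).2
  simp only [truncSubPow, sub_add_cancel] at hsum
  rw [hsum, mellin_const_smul, hpow.2, smul_eq_mul, ← sub_eq_add_neg]
  ring

lemma isPreconnected_quadrant_union_strip {b : ℂ} (hb : 0 < b.re) :
    IsPreconnected ({z : ℂ | 0 < z.re ∧ b.im < z.im} ∪ {z : ℂ | 0 < z.re ∧ z.re < b.re}) :=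
  IsPreconnected.union ⟨b.re / 2, b.im + 1⟩ (by simp [hb]) (by simp [hb])
    ((convex_halfSpace_re_gt 0).inter (convex_halfSpace_im_gt b.im)).isPreconnected
    ((convex_halfSpace_re_gt 0).inter (convex_halfSpace_re_lt b.re)).isPreconnected

lemma mellin_eq_of_differentiableAt {F : ℝ → ℂ}
    (hF : ∀ z : ℂ, 0 < z.re → DifferentiableAt ℂ (mellin F) z)
    (hΦ : ∀ z : ℂ, 0 < z.re → z ≠ b → DifferentiableAt ℂ Φ z)
    (heq : ∀ z : ℂ, b.re < z.re → mellin F z = Φ z) (hs : 0 < s.re) (hsb : s.re < b.re) :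
    mellin F s = Φ s := by
  set U : Set ℂ := {z | 0 < z.re ∧ b.im < z.im} ∪ {z | 0 < z.re ∧ z.re < b.re}
  have hpos {z : ℂ} (hz : z ∈ U) : 0 < z.re := hz.elim And.left And.left
  have hne {z : ℂ} (hz : z ∈ U) : z ≠ b := by
    rintro rfl
    simp [U] at hz
  have hopen : IsOpen U :=
    ((isOpen_lt continuous_const Complex.continuous_re).inter
      (isOpen_lt continuous_const Complex.continuous_im)).union
    ((isOpen_lt continuous_const Complex.continuous_re).inter
      (isOpen_lt Complex.continuous_re continuous_const))
  have hleft : AnalyticOnNhd ℂ (mellin F) U := DifferentiableOn.analyticOnNhd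
    (fun z hz => (hF z (hpos hz)).differentiableWithinAt) hopen
  have hright : AnalyticOnNhd ℂ Φ U := DifferentiableOn.analyticOnNhd
    (fun z hz => (hΦ z (hpos hz) (hne hz)).differentiableWithinAt) hopen
  refine hleft.eqOn_of_preconnected_of_eventuallyEq hright
    (isPreconnected_quadrant_union_strip (hs.trans hsb)) (z₀ := ⟨b.re + 1, b.im + 1⟩) (Or.inl ?_) ?_
    (Or.inr ⟨hs, hsb⟩)
  · exact ⟨by dsimp; linarith, by simp⟩
  · filter_upwards [(isOpen_lt continuous_const Complex.continuous_re).mem_nhds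
      (show b.re < _ from lt_add_one _)] with z hz
    exact heq z hz

-- To the left of `b` the analytic continuation of the Mellin transform of `f` is the Mellin
-- transform of `f(t) - c t^{-b}`.
lemma hasMellin_sub_cpow (hf : LocallyIntegrableOn f (Set.Ioi 0)) (hq : 0 < q)
    (hdecay : f =O[atTop] fun t => Real.exp (-q * t))
    (hzero : (fun t : ℝ => f t - c * (t : ℂ) ^ (-b)) =O[𝓝[>] 0] fun _ => (1 : ℝ))
    (hΦ : ∀ z : ℂ, 0 < z.re → z ≠ b → DifferentiableAt ℂ Φ z)
    (hmellin : ∀ z : ℂ, b.re < z.re → mellin f z = Φ z) (hs : 0 < s.re) (hsb : s.re < b.re) :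
    HasMellin (fun t => f t - c * (t : ℂ) ^ (-b)) s (Φ s) := by
  have hconv {z : ℂ} (hz : 0 < z.re) : MellinConvergent (truncSubPow f c b) z :=
    mellinConvergent_of_isBigO_rpow_exp hq (locallyIntegrableOn_truncSubPow hf)
      (truncSubPow_isBigO_atTop hdecay) (truncSubPow_isBigO_zero hzero) hz
  have hcontinued : mellin (truncSubPow f c b) s = Φ s - c / (s - b) := by
    refine mellin_eq_of_differentiableAt (Φ := fun z => Φ z - c / (z - b)) (b := b) (fun z hz => ?_)
      (fun z hz hzb => ?_) (fun z hz => ?_) hs hsb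
    · exact mellin_differentiableAt_of_isBigO_rpow_exp hq (locallyIntegrableOn_truncSubPow hf)
        (truncSubPow_isBigO_atTop hdecay) (truncSubPow_isBigO_zero hzero) hz
    · have hzb' : z - b ≠ 0 := sub_ne_zero.mpr hzb
      exact (hΦ z hz hzb).sub (by fun_prop (disch := assumption))
    · rw [mellin_truncSubPow (hconv ((hs.trans hsb).trans hz)) hz, hmellin z hz]
  have htail := hasMellin_cpow_Ioi b hsb
  have hsub := hasMellin_sub (hconv hs) (htail.1.const_smul c)
  rw [mellin_const_smul, htail.2, hcontinued] at hsub
  have hvalue : Φ s - c / (s - b) - c • (1 / (b - s)) = Φ s := by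
    rw [← neg_sub b s, div_neg, smul_eq_mul]
    ring
  rw [hvalue] at hsub
  refine hasMellin_congr hsub fun t (ht : 0 < t) => ?_
  by_cases h1 : t ≤ 1
  · simp [truncSubPow, ht, h1, h1.not_gt]
  · simp [truncSubPow, h1, not_le.mp h1]

end MellinContinuation

section PowExpSum

variable {w s : ℂ}

lemma summable_natCast_add_one_rpow {r : ℝ} (hr : r < -1) :
    Summable fun j : ℕ => ((j : ℝ) + 1) ^ r := by
  simpa using (summable_nat_add_iff 1).mpr (Real.summable_nat_rpow.mpr hr)

lemma norm_natCast_add_one (d : ℕ) : ‖(d : ℂ) + 1‖ = (d : ℝ) + 1 := by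
  exact_mod_cast Complex.norm_natCast (d + 1)

lemma norm_powExpSum_term (k d : ℕ) (u : ℂ) :
    ‖((d : ℂ) + 1) ^ k * exp (-(2 * π * ((d : ℂ) + 1) * u))‖ =
      ((d : ℝ) + 1) ^ k * Real.exp (-(2 * π * ((d : ℝ) + 1) * u.re)) := by
  rw [norm_mul, norm_pow, norm_natCast_add_one, Complex.norm_exp, Complex.neg_re,
    show (2 * π * ((d : ℂ) + 1) * u) = (2 * π * ((d : ℝ) + 1) : ℝ) * u by push_cast; ring,
    Complex.re_ofReal_mul]

lemma continuousOn_powExpSum (k : ℕ) : ContinuousOn (powExpSum k) {u | 0 < u.re} := by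
  intro u (hu : 0 < u.re)
  have hhalf : ContinuousOn (powExpSum k) {z | u.re / 2 < z.re} := by
    have hsum := summable_norm_powExpSum_term k (u := (u.re / 2 : ℝ))
      (by rw [Complex.ofReal_re]; exact half_pos hu)
    refine continuousOn_tsum (fun d => by fun_prop) hsum fun d z (hz : u.re / 2 < z.re) => ?_
    rw [norm_powExpSum_term, norm_powExpSum_term, Complex.ofReal_re]
    gcongr
  exact (hhalf.continuousAt ((isOpen_lt continuous_const Complex.continuous_re).mem_nhds
    (half_lt_self hu))).continuousWithinAt

lemma continuousOn_powExpSum_mul (k : ℕ) (hw : 0 < w.re) :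
    ContinuousOn (fun t : ℝ => powExpSum k (w * t)) (Set.Ioi 0) :=
  (continuousOn_powExpSum k).comp (by fun_prop) fun t (ht : 0 < t) => by
    simpa [Complex.re_mul_ofReal] using mul_pos hw ht

lemma powExpSum_mul_isBigO (k : ℕ) (hw : 0 < w.re) :
    (fun t : ℝ => powExpSum k (w * t)) =O[atTop] fun t => Real.exp (-(π * w.re) * t) := by
  have hhalf := summable_norm_powExpSum_term k (u := (w.re / 2 : ℝ))
    (by rw [Complex.ofReal_re]; exact half_pos hw)
  refine Asymptotics.IsBigO.of_bound
    (∑' d : ℕ, ‖((d : ℂ) + 1) ^ k * exp (-(2 * π * ((d : ℂ) + 1) * (w.re / 2 : ℝ)))‖) ?_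
  filter_upwards [eventually_ge_atTop 1] with t ht
  refine tsum_of_norm_bounded (hhalf.hasSum.mul_right ‖Real.exp (-(π * w.re) * t)‖) fun d => ?_
  rw [norm_powExpSum_term, norm_powExpSum_term, Complex.ofReal_re, Complex.re_mul_ofReal,
    Real.norm_of_nonneg (Real.exp_nonneg _), mul_assoc (((d : ℝ) + 1) ^ k), ← Real.exp_add]
  gcongr
  have hprod : 0 ≤ π * w.re * ((t - 1) * (d + 1) + t * d) := by
    have : 0 ≤ t - 1 := by linarith
    positivity
  linarith

lemma exists_norm_lipschitzRemainder_le (m : ℕ) : ∃ C : ℝ, 0 ≤ C ∧ ∀ t : ℝ, 0 < t →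
    ‖lipschitzRemainder (2 * m) (ω * t)‖ ≤ C * poleMajorant t := by
  obtain ⟨K, hK, hbound⟩ := exists_norm_polePair_le m
  have hsum := (summable_natCast_add_one_rpow (r := -(5 / 4)) (by norm_num)).mul_left K
  refine ⟨∑' j : ℕ, K * ((j : ℝ) + 1) ^ (-(5 / 4) : ℝ), tsum_nonneg fun j => by positivity,
    fun t ht => ?_⟩
  rw [← (hasSum_polePair (2 * m) (ω_mul_re_pos ht)).tsum_eq]
  exact tsum_of_norm_bounded (hsum.hasSum.mul_right _) fun j =>
    hbound _ t (by simp) ht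

/-- The value `(2πw)^{-s} Γ(s) ζ(s - k)` of the Mellin transform of `t ↦ powExpSum k (wt)`, and of
its continuation. -/
def powExpSumMellin (k : ℕ) (w s : ℂ) : ℂ :=
  (1 / (2 * π * w)) ^ s * Gamma s * riemannZeta (s - k)

lemma differentiableAt_powExpSumMellin (k : ℕ) (hw : w ≠ 0) (hs : 0 < s.re) (hsk : s ≠ k + 1) :
    DifferentiableAt ℂ (powExpSumMellin k w) s := by
  refine DifferentiableAt.mul (DifferentiableAt.mul ?_ ?_) ?_
  · exact DifferentiableAt.const_cpow (by fun_prop) (Or.inl (by simp [Real.pi_ne_zero, hw]))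
  · refine Complex.differentiableAt_Gamma _ fun n hn => ?_
    rw [hn, Complex.neg_re, Complex.natCast_re] at hs
    linarith [(Nat.cast_nonneg n : (0 : ℝ) ≤ n)]
  · exact DifferentiableAt.comp (f := fun s : ℂ => s - k) (g := riemannZeta) s
      (differentiableAt_riemannZeta fun h => hsk (by linear_combination h)) (by fun_prop)

lemma ofReal_mul_cpow {q : ℝ} (hq : 0 < q) {z : ℂ} (hz : z ≠ 0) (s : ℂ) :
    ((q : ℂ) * z) ^ s = (q : ℂ) ^ s * z ^ s := by
  have hq₀ : (q : ℂ) ≠ 0 := by exact_mod_cast hq.ne'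
  rw [Complex.cpow_def_of_ne_zero (mul_ne_zero hq₀ hz), Complex.cpow_def_of_ne_zero hq₀,
    Complex.cpow_def_of_ne_zero hz, Complex.log_ofReal_mul hq hz, ← Complex.exp_add,
    ← Complex.ofReal_log hq.le, add_mul]

lemma two_pi_mul_natCast_mul_re_pos (d : ℕ) (hw : 0 < w.re) :
    0 < (2 * π * ((d : ℂ) + 1) * w).re := by
  rw [show (2 * π * ((d : ℂ) + 1) * w) = (2 * π * ((d : ℝ) + 1) : ℝ) * w by push_cast; ring,
    Complex.re_ofReal_mul]
  positivity

lemma integral_cpow_mul_powExpSum_term (k d : ℕ) (hw : 0 < w.re) (hs : 0 < s.re) :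
    ∫ t in Set.Ioi (0 : ℝ), ((d : ℂ) + 1) ^ k *
        ((t : ℂ) ^ (s - 1) * exp (-(2 * π * ((d : ℂ) + 1) * w) * t)) =
      1 / ((d : ℂ) + 1) ^ (s - k) * ((1 / (2 * π * w)) ^ s * Gamma s) := by
  have hw₀ : w ≠ 0 := by rintro rfl; simp at hw
  have hd : (0 : ℝ) < (d : ℝ) + 1 := by positivity
  have hd₀ : (d : ℂ) + 1 ≠ 0 := by exact_mod_cast hd.ne'
  have hrate : 1 / (2 * π * ((d : ℂ) + 1) * w) =
      (((d : ℝ) + 1)⁻¹ : ℝ) * (1 / (2 * π * w)) := by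
    push_cast
    field_simp
  have hinv : ((((d : ℝ) + 1)⁻¹ : ℝ) : ℂ) ^ s = (((d : ℂ) + 1) ^ s)⁻¹ := by
    rw [Complex.ofReal_inv, Complex.inv_cpow]
    · push_cast; rfl
    · rw [Complex.arg_ofReal_of_nonneg hd.le]
      exact Real.pi_pos.ne
  rw [integral_const_mul, integral_cpow_mul_exp_neg_mul hs (two_pi_mul_natCast_mul_re_pos d hw),
    hrate, ofReal_mul_cpow (by positivity) (by simp [Real.pi_ne_zero, hw₀]), hinv,
    Complex.cpow_sub _ _ hd₀, Complex.cpow_natCast, one_div_div]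
  ring

lemma integral_norm_cpow_mul_powExpSum_term (k d : ℕ) (hw : 0 < w.re) (hs : 0 < s.re) :
    ∫ t in Set.Ioi (0 : ℝ), ‖((d : ℂ) + 1) ^ k *
        ((t : ℂ) ^ (s - 1) * exp (-(2 * π * ((d : ℂ) + 1) * w) * t))‖ =
      ((d : ℝ) + 1) ^ (k - s.re) * ((1 / (2 * π * w.re)) ^ s.re * Real.Gamma s.re) := by
  have hd : (0 : ℝ) < (d : ℝ) + 1 := by positivity
  have hnorm : Set.EqOn (fun t : ℝ => ‖((d : ℂ) + 1) ^ k *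
        ((t : ℂ) ^ (s - 1) * exp (-(2 * π * ((d : ℂ) + 1) * w) * t))‖)
      (fun t => ((d : ℝ) + 1) ^ k *
        (t ^ (s.re - 1) * Real.exp (-((2 * π * ((d : ℝ) + 1) * w.re) * t)))) (Set.Ioi 0) := by
    intro t ht
    have hre : (2 * π * ((d : ℂ) + 1) * w).re = 2 * π * ((d : ℝ) + 1) * w.re := by
      rw [show (2 * π * ((d : ℂ) + 1) * w) = (2 * π * ((d : ℝ) + 1) : ℝ) * w by push_cast; ring,
        Complex.re_ofReal_mul]
    simp only [norm_mul ((_ : ℂ) ^ k), norm_pow, norm_natCast_add_one]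
    rw [norm_cpow_mul_exp_neg_mul _ _ ht, hre, Complex.sub_re, Complex.one_re, neg_mul]
  rw [setIntegral_congr_fun measurableSet_Ioi hnorm, integral_const_mul,
    Real.integral_rpow_mul_exp_neg_mul_Ioi hs (by positivity),
    show 1 / (2 * π * ((d : ℝ) + 1) * w.re) = ((d : ℝ) + 1)⁻¹ * (1 / (2 * π * w.re)) by
      field_simp,
    Real.mul_rpow (by positivity) (by positivity), Real.inv_rpow hd.le, Real.rpow_sub hd,
    Real.rpow_natCast]
  ring

lemma mellin_powExpSum (k : ℕ) (hw : 0 < w.re) (hs : k + 1 < s.re) :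
    mellin (fun t : ℝ => powExpSum k (w * t)) s = powExpSumMellin k w s := by
  have hs₀ : 0 < s.re := lt_trans (by positivity) hs
  have hsum : Summable fun d : ℕ => ∫ t in Set.Ioi (0 : ℝ), ‖((d : ℂ) + 1) ^ k *
      ((t : ℂ) ^ (s - 1) * exp (-(2 * π * ((d : ℂ) + 1) * w) * t))‖ := by
    simp only [integral_norm_cpow_mul_powExpSum_term k _ hw hs₀]
    exact (summable_natCast_add_one_rpow (by linarith)).mul_right _
  have hexpand : mellin (fun t : ℝ => powExpSum k (w * t)) s =
      ∫ t in Set.Ioi (0 : ℝ), ∑' d : ℕ, ((d : ℂ) + 1) ^ k *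
        ((t : ℂ) ^ (s - 1) * exp (-(2 * π * ((d : ℂ) + 1) * w) * t)) := by
    refine setIntegral_congr_fun measurableSet_Ioi fun t _ => ?_
    simp only [smul_eq_mul, powExpSum]
    rw [← tsum_mul_left]
    refine tsum_congr fun d => ?_
    rw [mul_left_comm]
    congr 3
    ring
  rw [hexpand, ← (hasSum_integral_of_summable_integral_norm (fun d =>
    (integrableOn_cpow_mul_exp_neg_mul hs₀ (two_pi_mul_natCast_mul_re_pos d hw)).const_mul _)
    hsum).tsum_eq]
  simp only [integral_cpow_mul_powExpSum_term k _ hw hs₀]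
  rw [tsum_mul_right, powExpSumMellin, zeta_eq_tsum_one_div_nat_add_one_cpow, mul_comm]
  rw [Complex.sub_re, Complex.natCast_re]
  linarith

lemma exists_norm_powExpSum_sub_le (m : ℕ) : ∃ C : ℝ, ∀ t ∈ Set.Ioc (0 : ℝ) 1,
    ‖powExpSum (2 * m) (ω * t) - polarCoeff (2 * m) * ((ω * t)⁻¹) ^ (2 * m + 1)‖ ≤ C := by
  obtain ⟨C, hC, hbound⟩ := exists_norm_lipschitzRemainder_le m
  refine ⟨C + ‖constTerm (2 * m)‖, fun t ht => ?_⟩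
  rw [show powExpSum (2 * m) (ω * t) - polarCoeff (2 * m) * ((ω * t)⁻¹) ^ (2 * m + 1) =
    lipschitzRemainder (2 * m) (ω * t) + constTerm (2 * m) by rw [lipschitzRemainder]; ring]
  refine norm_add_le_of_le ((hbound t ht.1).trans ?_) le_rfl
  exact mul_le_of_le_one_right hC ((min_le_left _ _).trans ht.2)

lemma powExpSum_isBigO_zero (m : ℕ) :
    (fun t : ℝ => powExpSum (2 * m) (ω * t)) =O[𝓝[>] 0] fun t => t ^ (-(2 * m + 1) : ℝ) := by
  obtain ⟨C, hC⟩ := exists_norm_powExpSum_sub_le m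
  refine Asymptotics.IsBigO.of_bound (C + ‖polarCoeff (2 * m)‖) ?_
  filter_upwards [Ioc_mem_nhdsGT (zero_lt_one' ℝ)] with t ht
  have hpow : t ^ (-(2 * m + 1) : ℝ) = t⁻¹ ^ (2 * m + 1) := by
    rw [Real.rpow_neg ht.1.le, inv_pow, ← Real.rpow_natCast]
    push_cast
    rfl
  have hone : 1 ≤ t⁻¹ ^ (2 * m + 1) := one_le_pow₀ (one_le_inv_iff₀.mpr ht)
  have hC₀ : 0 ≤ C := (norm_nonneg _).trans (hC t ht)
  rw [hpow, Real.norm_of_nonneg (zero_le_one.trans hone),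
    ← sub_add_cancel (powExpSum (2 * m) (ω * t))
      (polarCoeff (2 * m) * ((ω * t)⁻¹) ^ (2 * m + 1)), add_mul]
  refine norm_add_le_of_le ((hC t ht).trans (le_mul_of_one_le_right hC₀ hone)) ?_
  rw [norm_mul, norm_pow, norm_inv, norm_mul, norm_ω, one_mul, Complex.norm_of_nonneg ht.1.le]

lemma hasMellin_powExpSum (m : ℕ) (hs : 2 * m + 1 < s.re) :
    HasMellin (fun t : ℝ => powExpSum (2 * m) (ω * t)) s (powExpSumMellin (2 * m) ω s) := by
  refine ⟨mellinConvergent_of_isBigO_rpow_exp (mul_pos Real.pi_pos ω_re_pos)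
    ((continuousOn_powExpSum_mul (2 * m) ω_re_pos).locallyIntegrableOn measurableSet_Ioi)
    (powExpSum_mul_isBigO (2 * m) ω_re_pos) (powExpSum_isBigO_zero m) hs,
    mellin_powExpSum (2 * m) ω_re_pos ?_⟩
  exact_mod_cast hs

lemma hasMellin_powExpSum_sub (m : ℕ) (hs : 0 < s.re) (hsm : s.re < 2 * m + 1) :
    HasMellin (fun t : ℝ => powExpSum (2 * m) (ω * t) -
      polarCoeff (2 * m) * ((ω * t)⁻¹) ^ (2 * m + 1)) s (powExpSumMellin (2 * m) ω s) := by
  set b : ℂ := ((2 * m + 1 : ℕ) : ℂ) with hb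
  have hpolar (t : ℝ) : polarCoeff (2 * m) * (ω⁻¹) ^ (2 * m + 1) * (t : ℂ) ^ (-b) =
      polarCoeff (2 * m) * ((ω * t)⁻¹) ^ (2 * m + 1) := by
    rw [hb, Complex.cpow_neg, Complex.cpow_natCast, mul_inv, mul_pow, inv_pow (t : ℂ), mul_assoc]
  obtain ⟨C, hC⟩ := exists_norm_powExpSum_sub_le m
  have hzero : (fun t : ℝ => powExpSum (2 * m) (ω * t) -
      polarCoeff (2 * m) * (ω⁻¹) ^ (2 * m + 1) * (t : ℂ) ^ (-b)) =O[𝓝[>] 0]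
      fun _ => (1 : ℝ) := by
    refine Asymptotics.IsBigO.of_bound C ?_
    filter_upwards [Ioc_mem_nhdsGT (zero_lt_one' ℝ)] with t ht
    rw [hpolar, norm_one, mul_one]
    exact hC t ht
  have hbre : b.re = 2 * m + 1 := by rw [hb, Complex.natCast_re]; push_cast; rfl
  refine hasMellin_congr (hasMellin_sub_cpow
    ((continuousOn_powExpSum_mul (2 * m) ω_re_pos).locallyIntegrableOn measurableSet_Ioi)
    (mul_pos Real.pi_pos ω_re_pos) (powExpSum_mul_isBigO (2 * m) ω_re_pos) hzero
    (fun z hz hzb => differentiableAt_powExpSumMellin (2 * m) ω_ne_zero hz ?_)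
    (fun z hz => mellin_powExpSum (2 * m) ω_re_pos ?_) hs ?_) fun t _ => ?_
  · rw [hb] at hzb; exact_mod_cast hzb
  · rw [hbre] at hz; exact_mod_cast hz
  · rwa [hbre]
  · simp only [hpolar]

end PowExpSum

section SpecialValues

variable {x : ℝ}

lemma integrableOn_and_integral_eq_of_hasMellin {f g : ℝ → ℂ} {s M : ℂ} {p : ℝ} (c : ℂ)
    (hp : p ≠ 0) (hf : HasMellin f s M)
    (hg : ∀ t ∈ Set.Ioi (0 : ℝ), c * ((t : ℂ) ^ (s * p - 1) * f (t ^ p)) = g t) :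
    IntegrableOn g (Set.Ioi 0) ∧ ∫ t in Set.Ioi (0 : ℝ), g t = c * (|p|⁻¹ * M) := by
  have hp₀ : (p : ℂ) ≠ 0 := by exact_mod_cast hp
  have hconv : MellinConvergent (fun t => f (t ^ p)) (s * p) := by
    rw [MellinConvergent.comp_rpow hp, mul_div_cancel_right₀ _ hp₀]
    exact hf.1
  refine ⟨IntegrableOn.congr_fun (Integrable.const_mul hconv c) hg measurableSet_Ioi, ?_⟩
  rw [← setIntegral_congr_fun measurableSet_Ioi hg, integral_const_mul]
  congr 1
  have hval := mellin_comp_rpow f (s * p) p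
  rwa [mul_div_cancel_right₀ _ hp₀, hf.2, Complex.real_smul] at hval

lemma integral_powExpSum_mul_polar (m : ℕ) (x : ℝ) :
    IntegrableOn (fun v : ℝ => powExpSum 0 (ω * (v ^ 2 : ℝ)) *
      (polarCoeff (2 * m) * ((ω * (x / v ^ 2 : ℝ))⁻¹) ^ (2 * m + 1))) (Set.Ioi 0) ∧
    ∫ v in Set.Ioi (0 : ℝ), powExpSum 0 (ω * (v ^ 2 : ℝ)) *
        (polarCoeff (2 * m) * ((ω * (x / v ^ 2 : ℝ))⁻¹) ^ (2 * m + 1)) =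
      polarCoeff (2 * m) * ((ω * x)⁻¹) ^ (2 * m + 1) *
        ((|2| : ℝ)⁻¹ * powExpSumMellin 0 ω (2 * m + 3 / 2)) := by
  refine integrableOn_and_integral_eq_of_hasMellin _ two_ne_zero
    (hasMellin_powExpSum 0 ?_) fun t ht => ?_
  · rw [show (2 * m + 3 / 2 : ℂ) = (2 * m + 3 / 2 : ℝ) by push_cast; ring, Complex.ofReal_re]
    have : (0 : ℝ) ≤ m := m.cast_nonneg
    push_cast
    linarith
  · have ht₀ : (t : ℂ) ≠ 0 := by exact_mod_cast ht.ne'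
    rw [show (2 * m + 3 / 2 : ℂ) * (2 : ℝ) - 1 = (2 * (2 * m + 1) : ℕ) by push_cast; ring,
      Complex.cpow_natCast, pow_mul, Real.rpow_two,
      show (ω * (x / t ^ 2 : ℝ))⁻¹ = (ω * x)⁻¹ * (t : ℂ) ^ 2 by push_cast; field_simp,
      mul_pow (ω * x : ℂ)⁻¹]
    ring

lemma integral_powExpSum_sub_mul_constTerm (m : ℕ) :
    IntegrableOn (fun v : ℝ => (powExpSum 0 (ω * (v ^ 2 : ℝ)) -
      polarCoeff 0 * (ω * (v ^ 2 : ℝ))⁻¹) * constTerm (2 * m)) (Set.Ioi 0) ∧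
    ∫ v in Set.Ioi (0 : ℝ), (powExpSum 0 (ω * (v ^ 2 : ℝ)) -
        polarCoeff 0 * (ω * (v ^ 2 : ℝ))⁻¹) * constTerm (2 * m) =
      constTerm (2 * m) * ((|2| : ℝ)⁻¹ * powExpSumMellin 0 ω (1 / 2)) := by
  refine integrableOn_and_integral_eq_of_hasMellin _ two_ne_zero
    (hasMellin_powExpSum_sub 0 (by norm_num) (by norm_num)) fun t _ => ?_
  rw [show (1 / 2 : ℂ) * (2 : ℝ) - 1 = 0 by push_cast; ring, Complex.cpow_zero, Real.rpow_two]
  ring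

lemma integral_polar_mul_powExpSum_sub (m : ℕ) (hx : 0 < x) :
    IntegrableOn (fun v : ℝ => polarCoeff 0 * (ω * (v ^ 2 : ℝ))⁻¹ *
      (powExpSum (2 * m) (ω * (x / v ^ 2 : ℝ)) -
        polarCoeff (2 * m) * ((ω * (x / v ^ 2 : ℝ))⁻¹) ^ (2 * m + 1))) (Set.Ioi 0) ∧
    ∫ v in Set.Ioi (0 : ℝ), polarCoeff 0 * (ω * (v ^ 2 : ℝ))⁻¹ *
        (powExpSum (2 * m) (ω * (x / v ^ 2 : ℝ)) -
          polarCoeff (2 * m) * ((ω * (x / v ^ 2 : ℝ))⁻¹) ^ (2 * m + 1)) =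
      polarCoeff 0 * ω⁻¹ * ((|-2| : ℝ)⁻¹ *
        ((x : ℂ) ^ (-(1 / 2) : ℂ) * powExpSumMellin (2 * m) ω (1 / 2))) := by
  have hmellin := hasMellin_powExpSum_sub m (s := 1 / 2) (by norm_num) (by
    rw [show (1 / 2 : ℂ) = (1 / 2 : ℝ) by push_cast; rfl, Complex.ofReal_re]
    have : (0 : ℝ) ≤ m := m.cast_nonneg
    linarith)
  have hscaled : HasMellin (fun t : ℝ => powExpSum (2 * m) (ω * (x * t : ℝ)) -
        polarCoeff (2 * m) * ((ω * (x * t : ℝ))⁻¹) ^ (2 * m + 1)) (1 / 2)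
      ((x : ℂ) ^ (-(1 / 2) : ℂ) * powExpSumMellin (2 * m) ω (1 / 2)) :=
    ⟨(MellinConvergent.comp_mul_left hx).mpr hmellin.1, by
      rw [← hmellin.2]
      exact mellin_comp_mul_left (fun t : ℝ => powExpSum (2 * m) (ω * t) -
        polarCoeff (2 * m) * ((ω * t)⁻¹) ^ (2 * m + 1)) _ hx⟩
  refine integrableOn_and_integral_eq_of_hasMellin _ (by norm_num) hscaled fun t ht => ?_
  rw [show (1 / 2 : ℂ) * (-2 : ℝ) - 1 = ((-2 : ℤ) : ℂ) by push_cast; ring, Complex.cpow_intCast,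
    Real.rpow_neg ht.le, Real.rpow_two, ← div_eq_mul_inv x, mul_inv ω, zpow_neg, zpow_ofNat,
    Complex.ofReal_pow]
  ring

lemma phaseIm_inv_κ : phaseIm κ⁻¹ = 2 := by
  have h2 : √2 ^ 2 = 2 := Real.sq_sqrt zero_le_two
  rw [phaseIm_apply, ← mul_inv, ← pow_two, show κ ^ 2 = ω from rfl, inv_ω,
    neg_mul I, Complex.neg_im, Complex.I_mul_im, ω_re]
  norm_cast
  linear_combination h2

lemma phaseIm_inv_ω_mul_inv_κ : phaseIm (ω⁻¹ * κ⁻¹) = 2 * (√2 : ℂ) := by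
  have hsq : κ⁻¹ * (ω⁻¹ * κ⁻¹) = -I := by
    rw [mul_left_comm, ← mul_inv, ← pow_two, show κ ^ 2 = ω from rfl, ← mul_inv, ← pow_two,
      ω_sq, Complex.inv_I]
  rw [phaseIm_apply, hsq]
  simp

lemma phaseIm_neg_I_mul_inv_κ : phaseIm (-I * κ⁻¹) = 2 := by
  have h2 : √2 ^ 2 = 2 := Real.sq_sqrt zero_le_two
  have hprod : κ⁻¹ * (-I * κ⁻¹) = -ω := by
    rw [mul_left_comm, ← mul_inv, ← pow_two, show κ ^ 2 = ω from rfl, inv_ω]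
    linear_combination ω * Complex.I_sq
  rw [phaseIm_apply, hprod, Complex.neg_im, ω_im]
  norm_cast
  linear_combination h2

lemma phaseIm_riemannZeta_mul {s : ℂ} (hs : s.im = 0) (z : ℂ) :
    phaseIm (riemannZeta s * z) = riemannZeta s * phaseIm z := by
  have hreal : ((riemannZeta s).re : ℂ) = riemannZeta s := by
    rw [← Complex.conj_eq_iff_re, ← riemannZeta_conj, Complex.conj_eq_iff_im.mpr hs]
  rw [← hreal, phaseIm_ofReal_mul]

lemma ofReal_cpow_half {r : ℝ} (hr : 0 ≤ r) : (r : ℂ) ^ (1 / 2 : ℂ) = √r := by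
  rw [Real.sqrt_eq_rpow, Complex.ofReal_cpow hr]
  push_cast
  rfl

lemma cpow_half_one_div_two_pi_mul_ω :
    (1 / (2 * π * ω)) ^ (1 / 2 : ℂ) = κ⁻¹ * (√2 : ℂ)⁻¹ * (√π : ℂ)⁻¹ := by
  have hsqrtπ : (√π : ℂ) ≠ 0 := by exact_mod_cast (Real.sqrt_pos.mpr Real.pi_pos).ne'
  have hscale := ofReal_mul_cpow Real.pi_pos (z := 1 / (2 * π * ω))
    (by simp [Real.pi_ne_zero, ω_ne_zero]) (1 / 2)
  rw [mul_one_div, cpow_half_div_two_pi_mul_ω, ofReal_cpow_half Real.pi_pos.le] at hscale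
  rw [hscale, mul_comm (√π : ℂ), mul_inv_cancel_right₀ hsqrtπ]

lemma powExpSumMellin_half (k : ℕ) :
    powExpSumMellin k ω (1 / 2) = κ⁻¹ * (√2 : ℂ)⁻¹ * riemannZeta (1 / 2 - k) := by
  have hsqrtπ : (√π : ℂ) ≠ 0 := by exact_mod_cast (Real.sqrt_pos.mpr Real.pi_pos).ne'
  rw [powExpSumMellin, cpow_half_one_div_two_pi_mul_ω, Complex.Gamma_one_half_eq,
    ofReal_cpow_half Real.pi_pos.le, inv_mul_cancel_right₀ hsqrtπ]

lemma phaseIm_integral_powExpSum_sub_mul_constTerm (m : ℕ) :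
    phaseIm (∫ v in Set.Ioi (0 : ℝ), (powExpSum 0 (ω * (v ^ 2 : ℝ)) -
        polarCoeff 0 * (ω * (v ^ 2 : ℝ))⁻¹) * constTerm (2 * m)) =
      1 / (√2 : ℂ) * riemannZeta (1 / 2) * riemannZeta (-2 * m) := by
  rw [(integral_powExpSum_sub_mul_constTerm m).2, powExpSumMellin_half, constTerm_two_mul,
    show riemannZeta (-2 * m) * ((|2| : ℝ)⁻¹ * (κ⁻¹ * (√2 : ℂ)⁻¹ * riemannZeta (1 / 2 - (0 : ℕ)))) =
      riemannZeta (-2 * m) * (riemannZeta (1 / 2) * (((2 * √2)⁻¹ : ℝ) * κ⁻¹)) by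
        rw [abs_two, Nat.cast_zero, sub_zero]; push_cast; ring,
    phaseIm_riemannZeta_mul (by simp), phaseIm_riemannZeta_mul (by simp), phaseIm_ofReal_mul,
    phaseIm_inv_κ]
  push_cast
  ring

lemma phaseIm_integral_polar_mul_powExpSum_sub (m : ℕ) (hx : 0 < x) :
    phaseIm (∫ v in Set.Ioi (0 : ℝ), polarCoeff 0 * (ω * (v ^ 2 : ℝ))⁻¹ *
        (powExpSum (2 * m) (ω * (x / v ^ 2 : ℝ)) -
          polarCoeff (2 * m) * ((ω * (x / v ^ 2 : ℝ))⁻¹) ^ (2 * m + 1))) =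
      riemannZeta (1 / 2 - 2 * m) / (2 * (π : ℂ) * (√x : ℂ)) := by
  have hsqrt2 : (√2 : ℂ) ≠ 0 := by exact_mod_cast (Real.sqrt_pos.mpr two_pos).ne'
  have hrpow : (x : ℂ) ^ (-(1 / 2) : ℂ) = (√x : ℂ)⁻¹ := by
    rw [Complex.cpow_neg, ofReal_cpow_half hx.le]
  rw [(integral_polar_mul_powExpSum_sub m hx).2, powExpSumMellin_half, hrpow,
    show polarCoeff 0 * ω⁻¹ * ((|-2| : ℝ)⁻¹ * ((√x : ℂ)⁻¹ *
        (κ⁻¹ * (√2 : ℂ)⁻¹ * riemannZeta (1 / 2 - (2 * m : ℕ))))) =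
      riemannZeta (1 / 2 - 2 * m) * (((2 * π * (2 * √x * √2))⁻¹ : ℝ) * (ω⁻¹ * κ⁻¹)) by
        rw [abs_neg, abs_two, polarCoeff]; push_cast; ring,
    phaseIm_riemannZeta_mul (by simp), phaseIm_ofReal_mul, phaseIm_inv_ω_mul_inv_κ]
  push_cast
  field_simp

lemma powExpSumMellin_zero_nat_add_half (n : ℕ) :
    powExpSumMellin 0 ω (n + 1 / 2) = ((2 * π * ω)⁻¹) ^ n * (κ⁻¹ * (√2 : ℂ)⁻¹ * (√π : ℂ)⁻¹) *
      Gamma (n + 1 / 2) * riemannZeta (n + 1 / 2) := by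
  rw [powExpSumMellin, Nat.cast_zero, sub_zero, Complex.cpow_add _ _
    (by simp [Real.pi_ne_zero, ω_ne_zero]), Complex.cpow_natCast,
    cpow_half_one_div_two_pi_mul_ω, one_div (2 * π * ω : ℂ)]

lemma cos_pi_mul_two_mul_add_three_halves (m : ℕ) :
    Complex.cos (π * (2 * m + 3 / 2) / 2) = -(-1) ^ m * (√2 / 2) := by
  rw [show (π * (2 * m + 3 / 2) / 2 : ℂ) = (π - π / 4 + (m : ℤ) * π : ℝ) by push_cast; ring,
    ← Complex.ofReal_cos, Real.cos_add_int_mul_pi, Real.cos_pi_sub, Real.cos_pi_div_four]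
  push_cast
  simp

lemma riemannZeta_neg_half_sub_two_mul (m : ℕ) :
    riemannZeta (-1 / 2 - 2 * m) = -(-1) ^ m * ((2 * π : ℂ)⁻¹) ^ (2 * m + 1) * (√π : ℂ)⁻¹ *
      Gamma (2 * m + 3 / 2) * riemannZeta (2 * m + 3 / 2) := by
  have hre : (2 * m + 3 / 2 : ℂ).re = 2 * m + 3 / 2 := by simp
  have : (0 : ℝ) ≤ m := m.cast_nonneg
  have hfunctional := riemannZeta_one_sub (s := (2 * m + 3 / 2 : ℂ))
    (fun n h => by
      have := congrArg Complex.re h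
      rw [hre, Complex.neg_re, Complex.natCast_re] at this
      linarith [(n.cast_nonneg : (0 : ℝ) ≤ n)])
    (fun h => by
      have := congrArg Complex.re h
      rw [hre, Complex.one_re] at this
      linarith)
  have hpow : (2 * π : ℂ) ^ (-(2 * m + 3 / 2) : ℂ) =
      ((2 * π : ℂ)⁻¹) ^ (2 * m + 1) * ((√2 : ℂ)⁻¹ * (√π : ℂ)⁻¹) := by
    have hsqrt : (2 * π : ℂ) ^ (1 / 2 : ℂ) = √2 * √π := by
      have := ofReal_cpow_half (r := 2 * π) (by positivity)
      rw [Real.sqrt_mul zero_le_two] at this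
      exact_mod_cast this
    rw [Complex.cpow_neg, show (2 * m + 3 / 2 : ℂ) = (2 * m + 1 : ℕ) + 1 / 2 by push_cast; ring,
      Complex.cpow_add _ _ (by simp [Real.pi_ne_zero]), Complex.cpow_natCast, hsqrt, mul_inv,
      inv_pow, mul_inv]
  have hsqrt2 : (√2 : ℂ) ≠ 0 := by exact_mod_cast (Real.sqrt_pos.mpr two_pos).ne'
  rw [show (-1 / 2 - 2 * m : ℂ) = 1 - (2 * m + 3 / 2) by ring, hfunctional, hpow,
    cos_pi_mul_two_mul_add_three_halves]
  field_simp

lemma phaseIm_integral_powExpSum_mul_polar (m : ℕ) (x : ℝ) :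
    phaseIm (∫ v in Set.Ioi (0 : ℝ), powExpSum 0 (ω * (v ^ 2 : ℝ)) *
        (polarCoeff (2 * m) * ((ω * (x / v ^ 2 : ℝ))⁻¹) ^ (2 * m + 1))) =
      -(((2 * m).factorial * riemannZeta (-1 / 2 - 2 * m)) /
        (√2 * (((2 * π * x) ^ (2 * m + 1) : ℝ) : ℂ))) := by
  have hphase : (ω⁻¹) ^ (2 * m + 1) * (ω⁻¹) ^ (2 * m + 1) = (-1) ^ m * -I := by
    rw [← mul_pow, ← mul_inv, ← pow_two, ω_sq, Complex.inv_I, pow_succ, pow_mul, neg_sq,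
      Complex.I_sq]
  have hvalue : polarCoeff (2 * m) * ((ω * x)⁻¹) ^ (2 * m + 1) *
      ((|2| : ℝ)⁻¹ * powExpSumMellin 0 ω (2 * m + 3 / 2)) =
      riemannZeta (2 * m + 3 / 2) * (((-1) ^ m * (2 * m).factorial *
        ((2 * π * x)⁻¹) ^ (2 * m + 1) * ((2 * π)⁻¹) ^ (2 * m + 1) * (2 * √2 * √π)⁻¹ *
        Real.Gamma (2 * m + 3 / 2) : ℝ) * (-I * κ⁻¹)) := by
    rw [show (2 * m + 3 / 2 : ℂ) = (2 * m + 1 : ℕ) + 1 / 2 by push_cast; ring,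
      powExpSumMellin_zero_nat_add_half, polarCoeff, abs_two, div_eq_mul_inv _ ((2 * π : ℂ) ^ _),
      ← inv_pow, mul_inv (2 * π : ℂ) ω, mul_pow (2 * π : ℂ)⁻¹ ω⁻¹]
    push_cast
    rw [← Complex.Gamma_ofReal]
    push_cast
    rw [show (2 * m + 1 + 1 / 2 : ℂ) = 2 * m + 3 / 2 by ring]
    linear_combination (riemannZeta (2 * m + 3 / 2) * Gamma (2 * m + 3 / 2) * κ⁻¹ *
      (2 * m).factorial * ((2 * π * x : ℂ)⁻¹) ^ (2 * m + 1) * ((2 * π : ℂ)⁻¹) ^ (2 * m + 1) *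
      (2 * √2 * √π : ℂ)⁻¹) * hphase
  rw [(integral_powExpSum_mul_polar m x).2, hvalue, phaseIm_riemannZeta_mul (by simp),
    phaseIm_ofReal_mul, phaseIm_neg_I_mul_inv_κ, riemannZeta_neg_half_sub_two_mul,
    show (2 * m + 3 / 2 : ℂ) = (2 * m + 3 / 2 : ℝ) by push_cast; ring, Complex.Gamma_ofReal,
    div_eq_mul_inv _ (_ * (_ : ℂ)), mul_inv (√2 : ℂ)]
  push_cast
  rw [← inv_pow (2 * π * x : ℂ)]
  ring

end SpecialValues

section RationalIntegrals

variable {w : ℂ}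

lemma sub_I_mul_mul_add_I_mul (w : ℂ) (v : ℝ) :
    (w - I * v) * (w + I * v) = (v : ℂ) ^ 2 + w ^ 2 := by
  linear_combination -(v : ℂ) ^ 2 * Complex.I_sq

lemma ne_zero_of_re_pos (hw : 0 < w.re) : w ≠ 0 := by
  rintro rfl
  simp at hw

lemma sub_I_mul_re_pos (hw : 0 < w.re) (v : ℝ) : 0 < (w - I * v).re := by simpa using hw

lemma add_I_mul_re_pos (hw : 0 < w.re) (v : ℝ) : 0 < (w + I * v).re := by simpa using hw

lemma sq_add_sq_ne_zero (hw : 0 < w.re) (v : ℝ) : (v : ℂ) ^ 2 + w ^ 2 ≠ 0 := by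
  rw [← sub_I_mul_mul_add_I_mul]
  exact mul_ne_zero (ne_zero_of_re_pos (sub_I_mul_re_pos hw v))
    (ne_zero_of_re_pos (add_I_mul_re_pos hw v))

lemma one_add_sq_le_mul_norm_add_I_mul_sq (hw : 0 < w.re) (v : ℝ) :
    1 + v ^ 2 ≤ (2 + (1 + 2 * w.im ^ 2) / w.re ^ 2) * ‖w + I * v‖ ^ 2 := by
  have hnorm : ‖w + I * v‖ ^ 2 = w.re ^ 2 + (w.im + v) ^ 2 := by
    rw [← Complex.normSq_eq_norm_sq, Complex.normSq_apply]
    simp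
    ring
  have hexpand : (2 + (1 + 2 * w.im ^ 2) / w.re ^ 2) * (w.re ^ 2 + (w.im + v) ^ 2) =
      2 * w.re ^ 2 + 2 * (w.im + v) ^ 2 + (1 + 2 * w.im ^ 2) +
        (1 + 2 * w.im ^ 2) / w.re ^ 2 * (w.im + v) ^ 2 := by
    field_simp
    ring
  have hrest : 0 ≤ (1 + 2 * w.im ^ 2) / w.re ^ 2 * (w.im + v) ^ 2 := by positivity
  rw [hnorm, hexpand]
  nlinarith [sq_nonneg (v + 2 * w.im), sq_nonneg w.re]

lemma norm_inv_sq_add_sq_le (hw : 0 < w.re) (v : ℝ) :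
    ‖((v : ℂ) ^ 2 + w ^ 2)⁻¹‖ ≤ (2 + (1 + 2 * w.im ^ 2) / w.re ^ 2) * (1 + v ^ 2)⁻¹ := by
  set M := 2 + (1 + 2 * w.im ^ 2) / w.re ^ 2
  have hplus := one_add_sq_le_mul_norm_add_I_mul_sq hw v
  have hminus := one_add_sq_le_mul_norm_add_I_mul_sq hw (-v)
  rw [neg_sq, ofReal_neg, mul_neg, ← sub_eq_add_neg] at hminus
  have hv : 0 < 1 + v ^ 2 := by positivity
  have : 0 ≤ M := by positivity
  have hle : 1 + v ^ 2 ≤ M * ‖(v : ℂ) ^ 2 + w ^ 2‖ := by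
    refine le_of_sq_le_sq ?_ (by positivity)
    calc (1 + v ^ 2) ^ 2 ≤ M * ‖w - I * v‖ ^ 2 * (M * ‖w + I * v‖ ^ 2) := by
          rw [sq (1 + v ^ 2)]
          gcongr
      _ = _ := by
          rw [← sub_I_mul_mul_add_I_mul, norm_mul]
          ring
  rw [norm_inv, ← div_eq_mul_inv, le_div_iff₀ hv,
    inv_mul_le_iff₀ (norm_pos_iff.mpr (sq_add_sq_ne_zero hw v)), mul_comm]
  exact hle

lemma integrableOn_inv_sq_add_sq (hw : 0 < w.re) :
    IntegrableOn (fun v : ℝ => ((v : ℂ) ^ 2 + w ^ 2)⁻¹) (Set.Ioi 0) := by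
  have hcont : Continuous fun v : ℝ => ((v : ℂ) ^ 2 + w ^ 2)⁻¹ :=
    Continuous.inv₀ (by fun_prop) (sq_add_sq_ne_zero hw)
  exact (Integrable.mono' (integrable_inv_one_add_sq.const_mul _) hcont.aestronglyMeasurable
    (ae_of_all _ (norm_inv_sq_add_sq_le hw))).integrableOn

lemma hasDerivAt_log_add_I_mul_sub_log_sub_I_mul (hw : 0 < w.re) (v : ℝ) :
    HasDerivAt (fun v : ℝ => 1 / (2 * I * w) * (Complex.log (w + I * v) - Complex.log (w - I * v)))
      (((v : ℂ) ^ 2 + w ^ 2)⁻¹) v := by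
  have hid : HasDerivAt (fun v : ℝ => I * (v : ℂ)) I v := by
    simpa using Complex.ofRealCLM.hasDerivAt.const_mul I
  have hplus := (hid.const_add w).clog_real (Or.inl (add_I_mul_re_pos hw v))
  have hminus := (hid.const_sub w).clog_real (Or.inl (sub_I_mul_re_pos hw v))
  refine ((hplus.sub hminus).const_mul (1 / (2 * I * w))).congr_deriv ?_
  have := ne_zero_of_re_pos (add_I_mul_re_pos hw v)
  have := ne_zero_of_re_pos (sub_I_mul_re_pos hw v)
  have := ne_zero_of_re_pos hw
  rw [← sub_I_mul_mul_add_I_mul]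
  field_simp [Complex.I_ne_zero]
  ring

lemma tendsto_log_add_I_mul_sub_log_sub_I_mul (hw : 0 < w.re) :
    Tendsto (fun v : ℝ => Complex.log (w + I * v) - Complex.log (w - I * v)) atTop
      (𝓝 (Complex.log I - Complex.log (-I))) := by
  have hzero : Tendsto (fun v : ℝ => w * ((v⁻¹ : ℝ) : ℂ)) atTop (𝓝 0) := by
    simpa using ((Complex.continuous_ofReal.tendsto 0).comp tendsto_inv_atTop_zero).const_mul w
  have hplus : Tendsto (fun v : ℝ => w * ((v⁻¹ : ℝ) : ℂ) + I) atTop (𝓝 I) := by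
    simpa using hzero.add_const I
  have hminus : Tendsto (fun v : ℝ => w * ((v⁻¹ : ℝ) : ℂ) - I) atTop (𝓝 (-I)) := by
    simpa using hzero.sub_const I
  refine ((hplus.clog (Or.inr (by simp))).sub (hminus.clog (Or.inr (by simp)))).congr' ?_
  filter_upwards [eventually_gt_atTop 0] with v hv
  have hv₀ : (v : ℂ) ≠ 0 := by exact_mod_cast hv.ne'
  have hfac (c : ℂ) : w + c * v = v * (w * ((v⁻¹ : ℝ) : ℂ) + c) := by
    push_cast
    field_simp
  have hlog {c : ℂ} (hc : w + c * v ≠ 0) :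
      Complex.log (w + c * v) = Real.log v + Complex.log (w * ((v⁻¹ : ℝ) : ℂ) + c) := by
    rw [hfac] at hc ⊢
    exact Complex.log_ofReal_mul hv (right_ne_zero_of_mul hc)
  have hneg : w - I * v = w + -I * v := by ring
  rw [hlog (ne_zero_of_re_pos (add_I_mul_re_pos hw v)), hneg,
    hlog (hneg ▸ ne_zero_of_re_pos (sub_I_mul_re_pos hw v)), ← sub_eq_add_neg]
  ring

lemma integral_inv_sq_add_sq (hw : 0 < w.re) :
    ∫ v in Set.Ioi (0 : ℝ), ((v : ℂ) ^ 2 + w ^ 2)⁻¹ = π / (2 * w) := by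
  rw [integral_Ioi_of_hasDerivAt_of_tendsto'
    (fun v _ => hasDerivAt_log_add_I_mul_sub_log_sub_I_mul hw v) (integrableOn_inv_sq_add_sq hw)
    ((tendsto_log_add_I_mul_sub_log_sub_I_mul hw).const_mul _), Complex.log_I, Complex.log_neg_I]
  have := ne_zero_of_re_pos hw
  simp only [ofReal_zero, mul_zero, add_zero, sub_zero, sub_self]
  field_simp [Complex.I_ne_zero]
  ring

variable {w₁ w₂ : ℂ}

lemma inv_pow_four_sub_eq (h₁ : 0 < w₁.re) (h₂ : 0 < w₂.re) (h : w₁ ^ 2 = -w₂ ^ 2) (v : ℝ) :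
    ((v : ℂ) ^ 4 - w₂ ^ 4)⁻¹ =
      1 / (2 * w₂ ^ 2) * (((v : ℂ) ^ 2 + w₁ ^ 2)⁻¹ - ((v : ℂ) ^ 2 + w₂ ^ 2)⁻¹) := by
  have := sq_add_sq_ne_zero h₁ v
  have := sq_add_sq_ne_zero h₂ v
  have := ne_zero_of_re_pos h₂
  rw [show (v : ℂ) ^ 4 - w₂ ^ 4 = ((v : ℂ) ^ 2 + w₁ ^ 2) * ((v : ℂ) ^ 2 + w₂ ^ 2) by rw [h]; ring]
  field_simp
  rw [h]
  ring

lemma integrableOn_inv_pow_four_sub (h₁ : 0 < w₁.re) (h₂ : 0 < w₂.re) (h : w₁ ^ 2 = -w₂ ^ 2) :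
    IntegrableOn (fun v : ℝ => ((v : ℂ) ^ 4 - w₂ ^ 4)⁻¹) (Set.Ioi 0) := by
  simp_rw [inv_pow_four_sub_eq h₁ h₂ h]
  exact ((integrableOn_inv_sq_add_sq h₁).sub (integrableOn_inv_sq_add_sq h₂)).const_mul _

lemma integral_inv_pow_four_sub (h₁ : 0 < w₁.re) (h₂ : 0 < w₂.re) (h : w₁ ^ 2 = -w₂ ^ 2) :
    ∫ v in Set.Ioi (0 : ℝ), ((v : ℂ) ^ 4 - w₂ ^ 4)⁻¹ =
      1 / (2 * w₂ ^ 2) * (π / (2 * w₁) - π / (2 * w₂)) := by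
  simp_rw [inv_pow_four_sub_eq h₁ h₂ h]
  rw [integral_const_mul, integral_sub (integrableOn_inv_sq_add_sq h₁)
    (integrableOn_inv_sq_add_sq h₂), integral_inv_sq_add_sq h₁, integral_inv_sq_add_sq h₂]

lemma integral_sq_mul_inv_pow_four_sub (h₁ : 0 < w₁.re) (h₂ : 0 < w₂.re)
    (h : w₁ ^ 2 = -w₂ ^ 2) :
    ∫ v in Set.Ioi (0 : ℝ), (v : ℂ) ^ 2 * ((v : ℂ) ^ 4 - w₂ ^ 4)⁻¹ =
      1 / 2 * (π / (2 * w₁) + π / (2 * w₂)) := by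
  have hsplit (v : ℝ) : (v : ℂ) ^ 2 * ((v : ℂ) ^ 4 - w₂ ^ 4)⁻¹ =
      1 / 2 * (((v : ℂ) ^ 2 + w₁ ^ 2)⁻¹ + ((v : ℂ) ^ 2 + w₂ ^ 2)⁻¹) := by
    have := sq_add_sq_ne_zero h₁ v
    have := sq_add_sq_ne_zero h₂ v
    have := ne_zero_of_re_pos h₂
    rw [inv_pow_four_sub_eq h₁ h₂ h]
    field_simp
    rw [h]
    ring
  simp_rw [hsplit]
  rw [integral_const_mul, integral_add (integrableOn_inv_sq_add_sq h₁)
    (integrableOn_inv_sq_add_sq h₂), integral_inv_sq_add_sq h₁, integral_inv_sq_add_sq h₂]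

lemma one_add_I_eq : (1 : ℂ) + I = √2 * κ ^ 2 := by
  have h2 : ((√2 : ℝ) : ℂ) ^ 2 = 2 := by
    rw [← Complex.ofReal_pow, Real.sq_sqrt (by norm_num)]
    norm_num
  change _ = _ * ω
  rw [ω_eq]
  push_cast
  linear_combination (-(1 + I) / 2) * h2

lemma re_neg_I_mul_κ_pos : 0 < (-I * κ).re := by simpa using κ_im_pos

lemma neg_I_mul_κ_sq : (-I * κ) ^ 2 = -κ ^ 2 := by
  rw [mul_pow]
  simp

lemma integrableOn_inv_pow_four_sub_I :
    IntegrableOn (fun v : ℝ => ((v : ℂ) ^ 4 - I)⁻¹) (Set.Ioi 0) := by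
  simpa only [κ_pow_four] using
    integrableOn_inv_pow_four_sub re_neg_I_mul_κ_pos κ_re_pos neg_I_mul_κ_sq

lemma integral_inv_pow_four_sub_I :
    ∫ v in Set.Ioi (0 : ℝ), ((v : ℂ) ^ 4 - I)⁻¹ = (π * √2 / 4 : ℝ) * κ ^ 3 := by
  have h := integral_inv_pow_four_sub re_neg_I_mul_κ_pos κ_re_pos neg_I_mul_κ_sq
  rw [κ_pow_four] at h
  rw [h]
  push_cast
  field_simp [κ_ne_zero, Complex.I_ne_zero]
  linear_combination -4 * one_add_I_eq - 4 * √2 * κ ^ 2 * I * κ_pow_four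
    - 4 * √2 * κ ^ 2 * Complex.I_sq

section

variable {r : ℝ}

lemma inv_κ_eq_conj : κ⁻¹ = (starRingEnd ℂ) κ := by
  rw [Complex.inv_def, Complex.normSq_eq_norm_sq, norm_κ]
  simp

lemma re_sqrt_mul_inv_κ_pos (hr : 0 < r) : 0 < ((√r : ℂ) * κ⁻¹).re := by
  rw [Complex.re_ofReal_mul, inv_κ_eq_conj, Complex.conj_re]
  exact mul_pos (Real.sqrt_pos.mpr hr) κ_re_pos

lemma re_sqrt_mul_I_mul_inv_κ_pos (hr : 0 < r) : 0 < ((√r : ℂ) * (I * κ⁻¹)).re := by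
  rw [Complex.re_ofReal_mul, inv_κ_eq_conj, Complex.I_mul_re, Complex.conj_im, neg_neg]
  exact mul_pos (Real.sqrt_pos.mpr hr) κ_im_pos

lemma sqrt_mul_I_mul_inv_κ_sq (r : ℝ) :
    ((√r : ℂ) * (I * κ⁻¹)) ^ 2 = -((√r : ℂ) * κ⁻¹) ^ 2 := by
  linear_combination (√r : ℂ) ^ 2 * κ⁻¹ ^ 2 * Complex.I_sq

lemma ofReal_sqrt_sq (hr : 0 < r) : ((√r : ℝ) : ℂ) ^ 2 = r := by
  rw [← Complex.ofReal_pow, Real.sq_sqrt hr.le]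

lemma pow_four_sub_sqrt_mul_inv_κ_pow_four (hr : 0 < r) (v : ℝ) :
    (v : ℂ) ^ 4 - ((√r : ℂ) * κ⁻¹) ^ 4 = (v : ℂ) ^ 4 + I * r ^ 2 := by
  have hκ : κ⁻¹ ^ 4 = -I := by rw [inv_pow, κ_pow_four, Complex.inv_I]
  rw [mul_pow, hκ, ← ofReal_sqrt_sq hr]
  ring

lemma integrableOn_inv_pow_four_add_I_mul_sq (hr : 0 < r) :
    IntegrableOn (fun v : ℝ => ((v : ℂ) ^ 4 + I * r ^ 2)⁻¹) (Set.Ioi 0) := by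
  simpa only [pow_four_sub_sqrt_mul_inv_κ_pow_four hr] using
    integrableOn_inv_pow_four_sub (re_sqrt_mul_I_mul_inv_κ_pos hr) (re_sqrt_mul_inv_κ_pos hr)
      (sqrt_mul_I_mul_inv_κ_sq r)

lemma integral_inv_pow_four_add_I_mul_sq (hr : 0 < r) :
    ∫ v in Set.Ioi (0 : ℝ), ((v : ℂ) ^ 4 + I * r ^ 2)⁻¹ =
      (π * √2 / 4 / (r * √r) : ℝ) * κ⁻¹ ^ 3 := by
  have h := integral_inv_pow_four_sub (re_sqrt_mul_I_mul_inv_κ_pos hr) (re_sqrt_mul_inv_κ_pos hr)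
    (sqrt_mul_I_mul_inv_κ_sq r)
  simp_rw [pow_four_sub_sqrt_mul_inv_κ_pow_four hr] at h
  have hsqrt : ((√r : ℝ) : ℂ) ≠ 0 := by exact_mod_cast (Real.sqrt_pos.mpr hr).ne'
  rw [h]
  push_cast
  rw [← ofReal_sqrt_sq hr]
  field_simp [κ_ne_zero, Complex.I_ne_zero]
  linear_combination 4 * κ ^ 2 * (1 - I) * κ_pow_four - 4 * κ ^ 2 * Complex.I_sq
    + 4 * κ ^ 2 * one_add_I_eq + 4 * √2 * κ_pow_four

lemma integral_sq_mul_inv_pow_four_add_I_mul_sq (hr : 0 < r) :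
    ∫ v in Set.Ioi (0 : ℝ), (v : ℂ) ^ 2 * ((v : ℂ) ^ 4 + I * r ^ 2)⁻¹ =
      (π * √2 / 4 / √r : ℝ) * κ⁻¹ := by
  have h := integral_sq_mul_inv_pow_four_sub (re_sqrt_mul_I_mul_inv_κ_pos hr)
    (re_sqrt_mul_inv_κ_pos hr) (sqrt_mul_I_mul_inv_κ_sq r)
  simp_rw [pow_four_sub_sqrt_mul_inv_κ_pow_four hr] at h
  have hsqrt : ((√r : ℝ) : ℂ) ≠ 0 := by exact_mod_cast (Real.sqrt_pos.mpr hr).ne'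
  rw [h]
  push_cast
  field_simp [κ_ne_zero, Complex.I_ne_zero]
  linear_combination 4 * κ ^ 2 * one_add_I_eq + 4 * √2 * κ_pow_four

end

end RationalIntegrals

lemma hasDerivAt_poleDeriv (p : ℕ) {y : ℝ} {w : ℂ} (h₁ : (y : ℂ) + I * w ≠ 0)
    (h₂ : (y : ℂ) - I * w ≠ 0) :
    HasDerivAt (fun y : ℝ => poleDeriv p y w) (poleDeriv (p + 1) y w) y := by
  have hid : HasDerivAt (fun v : ℝ => (v : ℂ)) 1 y := Complex.ofRealCLM.hasDerivAt
  have hplus := ((hid.add_const (I * w)).fun_inv h₁).fun_pow (p + 1)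
  have hminus := ((hid.sub_const (I * w)).fun_inv h₂).fun_pow (p + 1)
  refine ((hplus.sub hminus).const_mul (I * ((-1) ^ p * (p.factorial : ℂ)))).congr_deriv ?_
  rw [poleDeriv, Nat.factorial_succ]
  push_cast
  simp only [div_eq_mul_inv, ← inv_pow]
  ring

section PoleIntegral

variable {a x y v : ℝ}

lemma div_norm_sq_add_I_mul_sq_le_inv_one_add_sq (ha : 0 < a) (hay : a ≤ y) (hx : 0 < x)
    (hv : 0 < v) :
    (x / v ^ 2) / ‖(y : ℂ) ^ 2 + I * (x / v ^ 2 : ℝ) ^ 2‖ ≤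
      (1 / a ^ 2 + 1 + x / a ^ 2) * (1 + v ^ 2)⁻¹ := by
  have hy := sq_le_norm_sq_add_I_mul_sq y (x / v ^ 2)
  have hρ := sq_le_norm_sq_add_I_mul_sq' y (x / v ^ 2)
  have hxv : x / v ^ 2 * v ^ 2 = x := by field_simp
  set B := ‖(y : ℂ) ^ 2 + I * (x / v ^ 2 : ℝ) ^ 2‖
  set ρ := x / v ^ 2
  have haB : a ^ 2 ≤ B := (by gcongr : a ^ 2 ≤ y ^ 2).trans hy
  have hB : 0 < B := (by positivity : 0 < a ^ 2).trans_le haB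
  have hone : 1 ≤ 1 / a ^ 2 * B := by
    rwa [one_div, ← div_eq_inv_mul, one_le_div (by positivity)]
  have hx' : x ≤ x / a ^ 2 * B := by
    calc x = x * 1 := (mul_one x).symm
      _ ≤ x * (1 / a ^ 2 * B) := by gcongr
      _ = _ := by ring
  rw [← div_eq_mul_inv, div_le_div_iff₀ hB (by positivity),
    show ρ * (1 + v ^ 2) = ρ + x by linear_combination hxv]
  linarith [sq_nonneg (ρ - 1)]

lemma norm_poleDeriv_le_inv_one_add_sq (p : ℕ) (ha : 0 < a) (hay : a ≤ y) (hx : 0 < x)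
    (hv : 0 < v) :
    ‖poleDeriv p y (ω * (x / v ^ 2 : ℝ))‖ ≤ p.factorial * ((p + 1) * (√2 / a) ^ p *
      (2 * ((1 / a ^ 2 + 1 + x / a ^ 2) * (1 + v ^ 2)⁻¹))) := by
  refine (norm_poleDeriv_le p (ha.trans_le hay) (ρ := x / v ^ 2) (by positivity)).trans ?_
  have := div_norm_sq_add_I_mul_sq_le_inv_one_add_sq ha hay hx hv
  have hy : 0 < y := ha.trans_le hay
  gcongr

lemma measurable_poleDeriv (p : ℕ) (x y : ℝ) :
    Measurable fun v : ℝ => poleDeriv p y (ω * (x / v ^ 2 : ℝ)) := by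
  unfold poleDeriv
  fun_prop

/-- The integral of `poleDeriv p y` along the ray `ω (x / v²)` against a kernel `K`. -/
def poleIntegral (K : ℝ → ℂ) (x : ℝ) (p : ℕ) (y : ℝ) : ℂ :=
  ∫ v in Set.Ioi (0 : ℝ), K v * poleDeriv p y (ω * (x / v ^ 2 : ℝ))

variable {K : ℝ → ℂ} {B : ℝ}

lemma exists_integrableOn_bound_poleDeriv (hB : ∀ v, ‖K v‖ ≤ B) (hx : 0 < x) (p : ℕ) (ha : 0 < a) :
    ∃ g : ℝ → ℝ, IntegrableOn g (Set.Ioi 0) ∧ ∀ y ≥ a, ∀ v > 0,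
      ‖K v * poleDeriv p y (ω * (x / v ^ 2 : ℝ))‖ ≤ g v := by
  refine ⟨fun v => B * (p.factorial * ((p + 1) * (√2 / a) ^ p *
    (2 * ((1 / a ^ 2 + 1 + x / a ^ 2) * (1 + v ^ 2)⁻¹)))),
    (((((integrable_inv_one_add_sq.const_mul _).const_mul _).const_mul _).const_mul _).const_mul
      _).integrableOn, fun y hy v hv => ?_⟩
  rw [norm_mul]
  exact mul_le_mul (hB v) (norm_poleDeriv_le_inv_one_add_sq p ha hy hx hv) (norm_nonneg _)
    ((norm_nonneg _).trans (hB 0))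

lemma integrableOn_mul_poleDeriv (hK : Measurable K) (hB : ∀ v, ‖K v‖ ≤ B) (hx : 0 < x) (p : ℕ)
    (hy : 0 < y) :
    IntegrableOn (fun v : ℝ => K v * poleDeriv p y (ω * (x / v ^ 2 : ℝ))) (Set.Ioi 0) := by
  obtain ⟨g, hg, hbound⟩ := exists_integrableOn_bound_poleDeriv hB hx p hy
  exact Integrable.mono' hg (hK.mul (measurable_poleDeriv p x y)).aestronglyMeasurable
    ((ae_restrict_iff' measurableSet_Ioi).mpr (ae_of_all _ (hbound y le_rfl)))

lemma hasDerivAt_poleIntegral (hK : Measurable K) (hB : ∀ v, ‖K v‖ ≤ B) (hx : 0 < x) (p : ℕ)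
    (hy : 0 < y) : HasDerivAt (poleIntegral K x p) (poleIntegral K x (p + 1) y) y := by
  obtain ⟨g, hg, hbound⟩ := exists_integrableOn_bound_poleDeriv hB hx (p + 1) (half_pos hy)
  have hmeas (q : ℕ) (z : ℝ) : AEStronglyMeasurable
      (fun v : ℝ => K v * poleDeriv q z (ω * (x / v ^ 2 : ℝ))) (volume.restrict (Set.Ioi 0)) :=
    (hK.mul (measurable_poleDeriv q x z)).aestronglyMeasurable
  refine (hasDerivAt_integral_of_dominated_loc_of_deriv_le (s := Set.Ioi (y / 2))
    (F := fun z v => K v * poleDeriv p z (ω * (x / v ^ 2 : ℝ)))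
    (F' := fun z v => K v * poleDeriv (p + 1) z (ω * (x / v ^ 2 : ℝ)))
    (Ioi_mem_nhds (half_lt_self hy)) (Eventually.of_forall (hmeas p))
    (integrableOn_mul_poleDeriv hK hB hx p hy) (hmeas (p + 1) y) ?_ hg ?_).2
  · exact (ae_restrict_iff' measurableSet_Ioi).mpr
      (ae_of_all _ fun v hv z hz => hbound z (le_of_lt hz) v hv)
  · refine (ae_restrict_iff' measurableSet_Ioi).mpr (ae_of_all _ fun v _ z hz => ?_)
    have hz₀ : 0 < z := (half_pos hy).trans hz
    exact (hasDerivAt_poleDeriv p (add_I_mul_ω_mul_ne_zero hz₀ _)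
      (sub_I_mul_ω_mul_ne_zero hz₀ (by positivity))).const_mul _

end PoleIntegral

section FractionalGeometricSeries

variable {q E β y : ℝ}

lemma descPochhammer_eval_add_one_mul (p : ℕ) (a : ℝ) :
    (descPochhammer ℝ p).eval (a + 1) * (a + 1 - p) = (a + 1) * (descPochhammer ℝ p).eval a := by
  rw [← descPochhammer_succ_eval, descPochhammer_succ_left]
  simp

lemma descPochhammer_eval_add_two_mul (p : ℕ) (a : ℝ) :
    (descPochhammer ℝ p).eval (a + 2) * ((a + 2 - p) * (a + 1 - p)) =
      (a + 2) * (a + 1) * (descPochhammer ℝ p).eval a := by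
  have h₁ := descPochhammer_eval_add_one_mul p (a + 1)
  have h₂ := descPochhammer_eval_add_one_mul p a
  rw [add_assoc, one_add_one_eq_two] at h₁
  linear_combination (a + 1 - p) * h₁ + (a + 2) * h₂

lemma abs_descPochhammer_eval_le (p l : ℕ) (E β : ℝ) :
    |(descPochhammer ℝ p).eval (E * l + β)| ≤ ((|E| + |β| + p) * (l + 1)) ^ p := by
  rw [descPochhammer_eval_eq_prod_range, Finset.abs_prod]
  refine (Finset.prod_le_prod (g := fun _ => (|E| + |β| + p) * (l + 1))
    (fun _ _ => abs_nonneg _) fun i hi => ?_).trans_eq (by simp)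
  have hi : (i : ℝ) ≤ p := by exact_mod_cast (Finset.mem_range.mp hi).le
  calc |E * l + β - i| ≤ |E * l| + |β| + |(i : ℝ)| :=
        (abs_sub _ _).trans (by gcongr; exact abs_add_le _ _)
    _ ≤ |E| * l + |β| + p := by rw [abs_mul, Nat.abs_cast, Nat.abs_cast]; gcongr
    _ ≤ (|E| + |β| + p) * (l + 1) := by
        have : 0 ≤ |E| + (|β| + p) * l := by positivity
        linarith

/-- The `p`-th derivative in `y` of `q ^ l * y ^ (E * l + β)`, the `l`-th term of the expansion of
`y ^ β / (1 - q * y ^ E)`. -/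
def geomTerm (q E β : ℝ) (p l : ℕ) (y : ℝ) : ℝ :=
  q ^ l * (descPochhammer ℝ p).eval (E * l + β) * y ^ (E * l + β - p)

/-- The termwise `p`-th derivative of the expansion of `y ^ β / (1 - q * y ^ E)` in powers of
`q * y ^ E`. -/
def geomSeries (q E β : ℝ) (p : ℕ) (y : ℝ) : ℝ :=
  ∑' l : ℕ, geomTerm q E β p l y

lemma geomTerm_eq (q E β : ℝ) (p l : ℕ) (hy : 0 < y) :
    geomTerm q E β p l y =
      (descPochhammer ℝ p).eval (E * l + β) * (q * y ^ E) ^ l * y ^ (β - p) := by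
  rw [geomTerm, mul_pow, ← Real.rpow_mul_natCast hy.le, add_sub_assoc, Real.rpow_add hy]
  ring

lemma hasDerivAt_geomTerm (q E β : ℝ) (p l : ℕ) (hy : 0 < y) :
    HasDerivAt (geomTerm q E β p l) (geomTerm q E β (p + 1) l y) y := by
  refine ((Real.hasDerivAt_rpow_const (p := E * l + β - p) (Or.inl hy.ne')).const_mul
    (q ^ l * (descPochhammer ℝ p).eval (E * l + β))).congr_deriv ?_
  rw [geomTerm, descPochhammer_succ_eval]
  push_cast
  rw [sub_add_eq_sub_sub]
  ring

lemma summable_mul_add_one_pow_mul_geometric (c : ℝ) (p : ℕ) {ρ : ℝ} (hρ₀ : 0 < ρ) (hρ : ρ < 1) :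
    Summable fun l : ℕ => (c * ((l : ℝ) + 1)) ^ p * ρ ^ l := by
  have h := (summable_nat_add_iff 1).mpr
    (summable_pow_mul_geometric_of_norm_lt_one p (r := ρ) (by rwa [Real.norm_of_nonneg hρ₀.le]))
  refine (h.mul_left (c ^ p * ρ⁻¹)).congr fun l => ?_
  rw [mul_pow, pow_succ]
  push_cast
  field_simp

lemma exists_summable_bound_geomTerm (β : ℝ) (p : ℕ) (hy : 0 < y) (hq : |q| * y ^ E < 1) :
    ∃ ε > 0, ∃ u : ℕ → ℝ, Summable u ∧
      ∀ l, ∀ z ∈ Metric.ball y ε, 0 < z ∧ ‖geomTerm q E β p l z‖ ≤ u l := by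
  obtain ⟨ρ, hqρ, hρ⟩ := exists_between hq
  have hρ₀ : 0 < ρ := (by positivity : 0 ≤ |q| * y ^ E).trans_lt hqρ
  have hratio : ∀ᶠ z in 𝓝 y, |q| * z ^ E < ρ :=
    ((Real.continuousAt_rpow_const _ _ (Or.inl hy.ne')).const_mul _).eventually (gt_mem_nhds hqρ)
  have hfactor : ∀ᶠ z in 𝓝 y, z ^ (β - p) < y ^ (β - p) + 1 :=
    (Real.continuousAt_rpow_const _ _ (Or.inl hy.ne')).eventually (gt_mem_nhds (lt_add_one _))
  obtain ⟨ε, hε, hball⟩ :=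
    Metric.eventually_nhds_iff_ball.mp (hratio.and (hfactor.and (lt_mem_nhds hy)))
  refine ⟨ε, hε, fun l => ((|E| + |β| + p) * (l + 1)) ^ p * ρ ^ l * (y ^ (β - p) + 1),
    (summable_mul_add_one_pow_mul_geometric _ p hρ₀ hρ).mul_right _, fun l z hz => ?_⟩
  obtain ⟨hzρ, hzβ, hz₀⟩ := hball z hz
  have hE := Real.rpow_pos_of_pos hz₀ E
  have hβ := Real.rpow_pos_of_pos hz₀ (β - p)
  refine ⟨hz₀, ?_⟩
  rw [Real.norm_eq_abs, geomTerm_eq _ _ _ _ _ hz₀, abs_mul, abs_mul, abs_pow, abs_mul,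
    abs_of_pos hE, abs_of_pos hβ]
  exact mul_le_mul (mul_le_mul (abs_descPochhammer_eval_le p l E β)
    (pow_le_pow_left₀ (by positivity) hzρ.le _) (by positivity) (by positivity))
    hzβ.le hβ.le (by positivity)

lemma summable_geomTerm (β : ℝ) (p : ℕ) (hy : 0 < y) (hq : |q| * y ^ E < 1) :
    Summable fun l => geomTerm q E β p l y := by
  obtain ⟨ε, hε, u, hu, hbound⟩ := exists_summable_bound_geomTerm β p hy hq
  exact Summable.of_norm_bounded hu fun l => (hbound l y (Metric.mem_ball_self hε)).2

lemma hasDerivAt_geomSeries (β : ℝ) (p : ℕ) (hy : 0 < y) (hq : |q| * y ^ E < 1) :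
    HasDerivAt (geomSeries q E β p) (geomSeries q E β (p + 1) y) y := by
  obtain ⟨ε, hε, u, hu, hbound⟩ := exists_summable_bound_geomTerm β (p + 1) hy hq
  exact hasDerivAt_tsum_of_isPreconnected hu Metric.isOpen_ball (convex_ball y ε).isPreconnected
    (fun l z hz => hasDerivAt_geomTerm q E β p l (hbound l z hz).1)
    (fun l z hz => (hbound l z hz).2)
    (Metric.mem_ball_self hε) (summable_geomTerm β p hy hq) (Metric.mem_ball_self hε)

lemma geomSeries_zero (β : ℝ) (hy : 0 < y) (hq : |q| * y ^ E < 1) :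
    geomSeries q E β 0 y = y ^ β * (1 - q * y ^ E)⁻¹ := by
  have hterm (l : ℕ) : geomTerm q E β 0 l y = y ^ β * (q * y ^ E) ^ l := by
    rw [geomTerm_eq _ _ _ _ _ hy, descPochhammer_zero, Polynomial.eval_one, Nat.cast_zero, sub_zero]
    ring
  rw [geomSeries, tsum_congr hterm, tsum_mul_left, tsum_geometric_of_norm_lt_one]
  rwa [norm_mul, Real.norm_eq_abs, Real.norm_of_nonneg (by positivity)]

lemma geomSeries_eq_add (β : ℝ) (p : ℕ) (hy : 0 < y) (hq : |q| * y ^ E < 1) :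
    geomSeries q E β p y =
      (descPochhammer ℝ p).eval β * y ^ (β - p) + q * geomSeries q E (β + E) p y := by
  rw [geomSeries, (summable_geomTerm β p hy hq).tsum_eq_zero_add, geomSeries, ← tsum_mul_left]
  congr 1
  · simp [geomTerm]
  · refine tsum_congr fun l => ?_
    rw [geomTerm, geomTerm,
      show E * ((l + 1 : ℕ) : ℝ) + β = E * l + (β + E) by push_cast; ring]
    ring

end FractionalGeometricSeries

section Hypergeometric

lemma poch_succ (a : ℂ) (k : ℕ) : poch a (k + 1) = poch a k * (a + k) :=
  Finset.prod_range_succ _ _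

lemma poch_ne_zero {a : ℂ} {c : ℤ} (h : 4 * a = 2 * c + 1) (k : ℕ) : poch a k ≠ 0 := by
  rw [poch, Finset.prod_ne_zero_iff]
  intro i _ hi
  have : ((2 * c + 1 + 4 * i : ℤ) : ℂ) = 0 := by
    push_cast
    linear_combination 4 * hi - h
  have : (2 * c + 1 + 4 * i : ℤ) = 0 := by exact_mod_cast this
  omega

lemma poch_one (k : ℕ) : poch 1 k = (k.factorial : ℂ) := by
  induction k with
  | zero => simp [poch]
  | succ k ih =>
    rw [poch_succ, ih, Nat.factorial_succ]
    push_cast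
    ring

lemma descPochhammer_eval_two_mul_mul_poch (m l : ℕ) :
    (((descPochhammer ℝ (2 * m)).eval (2 * l + -(1 / 2)) : ℝ) : ℂ) *
        (poch (1 / 4 - m) l * poch (3 / 4 - m) l) =
      ((descPochhammer ℝ (2 * m)).eval (-(1 / 2)) : ℝ) * (poch (1 / 4) l * poch (3 / 4) l) := by
  induction l with
  | zero => simp [poch]
  | succ l ih =>
    have h := congrArg (Complex.ofReal ·)
      (descPochhammer_eval_add_two_mul (2 * m) (2 * l + -(1 / 2)))
    simp only [poch_succ]
    push_cast at h ⊢
    rw [show (2 * ((l : ℝ) + 1) + -(1 / 2)) = 2 * l + -(1 / 2) + 2 by ring]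
    linear_combination 1 / 4 * (poch (1 / 4 - m) l * poch (3 / 4 - m) l) * h
      + (1 / 4 + l) * (3 / 4 + l) * ih

lemma descPochhammer_eval_neg_two_mul_mul_poch (m l : ℕ) :
    (((descPochhammer ℝ (2 * m)).eval (-2 * l + -(1 / 2)) : ℝ) : ℂ) *
        (poch (1 / 4) l * poch (3 / 4) l) =
      ((descPochhammer ℝ (2 * m)).eval (-(1 / 2)) : ℝ) *
        (poch (1 / 4 + m) l * poch (3 / 4 + m) l) := by
  induction l with
  | zero => simp [poch]
  | succ l ih =>
    have h := congrArg (Complex.ofReal ·)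
      (descPochhammer_eval_add_two_mul (2 * m) (-2 * l + -(5 / 2)))
    rw [show (-2 * (l : ℝ) + -(5 / 2) + 2) = -2 * l + -(1 / 2) by ring] at h
    simp only [poch_succ]
    push_cast at h ⊢
    rw [show (-2 * ((l : ℝ) + 1) + -(1 / 2)) = -2 * l + -(5 / 2) by ring]
    linear_combination -1 / 4 * (poch (1 / 4) l * poch (3 / 4) l) * h
      + (1 / 4 + m + l) * (3 / 4 + m + l) * ih

lemma Gamma_two_mul_add_half (m : ℕ) :
    Real.Gamma (2 * m + 1 / 2) = (descPochhammer ℝ (2 * m)).eval (-(1 / 2)) * √π := by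
  induction m with
  | zero => simpa using Real.Gamma_one_half_eq
  | succ m ih =>
    rw [show (2 * ((m + 1 : ℕ) : ℝ) + 1 / 2) = (2 * m + 1 / 2 + 1) + 1 by push_cast; ring,
      Real.Gamma_add_one (by positivity), Real.Gamma_add_one (by positivity), ih,
      show 2 * (m + 1) = 2 * m + 1 + 1 by ring, descPochhammer_succ_eval, descPochhammer_succ_eval]
    push_cast
    ring

lemma geomSeries_eq_mul_F32 (q E β : ℝ) (p : ℕ) {y : ℝ} (hy : 0 < y) {a b c d : ℂ}
    (hc : ∀ l, poch c l ≠ 0) (hd : ∀ l, poch d l ≠ 0)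
    (h : ∀ l : ℕ, (((descPochhammer ℝ p).eval (E * l + β) : ℝ) : ℂ) * (poch c l * poch d l) =
      ((descPochhammer ℝ p).eval β : ℝ) * (poch a l * poch b l)) :
    (geomSeries q E β p y : ℂ) = ((y ^ (β - p) * (descPochhammer ℝ p).eval β : ℝ) : ℂ) *
      F32 a b 1 c d (q * y ^ E : ℝ) := by
  rw [geomSeries, F32, Complex.ofReal_tsum, ← tsum_mul_left]
  refine tsum_congr fun l => ?_
  have hl : (l.factorial : ℂ) ≠ 0 := by exact_mod_cast l.factorial_ne_zero
  have hcoeff := eq_div_of_mul_eq (mul_ne_zero (hc l) (hd l)) (h l)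
  have := hc l
  have := hd l
  rw [geomTerm_eq _ _ _ _ _ hy, poch_one]
  push_cast [hcoeff]
  field_simp

end Hypergeometric

section KernelIntegrals

variable {x y : ℝ}

lemma eqOn_of_hasDerivAt_succ {f g : ℕ → ℝ → ℂ} {U : Set ℝ} (hU : IsOpen U)
    (h₀ : Set.EqOn (f 0) (g 0) U) (hf : ∀ p, ∀ y ∈ U, HasDerivAt (f p) (f (p + 1) y) y)
    (hg : ∀ p, ∀ y ∈ U, HasDerivAt (g p) (g (p + 1) y) y) (p : ℕ) : Set.EqOn (f p) (g p) U := by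
  induction p with
  | zero => exact h₀
  | succ p ih =>
    exact fun y hy => (hf p y hy).unique
      ((hg p y hy).congr_of_eventuallyEq (ih.eventuallyEq_of_mem (hU.mem_nhds hy)))

lemma sq_add_I_mul_sq_ne_zero (hy : 0 < y) (ρ : ℝ) : (y : ℂ) ^ 2 + I * ρ ^ 2 ≠ 0 :=
  norm_pos_iff.mp ((by positivity : 0 < y ^ 2).trans_le (sq_le_norm_sq_add_I_mul_sq y ρ))

lemma poleDeriv_zero_ω_mul {ρ : ℝ} (hy : 0 < y) (hρ : 0 ≤ ρ) :
    poleDeriv 0 y (ω * ρ) = 2 * ω * ρ / (y ^ 2 + I * ρ ^ 2) := by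
  rw [← add_mul_sub_I_mul_ω_mul, poleDeriv]
  simp only [pow_zero, Nat.factorial_zero, Nat.cast_one, mul_one, zero_add, pow_one]
  rw [inv_sub_inv (add_I_mul_ω_mul_ne_zero hy ρ) (sub_I_mul_ω_mul_ne_zero hy hρ), ← mul_div_assoc]
  congr 1
  linear_combination (-2) * ω * ρ * Complex.I_sq

/-- The pole pair `2ωv² / (ω²v⁴ + 1)` attached to the first factor of the Cauchy–Schlömilch
integrand. -/
def poleKernel (v : ℝ) : ℂ := poleDeriv 0 1 (ω * (v ^ 2 : ℝ))

lemma norm_poleKernel_le (v : ℝ) : ‖poleKernel v‖ ≤ 2 := by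
  refine (norm_poleDeriv_le 0 one_pos (sq_nonneg v)).trans ?_
  have h₁ := sq_le_norm_sq_add_I_mul_sq 1 (v ^ 2)
  have h₂ := sq_le_norm_sq_add_I_mul_sq' 1 (v ^ 2)
  set B := ‖((1 : ℝ) : ℂ) ^ 2 + I * (v ^ 2 : ℝ) ^ 2‖
  have : v ^ 2 / B ≤ 1 := by
    rw [div_le_one (by linarith)]
    linarith [sq_nonneg (v ^ 2 - 1)]
  simpa using this

lemma measurable_poleKernel : Measurable poleKernel := by
  unfold poleKernel poleDeriv
  fun_prop

lemma poleKernel_eq (v : ℝ) : poleKernel v = 2 * ω * v ^ 2 * (-I * ((v : ℂ) ^ 4 - I)⁻¹) := by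
  have hden : ((1 : ℝ) : ℂ) ^ 2 + I * (v ^ 2 : ℝ) ^ 2 = I * ((v : ℂ) ^ 4 - I) := by
    push_cast
    linear_combination Complex.I_sq
  rw [poleKernel, poleDeriv_zero_ω_mul one_pos (sq_nonneg v), hden, div_eq_mul_inv, mul_inv, inv_I]
  push_cast
  ring

lemma poleDeriv_zero_ω_mul_div_sq (hx : 0 < x) (hy : 0 < y) {v : ℝ} (hv : 0 < v) :
    poleDeriv 0 y (ω * (x / v ^ 2 : ℝ)) = (2 * x / y ^ 2 : ℝ) * ω *
      ((v : ℂ) ^ 2 * ((v : ℂ) ^ 4 + I * (x / y : ℝ) ^ 2)⁻¹) := by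
  have hv₀ : (v : ℂ) ≠ 0 := by exact_mod_cast hv.ne'
  have hy₀ : (y : ℂ) ≠ 0 := by exact_mod_cast hy.ne'
  have hden : ((y : ℝ) : ℂ) ^ 2 + I * (x / v ^ 2 : ℝ) ^ 2 =
      y ^ 2 / v ^ 4 * (v ^ 4 + I * (x / y : ℝ) ^ 2) := by
    push_cast
    field_simp
  have hne := right_ne_zero_of_mul (hden ▸ sq_add_I_mul_sq_ne_zero hy (x / v ^ 2))
  rw [poleDeriv_zero_ω_mul hy (by positivity), hden]
  generalize (v : ℂ) ^ 4 + I * (x / y : ℝ) ^ 2 = A at hne ⊢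
  push_cast
  field_simp

lemma poleIntegral_one_zero (hx : 0 < x) (hy : 0 < y) :
    poleIntegral (fun _ => 1) x 0 y = (2 * x / y ^ 2 * (π * √2 / 4 / √(x / y)) : ℝ) * κ := by
  have hintegrand : ∀ v ∈ Set.Ioi (0 : ℝ), 1 * poleDeriv 0 y (ω * (x / v ^ 2 : ℝ)) =
      (2 * x / y ^ 2 : ℝ) * ω * ((v : ℂ) ^ 2 * ((v : ℂ) ^ 4 + I * (x / y : ℝ) ^ 2)⁻¹) :=
    fun v hv => by rw [one_mul, poleDeriv_zero_ω_mul_div_sq hx hy hv]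
  rw [poleIntegral, setIntegral_congr_fun measurableSet_Ioi hintegrand, integral_const_mul,
    integral_sq_mul_inv_pow_four_add_I_mul_sq (div_pos hx hy), Complex.ofReal_mul,
    show ω = κ ^ 2 from rfl]
  field_simp [κ_ne_zero]

lemma poleKernel_mul_poleDeriv_zero (hx : 0 < x) (hy : 0 < y) {v : ℝ} (hv : 0 < v) :
    poleKernel v * poleDeriv 0 y (ω * (x / v ^ 2 : ℝ)) = (4 * x / (x ^ 2 + y ^ 2) : ℝ) *
      (((v : ℂ) ^ 4 - I)⁻¹ + ((x / y : ℝ) : ℂ) ^ 2 * ((v : ℂ) ^ 4 + I * (x / y : ℝ) ^ 2)⁻¹) := by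
  have hxy : (x : ℂ) ^ 2 + y ^ 2 ≠ 0 := by exact_mod_cast (by positivity : x ^ 2 + y ^ 2 ≠ 0)
  have hy₀ : (y : ℂ) ≠ 0 := by exact_mod_cast hy.ne'
  have hA : (v : ℂ) ^ 4 - I ≠ 0 := fun h => by
    simpa [← Complex.ofReal_pow] using congrArg Complex.im h
  have hB : (v : ℂ) ^ 4 + I * (x / y : ℝ) ^ 2 ≠ 0 := by
    convert sq_add_I_mul_sq_ne_zero (by positivity : 0 < v ^ 2) (x / y) using 2
    push_cast
    ring
  have hsum : ((v : ℂ) ^ 4 - I)⁻¹ +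
      ((x / y : ℝ) : ℂ) ^ 2 * ((v : ℂ) ^ 4 + I * (x / y : ℝ) ^ 2)⁻¹ =
        v ^ 4 * (1 + ((x / y : ℝ) : ℂ) ^ 2) *
          (((v : ℂ) ^ 4 - I)⁻¹ * ((v : ℂ) ^ 4 + I * (x / y : ℝ) ^ 2)⁻¹) := by
    rw [← mul_inv, eq_mul_inv_iff_mul_eq₀ (mul_ne_zero hA hB)]
    linear_combination ((v : ℂ) ^ 4 + I * (x / y : ℝ) ^ 2) * inv_mul_cancel₀ hA +
      ((x / y : ℝ) : ℂ) ^ 2 * ((v : ℂ) ^ 4 - I) * inv_mul_cancel₀ hB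
  rw [poleKernel_eq, poleDeriv_zero_ω_mul_div_sq hx hy hv, hsum]
  have hcoeff : ((4 * x / (x ^ 2 + y ^ 2) : ℝ) : ℂ) * (1 + ((x / y : ℝ) : ℂ) ^ 2) =
      2 * (2 * x / y ^ 2 : ℝ) := by
    push_cast
    field_simp
    ring
  linear_combination (-I * 2 * v ^ 4 * (2 * x / y ^ 2 : ℝ) * ((v : ℂ) ^ 4 - I)⁻¹ *
      ((v : ℂ) ^ 4 + I * (x / y : ℝ) ^ 2)⁻¹) * ω_sq
    - (v ^ 4 * ((v : ℂ) ^ 4 - I)⁻¹ * ((v : ℂ) ^ 4 + I * (x / y : ℝ) ^ 2)⁻¹) * hcoeff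
    - (2 * v ^ 4 * (2 * x / y ^ 2 : ℝ) * ((v : ℂ) ^ 4 - I)⁻¹ *
      ((v : ℂ) ^ 4 + I * (x / y : ℝ) ^ 2)⁻¹) * Complex.I_sq

lemma poleIntegral_poleKernel_zero (hx : 0 < x) (hy : 0 < y) :
    poleIntegral poleKernel x 0 y = (4 * x / (x ^ 2 + y ^ 2) * (π * √2 / 4) : ℝ) *
      (κ ^ 3 + (√(x / y) : ℝ) * κ⁻¹ ^ 3) := by
  have hr : 0 < x / y := div_pos hx hy
  have hsq : ((√(x / y) : ℝ) : ℂ) ^ 2 = (x / y : ℝ) := by exact_mod_cast Real.sq_sqrt hr.le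
  rw [poleIntegral, setIntegral_congr_fun measurableSet_Ioi
      fun v hv => poleKernel_mul_poleDeriv_zero hx hy hv, integral_const_mul,
    integral_add integrableOn_inv_pow_four_sub_I
      ((integrableOn_inv_pow_four_add_I_mul_sq hr).const_mul _),
    integral_const_mul, integral_inv_pow_four_sub_I, integral_inv_pow_four_add_I_mul_sq hr,
    Complex.ofReal_mul, mul_assoc]
  congr 1
  rw [Complex.ofReal_div _ (_ * _), Complex.ofReal_mul (x / y), ← hsq]
  field_simp

lemma phaseIm_poleIntegral_one (hx : 0 < x) (p : ℕ) (hy : 0 < y) :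
    phaseIm (poleIntegral (fun _ => 1) x p y) = 0 := by
  refine eqOn_of_hasDerivAt_succ (f := fun p y => phaseIm (poleIntegral (fun _ => 1) x p y))
    (g := fun _ _ => 0) isOpen_Ioi (fun y hy => ?_) (fun p y hy => ?_)
    (fun _ y _ => hasDerivAt_const y 0) p hy
  · dsimp only
    rw [poleIntegral_one_zero hx hy, phaseIm_ofReal_mul, phaseIm_apply, inv_mul_cancel₀ κ_ne_zero]
    simp
  · exact phaseIm.hasFDerivAt.comp_hasDerivAt y
      (hasDerivAt_poleIntegral measurable_const (B := 1) (by simp) hx p hy)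

lemma add_I_mul_ofReal_ne_zero (hy : 0 < y) (x : ℝ) : (y : ℂ) + I * x ≠ 0 :=
  fun h => hy.ne' (by simpa using congrArg Complex.re h)

lemma sub_I_mul_ofReal_ne_zero (hy : 0 < y) (x : ℝ) : (y : ℂ) - I * x ≠ 0 :=
  fun h => hy.ne' (by simpa using congrArg Complex.re h)

lemma poleDeriv_zero_ofReal (hy : 0 < y) (x : ℝ) :
    poleDeriv 0 y x = (2 * x / (x ^ 2 + y ^ 2) : ℝ) := by
  rw [poleDeriv]
  simp only [pow_zero, Nat.factorial_zero, Nat.cast_one, mul_one, zero_add, pow_one]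
  rw [inv_sub_inv (add_I_mul_ofReal_ne_zero hy x) (sub_I_mul_ofReal_ne_zero hy x), ← mul_div_assoc]
  push_cast
  congr 1
  · linear_combination (-2) * x * Complex.I_sq
  · linear_combination (-(x : ℂ) ^ 2) * Complex.I_sq

lemma phaseIm_κ_pow_three : phaseIm (κ ^ 3) = -2 := by
  rw [phaseIm_apply, show κ⁻¹ * κ ^ 3 = ω by rw [show ω = κ ^ 2 from rfl]; field_simp [κ_ne_zero],
    ω_im, show -(2 * √2) * (√2 / 2) = -2 by linear_combination -Real.sq_sqrt zero_le_two]
  norm_num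

lemma phaseIm_inv_κ_pow_three : phaseIm (κ⁻¹ ^ 3) = (2 * √2 : ℝ) := by
  rw [phaseIm_apply, ← pow_succ', inv_pow, κ_pow_four, inv_I]
  simp

lemma phaseIm_poleIntegral_poleKernel_zero (hx : 0 < x) (hy : 0 < y) :
    phaseIm (poleIntegral poleKernel x 0 y) =
      4 * π * (x * √x * (y ^ (-(1 / 2) : ℝ) / (x ^ 2 + y ^ 2)) : ℝ) -
        √2 * π * poleDeriv 0 y x := by
  have hsqrt : √(x / y) = √x * y ^ (-(1 / 2) : ℝ) := by
    rw [Real.sqrt_div hx.le, Real.rpow_neg hy.le, ← Real.sqrt_eq_rpow, div_eq_mul_inv]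
  have hsq : ((√2 : ℝ) : ℂ) ^ 2 = 2 := by exact_mod_cast Real.sq_sqrt zero_le_two
  rw [poleIntegral_poleKernel_zero hx hy, phaseIm_ofReal_mul, map_add, phaseIm_ofReal_mul,
    phaseIm_κ_pow_three, phaseIm_inv_κ_pow_three, poleDeriv_zero_ofReal hy, hsqrt]
  push_cast
  linear_combination (2 * x / (x ^ 2 + y ^ 2) * π * √x * (y ^ (-(1 / 2) : ℝ) : ℝ) : ℂ) * hsq

/-- The derivatives of `y ^ (-1/2) / (x² + y²)` have different series on `y < x` and on `x < y`,
whence an arbitrary open set `U` and an arbitrary chain `G` of derivatives. -/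
lemma phaseIm_poleIntegral_poleKernel_eqOn (hx : 0 < x) {U : Set ℝ} (hU : IsOpen U)
    (hU₀ : ∀ y ∈ U, 0 < y) {G : ℕ → ℝ → ℝ}
    (hG₀ : ∀ y ∈ U, G 0 y = y ^ (-(1 / 2) : ℝ) / (x ^ 2 + y ^ 2))
    (hG : ∀ p, ∀ y ∈ U, HasDerivAt (G p) (G (p + 1) y) y) (p : ℕ) (hy : y ∈ U) :
    phaseIm (poleIntegral poleKernel x p y) =
      4 * π * (x * √x * G p y : ℝ) - √2 * π * poleDeriv p y x := by
  refine eqOn_of_hasDerivAt_succ (f := fun p y => phaseIm (poleIntegral poleKernel x p y))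
    (g := fun p y => 4 * π * (x * √x * G p y : ℝ) - √2 * π * poleDeriv p y x) hU
    (fun y hy => ?_) (fun p y hy => ?_) (fun p y hy => ?_) p hy
  · dsimp only
    rw [hG₀ y hy, phaseIm_poleIntegral_poleKernel_zero hx (hU₀ y hy)]
  · exact phaseIm.hasFDerivAt.comp_hasDerivAt y
      (hasDerivAt_poleIntegral measurable_poleKernel norm_poleKernel_le hx p (hU₀ y hy))
  · exact (((hG p y hy).const_mul _).ofReal_comp.const_mul _).sub
      ((hasDerivAt_poleDeriv p (add_I_mul_ofReal_ne_zero (hU₀ y hy) x)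
        (sub_I_mul_ofReal_ne_zero (hU₀ y hy) x)).const_mul _)

lemma rpow_neg_two (hy : 0 < y) : y ^ (-2 : ℝ) = (y ^ 2)⁻¹ := by
  rw [Real.rpow_neg hy.le, Real.rpow_two]

lemma abs_neg_sq_mul_rpow_lt_one (hx : 0 < x) (hxy : x < y) : |(-x ^ 2)| * y ^ (-2 : ℝ) < 1 := by
  have hy := hx.trans hxy
  rw [rpow_neg_two hy, abs_neg, abs_of_pos (by positivity), ← div_eq_mul_inv,
    div_lt_one (by positivity)]
  gcongr

lemma abs_neg_inv_sq_mul_rpow_lt_one (hy : 0 < y) (hyx : y < x) :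
    |(-(x ^ 2)⁻¹)| * y ^ (2 : ℝ) < 1 := by
  have hx := hy.trans hyx
  rw [Real.rpow_two, abs_neg, abs_of_pos (by positivity), mul_comm, ← div_eq_mul_inv,
    div_lt_one (by positivity)]
  gcongr

lemma geomSeries_of_lt (m : ℕ) {n : ℕ} (hx : 0 < x) (hxn : x < n) :
    (geomSeries (-x ^ 2) (-2) (-(5 / 2)) (2 * m) n : ℂ) =
      ((n : ℝ) ^ (-(1 / 2) - 2 * m : ℝ) * (descPochhammer ℝ (2 * m)).eval (-(1 / 2)) : ℝ) /
        x ^ 2 * Wm m n x := by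
  have hn : (0 : ℝ) < n := hx.trans hxn
  have hx₀ : (x : ℂ) ≠ 0 := by exact_mod_cast hx.ne'
  have hstep := geomSeries_eq_add (-(1 / 2)) (2 * m) hn (abs_neg_sq_mul_rpow_lt_one hx hxn)
  have hF := geomSeries_eq_mul_F32 (-x ^ 2) (-2) (-(1 / 2)) (2 * m) hn
    (poch_ne_zero (a := 1 / 4) (c := 0) (by norm_num))
    (poch_ne_zero (a := 3 / 4) (c := 1) (by norm_num)) (descPochhammer_eval_neg_two_mul_mul_poch m)
  rw [show (-(1 / 2) : ℝ) + -2 = -(5 / 2) by norm_num] at hstep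
  rw [hstep, rpow_neg_two hn] at hF
  rw [Wm, if_neg (not_lt.mpr hxn.le),
    show -(x : ℂ) ^ 2 / (n : ℂ) ^ 2 = ((-x ^ 2 * ((n : ℝ) ^ 2)⁻¹ : ℝ) : ℂ) by push_cast; ring,
    div_mul_eq_mul_div, eq_div_iff (pow_ne_zero 2 hx₀)]
  push_cast at hF ⊢
  linear_combination -hF

lemma geomSeries_of_gt (m : ℕ) {n : ℕ} (hn : 0 < n) (hnx : n < x) :
    (((x ^ 2)⁻¹ * geomSeries (-(x ^ 2)⁻¹) 2 (-(1 / 2)) (2 * m) n : ℝ) : ℂ) =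
      ((n : ℝ) ^ (-(1 / 2) - 2 * m : ℝ) * (descPochhammer ℝ (2 * m)).eval (-(1 / 2)) : ℝ) /
        x ^ 2 * Wm m n x := by
  have hF := geomSeries_eq_mul_F32 (-(x ^ 2)⁻¹) 2 (-(1 / 2)) (2 * m) (Nat.cast_pos.mpr hn)
    (poch_ne_zero (c := -2 * m) (by push_cast; ring))
    (poch_ne_zero (c := 1 - 2 * m) (by push_cast; ring))
    (descPochhammer_eval_two_mul_mul_poch m)
  rw [Real.rpow_two] at hF
  rw [Wm, if_pos hnx, Complex.ofReal_mul, hF,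
    show -(n : ℂ) ^ 2 / (x : ℂ) ^ 2 = ((-(x ^ 2)⁻¹ * (n : ℝ) ^ 2 : ℝ) : ℂ) by push_cast; ring]
  push_cast
  ring

lemma phaseIm_poleIntegral_poleKernel (m : ℕ) {n : ℕ} (hn : 0 < n) (hx : 0 < x) (hxn : x ≠ n) :
    phaseIm (poleIntegral poleKernel x (2 * m) n) =
      4 * π * (√x / x * ((n : ℝ) ^ (-(1 / 2) - 2 * m : ℝ) *
        (descPochhammer ℝ (2 * m)).eval (-(1 / 2))) : ℝ) * Wm m n x -
      √2 * π * poleDeriv (2 * m) n x := by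
  have hx₀ : (x : ℂ) ≠ 0 := by exact_mod_cast hx.ne'
  rcases lt_or_gt_of_ne hxn with hlt | hgt
  · rw [phaseIm_poleIntegral_poleKernel_eqOn hx isOpen_Ioi (fun y hy => hx.trans hy)
      (G := geomSeries (-x ^ 2) (-2) (-(5 / 2))) (fun y hy => ?_)
      (fun p y hy => hasDerivAt_geomSeries _ p (hx.trans hy) (abs_neg_sq_mul_rpow_lt_one hx hy))
      (2 * m) hlt, Complex.ofReal_mul, geomSeries_of_lt m hx hlt]
    · push_cast
      field_simp
    · have hy₀ : 0 < y := hx.trans hy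
      rw [geomSeries_zero _ hy₀ (abs_neg_sq_mul_rpow_lt_one hx hy),
        show (-(5 / 2) : ℝ) = -(1 / 2) + -2 by norm_num, Real.rpow_add hy₀, rpow_neg_two hy₀]
      have : x ^ 2 + y ^ 2 ≠ 0 := by positivity
      have hden : 1 - -x ^ 2 * (y ^ 2)⁻¹ = (x ^ 2 + y ^ 2) / y ^ 2 := by field_simp; ring
      rw [hden]
      field_simp
  · rw [phaseIm_poleIntegral_poleKernel_eqOn hx isOpen_Ioo (fun y hy => hy.1)
      (G := fun p y => (x ^ 2)⁻¹ * geomSeries (-(x ^ 2)⁻¹) 2 (-(1 / 2)) p y) (fun y hy => ?_)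
      (fun p y hy => (hasDerivAt_geomSeries _ p hy.1
        (abs_neg_inv_sq_mul_rpow_lt_one hy.1 hy.2)).const_mul _)
      (2 * m) ⟨Nat.cast_pos.mpr hn, hgt⟩, Complex.ofReal_mul, geomSeries_of_gt m hn hgt]
    · push_cast
      field_simp
    · rw [geomSeries_zero _ hy.1 (abs_neg_inv_sq_mul_rpow_lt_one hy.1 hy.2), Real.rpow_two]
      have : x ^ 2 + y ^ 2 ≠ 0 := by positivity
      have hden : 1 - -(x ^ 2)⁻¹ * y ^ 2 = (x ^ 2 + y ^ 2) / x ^ 2 := by field_simp; ring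
      rw [hden]
      field_simp

end KernelIntegrals

section TermwiseIntegration

variable {x : ℝ}

lemma hasSum_integral_of_norm_le_mul {α ι E : Type*} [MeasurableSpace α] {μ : Measure α}
    [Countable ι] [NormedAddCommGroup E] [NormedSpace ℝ E] {f : ι → α → E} {F : α → E}
    {c : ι → ℝ} {g : α → ℝ} (hf : ∀ i, AEStronglyMeasurable (f i) μ)
    (hfg : ∀ᵐ v ∂μ, ∀ i, ‖f i v‖ ≤ c i * g v) (hc : Summable c) (hg : Integrable g μ)
    (hF : ∀ᵐ v ∂μ, HasSum (fun i => f i v) (F v)) :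
    Integrable F μ ∧ HasSum (fun i => ∫ v, f i v ∂μ) (∫ v, F v ∂μ) := by
  constructor
  · have hFmeas : AEStronglyMeasurable F μ :=
      aestronglyMeasurable_of_tendsto_ae (atTop : Filter (Finset ι))
        (fun s => Finset.aestronglyMeasurable_fun_sum s fun i _ => hf i) hF
    refine (hg.const_mul (∑' i, c i)).mono' hFmeas ?_
    filter_upwards [hfg, hF] with v hv hFv
    rw [← hFv.tsum_eq, ← tsum_mul_right]
    exact tsum_of_norm_bounded (hc.mul_right (g v)).hasSum hv
  · refine hasSum_integral_of_dominated_convergence (fun i v => c i * g v) hf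
      (fun i => hfg.mono fun v hv => hv i) (.of_forall fun v => hc.mul_right (g v)) ?_ hF
    simp_rw [tsum_mul_right]
    exact hg.const_mul _

lemma measurable_polePair_ω_mul (k : ℕ) (y : ℝ) {g : ℝ → ℝ} (hg : Measurable g) :
    Measurable fun v => polePair k y (ω * (g v : ℝ)) := by
  unfold polePair
  fun_prop

lemma exists_summable_norm_polePair_le (m : ℕ) :
    ∃ c : ℕ → ℝ, Summable c ∧ (∀ j, 0 ≤ c j) ∧ ∀ j : ℕ, ∀ ρ : ℝ, 0 < ρ →
      ‖polarCoeff (2 * m) * polePair (2 * m) ((j : ℝ) + 1) (ω * ρ)‖ ≤ c j * poleMajorant ρ := by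
  obtain ⟨K, hK, hbound⟩ := exists_norm_polePair_le m
  exact ⟨fun j => K * ((j : ℝ) + 1) ^ (-(5 / 4) : ℝ),
    (summable_natCast_add_one_rpow (by norm_num)).mul_left K, fun j => by positivity,
    fun j ρ hρ => hbound _ ρ (by linarith [(j.cast_nonneg : (0 : ℝ) ≤ j)]) hρ⟩

lemma integral_constTerm_mul_lipschitzRemainder (m : ℕ) (hx : 0 < x) :
    IntegrableOn (fun v : ℝ => constTerm 0 * lipschitzRemainder (2 * m) (ω * (x / v ^ 2 : ℝ)))
      (Set.Ioi 0) ∧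
    HasSum (fun j : ℕ => ∫ v in Set.Ioi (0 : ℝ), constTerm 0 *
        (polarCoeff (2 * m) * polePair (2 * m) ((j : ℝ) + 1) (ω * (x / v ^ 2 : ℝ))))
      (∫ v in Set.Ioi (0 : ℝ),
        constTerm 0 * lipschitzRemainder (2 * m) (ω * (x / v ^ 2 : ℝ))) := by
  obtain ⟨c, hc, -, hbound⟩ := exists_summable_norm_polePair_le m
  refine hasSum_integral_of_norm_le_mul (c := fun j => ‖constTerm 0‖ * c j)
    (fun j => (((measurable_polePair_ω_mul _ _ (by fun_prop)).const_mul _).const_mul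
      _).aestronglyMeasurable) ?_ (hc.mul_left _) (integrableOn_poleMajorant_div_sq hx.le) ?_
  · filter_upwards [ae_restrict_mem measurableSet_Ioi] with v (hv : 0 < v) j
    rw [norm_mul, mul_assoc]
    exact mul_le_mul_of_nonneg_left (hbound j _ (by positivity)) (norm_nonneg _)
  · filter_upwards [ae_restrict_mem measurableSet_Ioi] with v (hv : 0 < v)
    exact (hasSum_polePair _ (ω_mul_re_pos (by positivity))).mul_left _

lemma phaseIm_integral_constTerm_mul_lipschitzRemainder (m : ℕ) (hx : 0 < x) :
    phaseIm (∫ v in Set.Ioi (0 : ℝ),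
      constTerm 0 * lipschitzRemainder (2 * m) (ω * (x / v ^ 2 : ℝ))) = 0 := by
  refine (phaseIm.hasSum (integral_constTerm_mul_lipschitzRemainder m hx).2).unique ?_
  refine hasSum_zero.congr_fun fun j => ?_
  have hreal (v : ℝ) : constTerm 0 *
      (polarCoeff (2 * m) * polePair (2 * m) ((j : ℝ) + 1) (ω * (x / v ^ 2 : ℝ))) =
      ((-1 / 2 * ((2 * m).factorial / (2 * π) ^ (2 * m + 1) * ((-1) ^ m / (2 * m).factorial)) :
        ℝ) : ℂ) * (1 * poleDeriv (2 * m) ((j : ℝ) + 1) (ω * (x / v ^ 2 : ℝ))) := by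
    rw [polePair_two_mul, constTerm, if_pos rfl, polarCoeff]
    push_cast
    ring
  simp_rw [hreal]
  rw [integral_const_mul, phaseIm_ofReal_mul]
  exact mul_eq_zero_of_right _ (phaseIm_poleIntegral_one hx (2 * m) (by positivity))

lemma polePair_mul (k : ℕ) {a : ℝ} (y : ℝ) (w : ℂ) :
    polePair k (a * y) (a * w) = ((a : ℂ)⁻¹) ^ (k + 1) * polePair k y w := by
  rw [polePair, polePair, show (a : ℂ) * w + I * (a * y : ℝ) = a * (w + I * y) by push_cast; ring,
    show (a : ℂ) * w - I * (a * y : ℝ) = a * (w - I * y) by push_cast; ring, mul_inv, mul_inv,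
    mul_pow, mul_pow, mul_add]

lemma integral_polePair_mul_polePair (k : ℕ) {a : ℝ} (ha : 0 < a) (b x : ℝ) :
    ∫ v in Set.Ioi (0 : ℝ), polePair 0 a (ω * (v ^ 2 : ℝ)) * polePair k b (ω * (x / v ^ 2 : ℝ)) =
      (a ^ (k + 1 / 2 : ℝ) : ℝ) * ∫ v in Set.Ioi (0 : ℝ),
        polePair 0 1 (ω * (v ^ 2 : ℝ)) * polePair k (a * b) (ω * (x / v ^ 2 : ℝ)) := by
  have hsqrt : 0 < √a := Real.sqrt_pos.mpr ha
  have ha₀ : (a : ℂ) ≠ 0 := by exact_mod_cast ha.ne'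
  have hsqrt₀ : ((√a : ℝ) : ℂ) ≠ 0 := by exact_mod_cast hsqrt.ne'
  have hscale (v : ℝ) : polePair 0 a (ω * ((√a * v) ^ 2 : ℝ)) *
      polePair k b (ω * (x / (√a * v) ^ 2 : ℝ)) = (a : ℂ) ^ k *
        (polePair 0 1 (ω * (v ^ 2 : ℝ)) * polePair k (a * b) (ω * (x / v ^ 2 : ℝ))) := by
    have h₁ := polePair_mul 0 (a := a) 1 (ω * (v ^ 2 : ℝ))
    have h₂ := polePair_mul k (a := a) b (ω * (x / (a * v ^ 2) : ℝ))
    rw [mul_one] at h₁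
    rw [show (a : ℂ) * (ω * (x / (a * v ^ 2) : ℝ)) = ω * (x / v ^ 2 : ℝ) by
      push_cast; field_simp] at h₂
    rw [mul_pow, Real.sq_sqrt ha.le, Complex.ofReal_mul, mul_left_comm ω, h₁, h₂, zero_add,
      pow_one, inv_pow, pow_succ]
    field_simp
    ring
  have h := integral_comp_mul_left_Ioi (fun v : ℝ =>
    polePair 0 a (ω * (v ^ 2 : ℝ)) * polePair k b (ω * (x / v ^ 2 : ℝ))) 0 hsqrt
  simp_rw [hscale] at h
  rw [mul_zero, integral_const_mul, Complex.real_smul, Complex.ofReal_inv,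
    eq_inv_mul_iff_mul_eq₀ hsqrt₀] at h
  rw [← h, Real.rpow_add ha, Real.rpow_natCast, ← Real.sqrt_eq_rpow]
  push_cast
  ring

lemma integral_polePair_zero_mul_polePair (m : ℕ) {a : ℝ} (ha : 0 < a) (b x : ℝ) :
    ∫ v in Set.Ioi (0 : ℝ),
        polePair 0 a (ω * (v ^ 2 : ℝ)) * polePair (2 * m) b (ω * (x / v ^ 2 : ℝ)) =
      (a ^ (2 * m + 1 / 2 : ℝ) : ℝ) *
        ((-1) ^ m / (2 * m).factorial * poleIntegral poleKernel x (2 * m) (a * b)) := by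
  have hkernel (v : ℝ) : polePair 0 1 (ω * (v ^ 2 : ℝ)) *
      polePair (2 * m) (a * b) (ω * (x / v ^ 2 : ℝ)) = (-1) ^ m / (2 * m).factorial *
        (poleKernel v * poleDeriv (2 * m) (a * b) (ω * (x / v ^ 2 : ℝ))) := by
    have h := polePair_two_mul 0 1 (ω * (v ^ 2 : ℝ))
    rw [mul_zero, pow_zero, Nat.factorial_zero, Nat.cast_one, div_one, one_mul] at h
    rw [h, polePair_two_mul, ← poleKernel]
    ring
  rw [integral_polePair_mul_polePair _ ha]
  simp_rw [hkernel]
  rw [integral_const_mul, ← poleIntegral, Nat.cast_mul, Nat.cast_two]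

lemma hasSum_prod_mul {α β : Type*} {f : α → ℂ} {g : β → ℂ} {A B : ℂ} (hf : HasSum f A)
    (hg : HasSum g B) : HasSum (fun p : α × β => f p.1 * g p.2) (A * B) :=
  hf.mul hg (summable_mul_of_summable_norm hf.summable.norm hg.summable.norm)

lemma hasSum_polePair_mul_polePair (k l : ℕ) {u w : ℂ} (hu : 0 < u.re) (hw : 0 < w.re) :
    HasSum (fun p : ℕ × ℕ => polarCoeff k * polePair k ((p.1 : ℝ) + 1) u *
        (polarCoeff l * polePair l ((p.2 : ℝ) + 1) w))
      (lipschitzRemainder k u * lipschitzRemainder l w) := by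
  have h := hasSum_prod_mul (hasSum_polePair k hu) (hasSum_polePair l hw)
  exact h

lemma integral_lipschitzRemainder_mul (m : ℕ) (hx : 0 < x) :
    IntegrableOn (fun v : ℝ => lipschitzRemainder 0 (ω * (v ^ 2 : ℝ)) *
      lipschitzRemainder (2 * m) (ω * (x / v ^ 2 : ℝ))) (Set.Ioi 0) ∧
    HasSum (fun p : ℕ × ℕ => ∫ v in Set.Ioi (0 : ℝ),
        polarCoeff 0 * polePair 0 ((p.1 : ℝ) + 1) (ω * (v ^ 2 : ℝ)) *
        (polarCoeff (2 * m) * polePair (2 * m) ((p.2 : ℝ) + 1) (ω * (x / v ^ 2 : ℝ))))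
      (∫ v in Set.Ioi (0 : ℝ), lipschitzRemainder 0 (ω * (v ^ 2 : ℝ)) *
        lipschitzRemainder (2 * m) (ω * (x / v ^ 2 : ℝ))) := by
  obtain ⟨b, hb, hb₀, hb_bound⟩ := exists_summable_norm_polePair_le 0
  obtain ⟨c, hc, hc₀, hc_bound⟩ := exists_summable_norm_polePair_le m
  refine hasSum_integral_of_norm_le_mul (c := fun p : ℕ × ℕ => b p.1 * c p.2)
    (fun p => (((measurable_polePair_ω_mul _ _ (by fun_prop)).const_mul _).mul
      ((measurable_polePair_ω_mul _ _ (by fun_prop)).const_mul _)).aestronglyMeasurable) ?_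
    (hb.mul_of_nonneg hc hb₀ hc₀)
    (integrableOn_poleMajorant_sq_mul_poleMajorant_div_sq hx.le) ?_
  · filter_upwards [ae_restrict_mem measurableSet_Ioi] with v (hv : 0 < v) p
    rw [norm_mul, mul_mul_mul_comm]
    exact mul_le_mul (hb_bound p.1 _ (by positivity)) (hc_bound p.2 _ (by positivity))
      (norm_nonneg _) (mul_nonneg (hb₀ _) (poleMajorant_nonneg (by positivity)))
  · filter_upwards [ae_restrict_mem measurableSet_Ioi] with v (hv : 0 < v)
    exact hasSum_polePair_mul_polePair _ _ (ω_mul_re_pos (by positivity))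
      (ω_mul_re_pos (by positivity))

lemma hasSum_rsigma_mul_poleIntegral (m : ℕ) (hx : 0 < x) :
    HasSum (fun n : ℕ => (rsigma (2 * m + 1 / 2) (n + 1) : ℂ) *
        (polarCoeff 0 * polarCoeff (2 * m) * ((-1) ^ m / (2 * m).factorial) *
          poleIntegral poleKernel x (2 * m) (n + 1 : ℕ)))
      (∫ v in Set.Ioi (0 : ℝ), lipschitzRemainder 0 (ω * (v ^ 2 : ℝ)) *
        lipschitzRemainder (2 * m) (ω * (x / v ^ 2 : ℝ))) := by
  refine hasSum_rsigma_mul (H := fun n => polarCoeff 0 * polarCoeff (2 * m) *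
    ((-1) ^ m / (2 * m).factorial) * poleIntegral poleKernel x (2 * m) n)
    ((integral_lipschitzRemainder_mul m hx).2.congr_fun fun p => ?_)
  have hfactor (v : ℝ) : polarCoeff 0 * polePair 0 ((p.1 : ℝ) + 1) (ω * (v ^ 2 : ℝ)) *
      (polarCoeff (2 * m) * polePair (2 * m) ((p.2 : ℝ) + 1) (ω * (x / v ^ 2 : ℝ))) =
      polarCoeff 0 * polarCoeff (2 * m) * (polePair 0 ((p.1 : ℝ) + 1) (ω * (v ^ 2 : ℝ)) *
        polePair (2 * m) ((p.2 : ℝ) + 1) (ω * (x / v ^ 2 : ℝ))) := by ring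
  simp_rw [hfactor]
  rw [integral_const_mul, integral_polePair_zero_mul_polePair m (by positivity)]
  push_cast
  ring

/-- The three explicit terms come from the poles of the two factors at `0` and from the constant
term of the second one; the constant term of the first one contributes nothing. -/
lemma phaseIm_integral_powExpSum_mul_powExpSum (m : ℕ) (hx : 0 < x) :
    phaseIm (∫ v in Set.Ioi (0 : ℝ),
        powExpSum 0 (ω * (v ^ 2 : ℝ)) * powExpSum (2 * m) (ω * (x / v ^ 2 : ℝ))) =
      riemannZeta (1 / 2 - 2 * m) / (2 * (π : ℂ) * (√x : ℂ)) -
        ((2 * m).factorial * riemannZeta (-1 / 2 - 2 * m)) /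
          (√2 * (((2 * π * x) ^ (2 * m + 1) : ℝ) : ℂ)) +
        1 / (√2 : ℂ) * riemannZeta (1 / 2) * riemannZeta (-2 * m) +
        phaseIm (∫ v in Set.Ioi (0 : ℝ), lipschitzRemainder 0 (ω * (v ^ 2 : ℝ)) *
          lipschitzRemainder (2 * m) (ω * (x / v ^ 2 : ℝ))) := by
  have h₁ := (integral_powExpSum_mul_polar m x).1
  have h₂ := (integral_powExpSum_sub_mul_constTerm m).1
  have h₃ := (integral_polar_mul_powExpSum_sub m hx).1
  have h₄ := (integral_constTerm_mul_lipschitzRemainder m hx).1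
  have h₅ := (integral_lipschitzRemainder_mul m hx).1
  have hsplit (v : ℝ) :
      powExpSum 0 (ω * (v ^ 2 : ℝ)) * powExpSum (2 * m) (ω * (x / v ^ 2 : ℝ)) =
        powExpSum 0 (ω * (v ^ 2 : ℝ)) *
          (polarCoeff (2 * m) * ((ω * (x / v ^ 2 : ℝ))⁻¹) ^ (2 * m + 1)) +
        (powExpSum 0 (ω * (v ^ 2 : ℝ)) - polarCoeff 0 * (ω * (v ^ 2 : ℝ))⁻¹) *
          constTerm (2 * m) +
        polarCoeff 0 * (ω * (v ^ 2 : ℝ))⁻¹ * (powExpSum (2 * m) (ω * (x / v ^ 2 : ℝ)) -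
          polarCoeff (2 * m) * ((ω * (x / v ^ 2 : ℝ))⁻¹) ^ (2 * m + 1)) +
        constTerm 0 * lipschitzRemainder (2 * m) (ω * (x / v ^ 2 : ℝ)) +
        lipschitzRemainder 0 (ω * (v ^ 2 : ℝ)) *
          lipschitzRemainder (2 * m) (ω * (x / v ^ 2 : ℝ)) := by
    simp only [lipschitzRemainder]
    ring
  simp_rw [hsplit]
  rw [integral_add (by exact ((h₁.add h₂).add h₃).add h₄) h₅,
    integral_add (by exact (h₁.add h₂).add h₃) h₄, integral_add (by exact h₁.add h₂) h₃,
    integral_add h₁ h₂]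
  simp only [map_add]
  rw [phaseIm_integral_powExpSum_mul_polar, phaseIm_integral_powExpSum_sub_mul_constTerm,
    phaseIm_integral_polar_mul_powExpSum_sub m hx,
    phaseIm_integral_constTerm_mul_lipschitzRemainder m hx]
  ring

end TermwiseIntegration

section TermComparison

variable {n x : ℝ}

lemma rpow_two_mul_add_half (m : ℕ) {y : ℝ} (hy : 0 < y) :
    y ^ (2 * (m : ℝ) + 1 / 2) = y ^ (2 * m) * √y := by
  rw [Real.rpow_add hy, ← Real.sqrt_eq_rpow]
  exact_mod_cast congrArg (· * √y) (Real.rpow_natCast y (2 * m))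

lemma rpow_two_mul_add_three_halves (m : ℕ) {y : ℝ} (hy : 0 < y) :
    y ^ (2 * (m : ℝ) + 3 / 2) = y ^ (2 * m) * √y * y := by
  rw [← rpow_two_mul_add_half m hy, ← Real.rpow_add_one hy.ne']
  congr 1
  ring

lemma polar_scalar_eq (m : ℕ) (hn : 0 < n) (hx : 0 < x) :
    √x / π ^ (2 * (m : ℝ) + 1 / 2) * (n ^ (-(2 * (m : ℝ)) - 3 / 2) *
        ((2 * m).factorial / √π * (n / (2 * x)) ^ (2 * (m : ℝ) + 3 / 2))) =
      √2 * π * (2 * m).factorial / ((2 * π) ^ (2 * m + 2) * x ^ (2 * m + 1)) := by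
  have hπ := Real.pi_pos
  rw [show -(2 * (m : ℝ)) - 3 / 2 = -(2 * (m : ℝ) + 3 / 2) by ring, Real.rpow_neg hn.le,
    rpow_two_mul_add_three_halves m hn, rpow_two_mul_add_three_halves m (by positivity),
    rpow_two_mul_add_half m hπ, Real.sqrt_div hn.le, Real.sqrt_mul zero_le_two, div_pow, mul_pow,
    mul_pow, pow_add x, pow_add 2, pow_add π]
  have : 0 < √n := by positivity
  have : 0 < √x := by positivity
  field_simp
  rw [Real.sq_sqrt hπ.le, Real.sq_sqrt zero_le_two]
  ring

lemma hypergeometric_scalar_eq (m : ℕ) (d : ℝ) (hn : 0 < n) (hx : 0 < x) :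
    √x / π ^ (2 * (m : ℝ) + 1 / 2) * (n ^ (-(2 * (m : ℝ)) - 3 / 2) *
        (n / (2 ^ (2 * m) * π * x) * (d * √π))) =
      4 * π / (2 * π) ^ (2 * m + 2) * (√x / x * (n ^ (-(1 / 2) - 2 * m : ℝ) * d)) := by
  have hpow : n ^ (-(1 / 2) - 2 * (m : ℝ)) = n ^ (-(2 * (m : ℝ)) - 3 / 2) * n := by
    rw [← Real.rpow_add_one hn.ne']
    congr 1
    ring
  rw [hpow, rpow_two_mul_add_half m Real.pi_pos, pow_add, mul_pow]
  field_simp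
  ring

lemma polePair_ofReal (k : ℕ) (y : ℝ) (hx : 0 < x) :
    polePair k y x = ((x : ℂ) ^ (k + 1))⁻¹ *
      ((1 + I * y / x) ^ (-(k + 1 : ℤ)) + (1 - I * y / x) ^ (-(k + 1 : ℤ))) := by
  have hx₀ : (x : ℂ) ≠ 0 := by exact_mod_cast hx.ne'
  have hzpow (a : ℂ) : a ^ (-(k + 1 : ℤ)) = (a⁻¹) ^ (k + 1) := by
    rw [zpow_neg, ← inv_zpow]
    exact_mod_cast zpow_natCast a⁻¹ (k + 1)
  rw [hzpow, hzpow, mul_add, ← inv_pow, ← mul_pow, ← mul_pow, ← mul_inv, ← mul_inv, mul_add,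
    mul_sub, mul_div_cancel₀ _ hx₀, mul_one, polePair]

lemma poleDeriv_two_mul (m : ℕ) (y : ℝ) (w : ℂ) :
    poleDeriv (2 * m) y w = (-1) ^ m * (2 * m).factorial * polePair (2 * m) y w := by
  have hfac : ((2 * m).factorial : ℂ) ≠ 0 := by exact_mod_cast (2 * m).factorial_ne_zero
  have hsign : ((-1 : ℂ) ^ m) * (-1) ^ m = 1 := by rw [← mul_pow]; simp
  rw [polePair_two_mul]
  field_simp
  linear_combination -poleDeriv (2 * m) y w * hsign

lemma polarCoeff_zero_mul_polarCoeff (m : ℕ) :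
    polarCoeff 0 * polarCoeff (2 * m) * ((-1) ^ m / (2 * m).factorial) =
      ((-1) ^ m / (2 * π) ^ (2 * m + 2) : ℝ) := by
  have hfac : ((2 * m).factorial : ℂ) ≠ 0 := by exact_mod_cast (2 * m).factorial_ne_zero
  rw [polarCoeff, polarCoeff]
  push_cast
  rw [Nat.factorial_zero, Nat.cast_one]
  field_simp
  ring

lemma phaseIm_polarCoeff_mul_poleIntegral (m : ℕ) {n : ℕ} (hn : 0 < n) (hx : 0 < x)
    (hxn : x ≠ n) :
    phaseIm (polarCoeff 0 * polarCoeff (2 * m) * ((-1) ^ m / (2 * m).factorial) *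
        poleIntegral poleKernel x (2 * m) n) =
      (√x : ℂ) / ((π ^ (2 * (m : ℝ) + 1 / 2) : ℝ) : ℂ) *
        ((((n : ℝ) ^ (-(2 * (m : ℝ)) - 3 / 2) : ℝ) : ℂ) *
          (-(((2 * m).factorial / √π : ℝ) : ℂ) *
              ((((n : ℝ) / (2 * x)) ^ (2 * (m : ℝ) + 3 / 2) : ℝ) : ℂ) *
              ((1 + I * n / x) ^ (-(2 * (m : ℤ) + 1)) + (1 - I * n / x) ^ (-(2 * (m : ℤ) + 1))) +
            (-1) ^ m * n / (((2 ^ (2 * m) : ℝ) : ℂ) * π * x) *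
              (Real.Gamma (2 * m + 1 / 2) : ℝ) * Wm m n x)) := by
  have hn' : (0 : ℝ) < n := Nat.cast_pos.mpr hn
  have hsign : ((-1 : ℂ) ^ m) * (-1) ^ m = 1 := by rw [← mul_pow]; simp
  have hpolar := congrArg Complex.ofReal (polar_scalar_eq m hn' hx)
  have hhyper := congrArg Complex.ofReal (hypergeometric_scalar_eq m
    ((descPochhammer ℝ (2 * m)).eval (-(1 / 2))) hn' hx)
  rw [polarCoeff_zero_mul_polarCoeff, phaseIm_ofReal_mul,
    phaseIm_poleIntegral_poleKernel m hn hx hxn, poleDeriv_two_mul, polePair_ofReal _ _ hx,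
    Gamma_two_mul_add_half]
  push_cast at hpolar hhyper ⊢
  generalize (1 + I * n / x) ^ (-(2 * (m : ℤ) + 1)) + (1 - I * n / x) ^ (-(2 * (m : ℤ) + 1)) = Q
  linear_combination Q * hpolar - (-1) ^ m * Wm m n x * hhyper -
    √2 * π * (2 * m).factorial / ((2 * π) ^ (2 * m + 2) * x ^ (2 * m + 1)) * Q * hsign

end TermComparison

end Coalescence

end

theorem coalescence_plus (m : ℕ) (x : ℝ) (hx : 0 < x) (hxint : ∀ k : ℤ, x ≠ (k : ℝ)) :
    (∑' n : ℕ, ((rsigma (2 * m + 1 / 2) (n + 1) / Real.sqrt ((n : ℝ) + 1) *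
        Real.exp (-(2 * π * Real.sqrt (2 * ((n : ℝ) + 1) * x))) *
        Real.sin (π / 4 + 2 * π * Real.sqrt (2 * ((n : ℝ) + 1) * x)) : ℝ) : ℂ))
    = riemannZeta (1 / 2 - 2 * m) / (2 * (π : ℂ) * (Real.sqrt x : ℂ))
      - ((Nat.factorial (2 * m) : ℂ) * riemannZeta (-1 / 2 - 2 * m)) /
          ((Real.sqrt 2 : ℂ) * (((2 * π * x) ^ (2 * m + 1) : ℝ) : ℂ))
      + (1 / (Real.sqrt 2 : ℂ)) * riemannZeta (1 / 2) * riemannZeta (-2 * m)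
      + (Real.sqrt x : ℂ) / (((π : ℝ) ^ (2 * (m : ℝ) + 1 / 2) : ℝ) : ℂ) *
        ∑' n : ℕ,
          ((rsigma (2 * m + 1 / 2) (n + 1) : ℝ) : ℂ) *
            ((((n : ℝ) + 1) ^ (-(2 * (m : ℝ)) - 3 / 2) : ℝ) : ℂ) *
            (-(((Nat.factorial (2 * m) : ℝ) / Real.sqrt π : ℝ) : ℂ) *
                (((((n : ℝ) + 1) / (2 * x)) ^ (2 * (m : ℝ) + 3 / 2) : ℝ) : ℂ) *
                ((1 + Complex.I * ((n : ℂ) + 1) / (x : ℂ)) ^ (-(2 * (m : ℤ) + 1)) +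
                  (1 - Complex.I * ((n : ℂ) + 1) / (x : ℂ)) ^ (-(2 * (m : ℤ) + 1)))
              + (-1 : ℂ) ^ m * ((n : ℂ) + 1) /
                  ((((2 : ℝ) ^ (2 * m) : ℝ) : ℂ) * (π : ℂ) * (x : ℂ)) *
                  ((Real.Gamma (2 * m + 1 / 2) : ℝ) : ℂ) * Wm m (n + 1) x) := by
  open Coalescence in
  have hint := hasSum_exp_mul_sin (2 * m) hx
  have hsum := phaseIm.hasSum (hasSum_rsigma_mul_poleIntegral m hx)
  rw [Nat.cast_mul, Nat.cast_two] at hint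
  rw [hint.tsum_eq, phaseIm_integral_powExpSum_mul_powExpSum m hx, ← hsum.tsum_eq,
    ← tsum_mul_left]
  congr 1
  refine tsum_congr fun n => ?_
  have hxn : x ≠ (n + 1 : ℕ) := by exact_mod_cast hxint (n + 1 : ℕ)
  have hterm := phaseIm_polarCoeff_mul_poleIntegral m n.succ_pos hx hxn
  rw [phaseIm_ofReal_mul, hterm]
  push_cast
  ring
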